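/- arXiv:2012.09317 — 2 statements merged into one kernel-verified Lean document; each statement's English description precedes it below -/
import Mathlib

section
/- Fix α∈(0,1), λ>0, μ>0, ξ≥0 and i∈ℕ, and set β(x) = x^{−1} e^{−(λ+μ+ξ)x} for x>0. Define, for t>0, P^α_0(t) = (1/μ) ∫_0^∞ f_α(y,t) β(y) ∑_{n=i}^∞ (n+1) I_{n+1}(2√(λμ)·y) / (√(λ/μ))^{n+1} dy + (ξ/μ) ∫_0^∞ f_α(y,t) [∫_0^y β(u) ∑_{n=1}^∞ n·I_n(2√(λμ)·u)/(√(λ/μ))^n du] dy, and for n≥1, P^α_n(t) = (ξ(√(λ/μ))^{n+1}/√(λμ)) ∫_0^∞ f_α(y,t) [∫_0^y β(u) ∑_{k=0}^∞ (n+k+1) I_{n+k+1}(2√(λμ)·u)/(√(λ/μ))^{k+1} du] dy + ∫_0^∞ e^{−(λ+μ+ξ)y} f_α(y,t) ∑_{m=0}^∞ [I_{m+n+i+1}(2√(λμ)·y)/(√(λ/μ))^{m−n+i+1} − I_{m+n+i+2}(2√(λμ)·y)/(√(λ/μ))^{m−n+i}] dy + ∫_0^∞ (√(λ/μ))^{n−i}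 I_{n−i}(2√(λμ)·y) e^{−(λ+μ+ξ)y} f_α(y,t) dy, with P^α_n(0) = δ_{i,n}. Then the family (P^α_n)_{n≥0} solves the fractional Kolmogorov forward equations of order α of the M/M/1 queue with catastrophes. -/
open MeasureTheory Real

/-- Caputo fractional derivative of order `α` of `f` at `t`. -/
noncomputable def caputoD (α : ℝ) (f : ℝ → ℝ) (t : ℝ) : ℝ :=
  (1 / Real.Gamma (1 - α)) * ∫ u in (0:ℝ)..t, (t - u) ^ (-α) * deriv f u

/-- Wright function `M_α(x) = ∑ (-x)^r / (r! Γ(1 - α(1+r)))`. -/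
noncomputable def wrightM (α x : ℝ) : ℝ :=
  ∑' r : ℕ, (-x) ^ r / (r.factorial * Real.Gamma (1 - α * (1 + r)))

/-- Density `f_α(y,t) = t^(-α) M_α(y t^(-α))` of the inverse α-stable subordinator. -/
noncomputable def subDensity (α y t : ℝ) : ℝ := t ^ (-α) * wrightM α (y * t ^ (-α))

/-- Modified Bessel function of the first kind of integer order
`I_ν(x) = ∑_m (1/(m! Γ(m+ν+1))) (x/2)^(2m+ν)`. -/
noncomputable def besselI (ν : ℤ) (x : ℝ) : ℝ :=
  ∑' m : ℕ, (1 / (m.factorial * Real.Gamma ((m : ℝ) + ν + 1))) * (x / 2) ^ (2 * (m : ℤ) + ν)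

/-!
Subordination turns `y ^ k / k!` into `t ^ (α k) / Γ(α k + 1)`: after the substitution
`x = y t ^ (-α)` this is the moment formula `∫ x ^ k M_α(x) dx = k! / Γ(α k + 1)`, which is read off
from the representation of `M_α` by an integral over Hankel's contour. So each of the integrals
defining `P^α_n` is a power series in `t ^ α`, whose coefficients are the Taylor coefficients of the
function integrated against `f_α`. The Caputo derivative shifts these coefficients by one, and the
fractional equations reduce to a linear recursion in `k`.

The coefficients are explicit. Up to the factor `exp (-(λ + μ + ξ) y)`, which acts by a binomial
transform, the Bessel functions generate weighted counts of the walks on `ℤ` with up-steps of weight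
`λ` and down-steps of weight `μ`; the sums of Bessel functions telescope to the counts of walks
ending below a level, which correct the free walk for the boundary at `0`. A catastrophe restarts
the queue from the empty state, and the corresponding term is the integral from `0` of the
probabilities of the queue started from `0`, i.e. a delay of the coefficients.
-/

section GammaIntegral
open Set Filter Topology Complex ProbabilityTheory

lemma integrableOn_rpow_mul_exp_neg_mul {a r : ℝ} (ha : 0 < a) (hr : 0 < r) :
    IntegrableOn (fun s : ℝ => s ^ (a - 1) * rexp (-r * s)) (Ioi 0) := by
  simpa only [Real.rpow_one] using
    integrableOn_rpow_mul_exp_neg_mul_rpow (p := 1) (s := a - 1) (by linarith) one_pos hr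

/-- The measure `s ^ (a - 1) ds` on the positive half-line, whose moment generating function at
`-z` is the Laplace transform of `s ^ (a - 1)` at `z`. -/
noncomputable def powerMeasure (a : ℝ) : Measure ℝ :=
  (volume.restrict (Ioi 0)).withDensity fun s => ↑(s ^ (a - 1)).toNNReal

lemma measurable_toNNReal_rpow (a : ℝ) : Measurable fun s : ℝ => (s ^ a).toNNReal := by fun_prop

lemma complexMGF_powerMeasure (a : ℝ) (z : ℂ) :
    complexMGF id (powerMeasure a) z
      = ∫ s in Ioi (0 : ℝ), ((s ^ (a - 1) : ℝ) : ℂ) * Complex.exp (z * s) := by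
  rw [complexMGF, powerMeasure, integral_withDensity_eq_integral_smul (measurable_toNNReal_rpow _)]
  refine setIntegral_congr_fun measurableSet_Ioi fun s hs => ?_
  have hs : (0 : ℝ) < s := hs
  simp only [id, NNReal.smul_def, Real.coe_toNNReal _ (Real.rpow_nonneg hs.le _),
    Complex.real_smul]

lemma Iio_subset_interior_integrableExpSet_powerMeasure {a : ℝ} (ha : 0 < a) :
    Iio 0 ⊆ interior (integrableExpSet id (powerMeasure a)) := by
  refine interior_maximal (fun r hr => ?_) isOpen_Iio
  rw [integrableExpSet, mem_ofPred_eq, powerMeasure,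
    integrable_withDensity_iff_integrable_smul (measurable_toNNReal_rpow _)]
  refine (integrableOn_rpow_mul_exp_neg_mul ha (neg_pos.mpr hr)).congr_fun (fun s hs => ?_)
    measurableSet_Ioi
  have hs : (0 : ℝ) < s := hs
  simp only [id, NNReal.smul_def, Real.coe_toNNReal _ (Real.rpow_nonneg hs.le _), neg_neg,
    smul_eq_mul]

lemma integral_rpow_mul_cexp_neg_mul_Ioi {a : ℝ} (ha : 0 < a) {z : ℂ} (hz : 0 < z.re) :
    ∫ s in Ioi (0 : ℝ), ((s ^ (a - 1) : ℝ) : ℂ) * Complex.exp (-z * s)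
      = Real.Gamma a * z ^ (-(a : ℂ)) := by
  set U : Set ℂ := {u | u.re < 0} with hU
  have hUo : IsOpen U := isOpen_lt continuous_re continuous_const
  have hf : AnalyticOnNhd ℂ (complexMGF id (powerMeasure a)) U := fun u hu =>
    analyticOnNhd_complexMGF u (Iio_subset_interior_integrableExpSet_powerMeasure ha hu)
  have hg : AnalyticOnNhd ℂ (fun u : ℂ => Real.Gamma a * (-u) ^ (-(a : ℂ))) U := by
    refine DifferentiableOn.analyticOnNhd (fun u hu => ?_) hUo
    have : -u ∈ slitPlane := Or.inl (by simpa using show u.re < 0 from hu)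
    exact ((differentiableAt_id.neg.cpow_const this).const_mul _).differentiableWithinAt
  have heq : ∀ r : ℝ, r < 0 →
      complexMGF id (powerMeasure a) r = Real.Gamma a * (-(r : ℂ)) ^ (-(a : ℂ)) := by
    intro r hr
    have h := Real.integral_rpow_mul_exp_neg_mul_Ioi ha (neg_pos.mpr hr)
    rw [complexMGF_powerMeasure, ← ofReal_neg, ← ofReal_neg,
      ← ofReal_cpow (neg_nonneg.mpr hr.le), Real.rpow_neg (neg_nonneg.mpr hr.le),
      ← Real.inv_rpow (neg_nonneg.mpr hr.le), ← ofReal_mul, mul_comm (Real.Gamma a), ← one_div,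
      ← h, ← integral_complex_ofReal]
    simp
  have hlim : Tendsto ((↑) : ℝ → ℂ) (𝓝[≠] (-1)) (𝓝[≠] (-1)) := by
    have := continuous_ofReal.continuousAt.continuousWithinAt.tendsto_nhdsWithin (x := -1)
      (s := {-1}ᶜ) (t := {-1}ᶜ) (fun r hr h => hr (by simpa [← ofReal_one, ← ofReal_neg] using h))
    simpa using this
  have hfreq : ∃ᶠ u in 𝓝[≠] (-1 : ℂ),
      complexMGF id (powerMeasure a) u = Real.Gamma a * (-u) ^ (-(a : ℂ)) :=
    hlim.frequently (Eventually.frequently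
      (mem_of_superset (nhdsWithin_le_nhds (Iio_mem_nhds (by norm_num))) heq))
  have := hf.eqOn_of_preconnected_of_frequently_eq hg
    (convex_halfSpace_re_lt 0).isPreconnected (by simp [hU]) hfreq (x := -z) (by simpa [hU])
  simpa only [complexMGF_powerMeasure, neg_neg] using this

end GammaIntegral

section HankelContour
open Set Filter Topology Asymptotics

/-- The point at parameter `s` of the ray from `γ` in the direction `w`. For real `γ > 0` this ray
is the upper half of a Hankel contour; the lower half is its complex conjugate, so only imaginary
parts of integrals along the ray are needed. -/
noncomputable def hankelRay (w : ℂ) (γ s : ℝ) : ℂ := γ + s * w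

/-- The directions that may be followed by the upper half of a Hankel contour: unit vectors in the
open second quadrant. -/
structure IsHankelDirection (w : ℂ) : Prop where
  norm_eq_one : ‖w‖ = 1
  re_neg : w.re < 0
  im_pos : 0 < w.im

lemma hankelRay_re (w : ℂ) (γ s : ℝ) : (hankelRay w γ s).re = γ + s * w.re := by simp [hankelRay]

lemma hankelRay_im (w : ℂ) (γ s : ℝ) : (hankelRay w γ s).im = s * w.im := by simp [hankelRay]

lemma continuous_hankelRay (w : ℂ) (γ : ℝ) : Continuous (hankelRay w γ) := by
  unfold hankelRay; fun_prop

lemma hasDerivAt_hankelRay (w : ℂ) (γ s : ℝ) : HasDerivAt (hankelRay w γ) w s := by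
  unfold hankelRay
  simpa using ((Complex.ofRealCLM.hasDerivAt (x := s)).mul_const w).const_add (γ : ℂ)

lemma hasDerivAt_hankelRay_origin (w : ℂ) (γ s : ℝ) :
    HasDerivAt (fun γ => hankelRay w γ s) 1 γ := by
  unfold hankelRay
  exact (Complex.ofRealCLM.hasDerivAt (x := γ)).add_const ((s : ℂ) * w)

lemma norm_exp_hankelRay (w : ℂ) (γ s : ℝ) :
    ‖Complex.exp (hankelRay w γ s)‖ = rexp (γ + s * w.re) := by
  rw [Complex.norm_exp, hankelRay_re]

lemma mul_im_le_norm_hankelRay (w : ℂ) (γ s : ℝ) : s * w.im ≤ ‖hankelRay w γ s‖ := by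
  rw [← hankelRay_im w γ s]
  exact (le_abs_self _).trans (Complex.abs_im_le_norm _)

lemma isBigO_exp_rpow_mul_rpow {α : ℝ} (hα : α < 1) (x p : ℝ) {δ : ℝ} (hδ : 0 < δ) :
    (fun N : ℝ => rexp (x * N ^ α) * N ^ p) =O[atTop] fun N => rexp (δ * N) := by
  have hexp : (fun N : ℝ => rexp (x * N ^ α)) =O[atTop] fun N => rexp (δ / 2 * N) := by
    have hlim := (tendsto_rpow_neg_atTop (sub_pos.mpr hα)).const_mul x
    rw [mul_zero] at hlim
    refine IsBigO.of_bound 1 ?_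
    filter_upwards [hlim.eventually (eventually_le_nhds (half_pos hδ)), eventually_gt_atTop 0]
      with N hN hpos
    rw [one_mul, Real.norm_of_nonneg (exp_pos _).le, Real.norm_of_nonneg (exp_pos _).le,
      exp_le_exp]
    calc x * N ^ α = x * N ^ (-(1 - α)) * N := by
          rw [mul_assoc, ← Real.rpow_add_one hpos.ne']; ring_nf
      _ ≤ δ / 2 * N := by gcongr
  refine (hexp.mul (isLittleO_rpow_exp_pos_mul_atTop p (half_pos hδ)).isBigO).congr_right
    fun N => ?_
  rw [← Real.exp_add]; ring_nf

namespace IsHankelDirection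

lemma ne_zero {w : ℂ} (hw : IsHankelDirection w) : w ≠ 0 := by
  rintro rfl
  exact hw.im_pos.ne' rfl

lemma mem_slitPlane_of_pos {w : ℂ} (hw : IsHankelDirection w) (γ : ℝ) {s : ℝ} (hs : 0 < s) :
    hankelRay w γ s ∈ Complex.slitPlane :=
  Or.inr (by rw [hankelRay_im]; exact (mul_pos hs hw.im_pos).ne')

lemma mem_slitPlane {w : ℂ} (hw : IsHankelDirection w) {γ s : ℝ} (hγ : 0 < γ) (hs : 0 ≤ s) :
    hankelRay w γ s ∈ Complex.slitPlane := by
  rcases hs.eq_or_lt with rfl | hs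
  · exact Or.inl (by simpa [hankelRay_re])
  · exact hw.mem_slitPlane_of_pos γ hs

lemma hankelRay_ne_zero {w : ℂ} (hw : IsHankelDirection w) {γ s : ℝ} (hγ : 0 < γ) (hs : 0 ≤ s) :
    hankelRay w γ s ≠ 0 :=
  Complex.slitPlane_ne_zero (hw.mem_slitPlane hγ hs)

lemma origin_mul_im_le_norm {w : ℂ} (hw : IsHankelDirection w) {γ : ℝ} (hγ : 0 ≤ γ) (s : ℝ) :
    γ * w.im ≤ ‖hankelRay w γ s‖ := by
  have him : (hankelRay w γ s * (starRingEnd ℂ) w).im = -(γ * w.im) := by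
    simp only [hankelRay, Complex.mul_im, Complex.add_re, Complex.add_im, Complex.mul_re,
      Complex.ofReal_re, Complex.ofReal_im, Complex.conj_re, Complex.conj_im]
    ring
  calc γ * w.im = |(hankelRay w γ s * (starRingEnd ℂ) w).im| := by
        rw [him, abs_neg, abs_of_nonneg (mul_nonneg hγ hw.im_pos.le)]
    _ ≤ ‖hankelRay w γ s * (starRingEnd ℂ) w‖ := Complex.abs_im_le_norm _
    _ = ‖hankelRay w γ s‖ := by rw [norm_mul, RCLike.norm_conj, hw.norm_eq_one, mul_one]

lemma norm_hankelRay_le {w : ℂ} (hw : IsHankelDirection w) {γ s : ℝ} (hγ : 0 ≤ γ) (hs : 0 ≤ s) :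
    ‖hankelRay w γ s‖ ≤ γ + s := by
  refine (norm_add_le _ _).trans ?_
  rw [norm_mul, hw.norm_eq_one, mul_one, Complex.norm_of_nonneg hγ, Complex.norm_of_nonneg hs]

lemma tendsto_norm_hankelRay_atTop {w : ℂ} (hw : IsHankelDirection w) (γ : ℝ) :
    Tendsto (fun s => ‖hankelRay w γ s‖) atTop atTop :=
  tendsto_atTop_mono (mul_im_le_norm_hankelRay w γ) (tendsto_id.atTop_mul_const hw.im_pos)

lemma integrableOn_exp_rpow_mul {w : ℂ} (hw : IsHankelDirection w) {γ : ℝ} (hγ : 0 < γ) {α : ℝ}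
    (hα : α < 1) (x p : ℝ) :
    IntegrableOn (fun s => rexp (x * ‖hankelRay w γ s‖ ^ α) * ‖hankelRay w γ s‖ ^ p
      * rexp (γ + s * w.re)) (Ioi 0) := by
  have hδ : 0 < -w.re / 2 := by linarith [hw.re_neg]
  refine integrable_of_isBigO_exp_neg hδ ?_ ?_
  · have hc : ∀ q : ℝ, ContinuousOn (fun s => ‖hankelRay w γ s‖ ^ q) (Ici 0) := fun q s hs =>
      ((continuous_hankelRay w γ).norm.continuousAt.rpow_const
        (Or.inl (norm_ne_zero_iff.mpr (hw.hankelRay_ne_zero hγ hs)))).continuousWithinAt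
    exact ((continuousOn_const.mul (hc α)).rexp.mul (hc p)).mul (by fun_prop)
  · have hgrow := (isBigO_exp_rpow_mul_rpow hα x p hδ).comp_tendsto
      (hw.tendsto_norm_hankelRay_atTop γ)
    have hlin : (fun s => rexp (-w.re / 2 * ‖hankelRay w γ s‖)) =O[atTop]
        fun s => rexp (-w.re / 2 * (γ + s)) := by
      refine IsBigO.of_bound 1 ?_
      filter_upwards [eventually_ge_atTop 0] with s hs
      rw [one_mul, Real.norm_of_nonneg (exp_pos _).le, Real.norm_of_nonneg (exp_pos _).le]
      gcongr
      exact hw.norm_hankelRay_le hγ.le hs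
    refine ((hgrow.trans hlin).mul (isBigO_refl (fun s => rexp (γ + s * w.re)) _)).trans
      (IsBigO.of_bound (rexp (γ - w.re / 2 * γ)) (Eventually.of_forall fun s => ?_))
    rw [← Real.exp_add, Real.norm_of_nonneg (exp_pos _).le, Real.norm_of_nonneg (exp_pos _).le,
      ← Real.exp_add]
    apply le_of_eq
    ring_nf

end IsHankelDirection

lemma ofReal_mul_cpow {s : ℝ} (hs : 0 < s) {z : ℂ} (hz : z ≠ 0) (p : ℝ) :
    ((s : ℂ) * z) ^ (p : ℂ) = ((s ^ p : ℝ) : ℂ) * z ^ (p : ℂ) := by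
  have hs' : (s : ℂ) ≠ 0 := Complex.ofReal_ne_zero.mpr hs.ne'
  rw [Complex.cpow_def_of_ne_zero (mul_ne_zero hs' hz), Complex.log_ofReal_mul hs hz, add_mul,
    Complex.exp_add, ← Complex.cpow_def_of_ne_zero hz, Complex.ofReal_log hs.le,
    ← Complex.cpow_def_of_ne_zero hs', Complex.ofReal_cpow hs.le]

lemma hasDerivAt_exp_mul_cpow {z : ℂ} (hz : z ∈ Complex.slitPlane) (p : ℝ) :
    HasDerivAt (fun z : ℂ => Complex.exp z * z ^ (p : ℂ))
      (Complex.exp z * z ^ (p : ℂ) + p * (Complex.exp z * z ^ ((p - 1 : ℝ) : ℂ))) z := by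
  refine ((Complex.hasDerivAt_exp z).mul
    ((hasDerivAt_id z).cpow_const (c := (p : ℂ)) hz)).congr_deriv ?_
  simp only [id, Complex.ofReal_sub, Complex.ofReal_one]
  ring

/-- The integrand `exp z * z ^ p dz` of Hankel's integral, pulled back to the ray. -/
noncomputable def hankelIntegrand (w : ℂ) (γ p s : ℝ) : ℂ :=
  Complex.exp (hankelRay w γ s) * hankelRay w γ s ^ (p : ℂ) * w

/-- The integral of `exp z * z ^ p dz` along the upper half of a Hankel contour. -/
noncomputable def hankelIntegral (w : ℂ) (γ p : ℝ) : ℂ :=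
  ∫ s in Ioi (0 : ℝ), hankelIntegrand w γ p s

namespace IsHankelDirection

lemma norm_hankelIntegrand {w : ℂ} (hw : IsHankelDirection w) (γ p s : ℝ) :
    ‖hankelIntegrand w γ p s‖ = ‖hankelRay w γ s‖ ^ p * rexp (γ + s * w.re) := by
  rw [hankelIntegrand, norm_mul, norm_mul, hw.norm_eq_one, norm_exp_hankelRay,
    Complex.norm_cpow_real]
  ring

lemma aestronglyMeasurable_hankelIntegrand {w : ℂ} (hw : IsHankelDirection w) (γ p : ℝ) :
    AEStronglyMeasurable (hankelIntegrand w γ p) (volume.restrict (Ioi 0)) := by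
  have hc : ContinuousOn (fun s => hankelRay w γ s ^ (p : ℂ)) (Ioi 0) := fun s hs =>
    ((continuous_hankelRay w γ).continuousAt.cpow continuousAt_const
      (hw.mem_slitPlane_of_pos γ hs)).continuousWithinAt
  exact (((continuous_hankelRay w γ).cexp.continuousOn.mul hc).mul
    continuousOn_const).aestronglyMeasurable measurableSet_Ioi

lemma integrableOn_norm_rpow_mul_exp {w : ℂ} (hw : IsHankelDirection w) {γ : ℝ} (hγ : 0 < γ)
    (p : ℝ) :
    IntegrableOn (fun s => ‖hankelRay w γ s‖ ^ p * rexp (γ + s * w.re)) (Ioi 0) := by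
  simpa only [zero_mul, Real.exp_zero, one_mul] using
    hw.integrableOn_exp_rpow_mul hγ zero_lt_one 0 p

lemma integrableOn_hankelIntegrand {w : ℂ} (hw : IsHankelDirection w) {γ : ℝ} (hγ : 0 < γ)
    (p : ℝ) : IntegrableOn (hankelIntegrand w γ p) (Ioi 0) :=
  (hw.integrableOn_norm_rpow_mul_exp hγ p).mono' (hw.aestronglyMeasurable_hankelIntegrand γ p)
    (Eventually.of_forall fun s => (hw.norm_hankelIntegrand γ p s).le)

lemma hankelIntegral_add_mul {w : ℂ} (hw : IsHankelDirection w) {γ : ℝ} (hγ : 0 < γ) (p : ℝ) :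
    hankelIntegral w γ p + p * hankelIntegral w γ (p - 1) = -((rexp γ * γ ^ p : ℝ) : ℂ) := by
  have hint := hw.integrableOn_hankelIntegrand hγ p
  have hint' := (hw.integrableOn_hankelIntegrand hγ (p - 1)).const_mul (p : ℂ)
  have hderiv : ∀ s ∈ Ici (0 : ℝ), HasDerivAt
      (fun s => Complex.exp (hankelRay w γ s) * hankelRay w γ s ^ (p : ℂ))
      (hankelIntegrand w γ p s + p * hankelIntegrand w γ (p - 1) s) s := fun s hs => by
    refine ((hasDerivAt_exp_mul_cpow (hw.mem_slitPlane hγ hs) p).comp s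
      (hasDerivAt_hankelRay w γ s)).congr_deriv ?_
    simp only [hankelIntegrand]
    ring
  have hprim : IntegrableOn
      (fun s => Complex.exp (hankelRay w γ s) * hankelRay w γ s ^ (p : ℂ)) (Ioi 0) :=
    (hint.mul_const w⁻¹).congr (Eventually.of_forall fun s => by
      simp only [hankelIntegrand, mul_inv_cancel_right₀ hw.ne_zero])
  have key := integral_Ioi_of_hasDerivAt_of_tendsto' hderiv (hint.add hint')
    (tendsto_zero_of_hasDerivAt_of_integrableOn_Ioi
      (fun s hs => hderiv s (Ioi_subset_Ici_self hs)) (hint.add hint') hprim)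
  rw [integral_add hint hint', integral_const_mul] at key
  simpa [hankelIntegral, hankelRay, Complex.ofReal_cpow hγ.le] using key

lemma im_hankelIntegral {w : ℂ} (hw : IsHankelDirection w) {γ : ℝ} (hγ : 0 < γ) (p : ℝ) :
    (hankelIntegral w γ p).im = -p * (hankelIntegral w γ (p - 1)).im := by
  have := congrArg Complex.im (hw.hankelIntegral_add_mul hγ p)
  rw [Complex.add_im, Complex.im_ofReal_mul, ← Complex.ofReal_neg, Complex.ofReal_im] at this
  linarith

lemma norm_rpow_le_of_nonpos {w : ℂ} (hw : IsHankelDirection w) {γ γ₀ : ℝ} (hγ₀ : 0 < γ₀)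
    (hγ : γ₀ ≤ γ) (s : ℝ) {p : ℝ} (hp : p ≤ 0) : ‖hankelRay w γ s‖ ^ p ≤ (γ₀ * w.im) ^ p :=
  Real.rpow_le_rpow_of_nonpos (mul_pos hγ₀ hw.im_pos)
    ((mul_le_mul_of_nonneg_right hγ hw.im_pos.le).trans
      (hw.origin_mul_im_le_norm (hγ₀.le.trans hγ) s)) hp

lemma hasDerivAt_hankelIntegrand_origin {w : ℂ} (hw : IsHankelDirection w) (γ p : ℝ) {s : ℝ}
    (hs : 0 < s) :
    HasDerivAt (fun γ => hankelIntegrand w γ p s)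
      (hankelIntegrand w γ p s + p * hankelIntegrand w γ (p - 1) s) γ := by
  refine (((hasDerivAt_exp_mul_cpow (hw.mem_slitPlane_of_pos γ hs) p).comp γ
    (hasDerivAt_hankelRay_origin w γ s)).mul_const w).congr_deriv ?_
  simp only [hankelIntegrand]
  ring

lemma hasDerivAt_hankelIntegral_origin {w : ℂ} (hw : IsHankelDirection w) {γ : ℝ} (hγ : 0 < γ)
    {p : ℝ} (hp : p ≤ 0) :
    HasDerivAt (fun γ => hankelIntegral w γ p) (-((rexp γ * γ ^ p : ℝ) : ℂ)) γ := by
  have hint := hw.integrableOn_hankelIntegrand hγ p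
  have hint' := (hw.integrableOn_hankelIntegrand hγ (p - 1)).const_mul (p : ℂ)
  rw [← hw.hankelIntegral_add_mul hγ p, hankelIntegral, hankelIntegral, ← integral_const_mul,
    ← integral_add hint hint']
  set K := (γ / 2 * w.im) ^ p + |p| * (γ / 2 * w.im) ^ (p - 1) with hK
  refine (hasDerivAt_integral_of_dominated_loc_of_deriv_le (𝕜 := ℝ)
    (F := fun γ s => hankelIntegrand w γ p s)
    (F' := fun γ s => hankelIntegrand w γ p s + p * hankelIntegrand w γ (p - 1) s)
    (s := Ioo (γ / 2) (2 * γ)) (bound := fun s => K * rexp (2 * γ) * rexp (-(-w.re) * s))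
    (isOpen_Ioo.mem_nhds ⟨by linarith, by linarith⟩)
    (Eventually.of_forall fun u => hw.aestronglyMeasurable_hankelIntegrand u p)
    hint (hint.add hint').aestronglyMeasurable ?_
    ((exp_neg_integrableOn_Ioi 0 (by linarith [hw.re_neg])).const_mul _) ?_).2
  · refine Eventually.of_forall fun s u hu => ?_
    calc ‖hankelIntegrand w u p s + p * hankelIntegrand w u (p - 1) s‖
        ≤ ‖hankelRay w u s‖ ^ p * rexp (u + s * w.re)
          + |p| * (‖hankelRay w u s‖ ^ (p - 1) * rexp (u + s * w.re)) := by
          refine (norm_add_le _ _).trans_eq ?_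
          rw [norm_mul (p : ℂ), hw.norm_hankelIntegrand, hw.norm_hankelIntegrand,
            Complex.norm_real, Real.norm_eq_abs]
      _ = (‖hankelRay w u s‖ ^ p + |p| * ‖hankelRay w u s‖ ^ (p - 1)) * rexp (u + s * w.re) := by
          ring
      _ ≤ K * rexp (2 * γ + s * w.re) := by
          have h₀ := hw.norm_rpow_le_of_nonpos (half_pos hγ) hu.1.le s hp
          have h₁ := hw.norm_rpow_le_of_nonpos (half_pos hγ) hu.1.le s (p := p - 1) (by linarith)
          have hbase := (mul_pos (half_pos hγ) hw.im_pos).le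
          rw [hK]
          gcongr
          exact hu.2.le
      _ = K * rexp (2 * γ) * rexp (-(-w.re) * s) := by
          rw [mul_assoc, ← Real.exp_add]; ring_nf
  · exact (ae_restrict_iff' measurableSet_Ioi).mpr
      (Eventually.of_forall fun s hs u _ => hw.hasDerivAt_hankelIntegrand_origin u p hs)

lemma im_hankelIntegral_eq_of_pos {w : ℂ} (hw : IsHankelDirection w) {p : ℝ} (hp : p ≤ 0)
    {γ γ' : ℝ} (hγ : 0 < γ) (hγ' : 0 < γ') :
    (hankelIntegral w γ p).im = (hankelIntegral w γ' p).im := by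
  have hderiv : ∀ γ ∈ Ioi (0 : ℝ), HasDerivAt (fun γ => (hankelIntegral w γ p).im) 0 γ :=
    fun γ hγ => by
      refine (Complex.imCLM.hasFDerivAt.comp_hasDerivAt γ
        (hw.hasDerivAt_hankelIntegral_origin hγ hp)).congr_deriv ?_
      rw [← Complex.ofReal_neg, Complex.imCLM_apply, Complex.ofReal_im]
  exact isOpen_Ioi.is_const_of_deriv_eq_zero isPreconnected_Ioi
    (fun u hu => (hderiv u hu).differentiableAt.differentiableWithinAt)
    (fun u hu => (hderiv u hu).deriv) hγ hγ'

lemma tendsto_hankelIntegral_nhdsGT_zero {w : ℂ} (hw : IsHankelDirection w) {p : ℝ}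
    (hp : p ∈ Ioc (-1 : ℝ) 0) :
    Tendsto (fun γ => hankelIntegral w γ p) (𝓝[>] 0) (𝓝 (hankelIntegral w 0 p)) := by
  refine tendsto_integral_filter_of_dominated_convergence
    (fun s => w.im ^ p * rexp 1 * (s ^ ((p + 1) - 1) * rexp (-(-w.re) * s)))
    (Eventually.of_forall fun u => hw.aestronglyMeasurable_hankelIntegrand u p) ?_
    ((integrableOn_rpow_mul_exp_neg_mul (by linarith [hp.1])
      (neg_pos.mpr hw.re_neg)).const_mul _) ?_
  · filter_upwards [Ioo_mem_nhdsGT one_pos] with u hu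
    refine (ae_restrict_iff' measurableSet_Ioi).mpr (Eventually.of_forall fun s hs => ?_)
    have hs : 0 < s := hs
    calc ‖hankelIntegrand w u p s‖ = ‖hankelRay w u s‖ ^ p * rexp (u + s * w.re) :=
          hw.norm_hankelIntegrand u p s
      _ ≤ (s * w.im) ^ p * rexp (1 + s * w.re) := by
          have := Real.rpow_le_rpow_of_nonpos (mul_pos hs hw.im_pos)
            (mul_im_le_norm_hankelRay w u s) hp.2
          have hpow := Real.rpow_nonneg (mul_pos hs hw.im_pos).le p
          gcongr
          exact hu.2.le
      _ = _ := by rw [Real.mul_rpow hs.le hw.im_pos.le, Real.exp_add]; ring_nf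
  · exact (ae_restrict_iff' measurableSet_Ioi).mpr (Eventually.of_forall fun s hs =>
      (hw.hasDerivAt_hankelIntegrand_origin 0 p hs).continuousAt.tendsto.mono_left
        nhdsWithin_le_nhds)

lemma hankelIntegral_zero {w : ℂ} (hw : IsHankelDirection w) {p : ℝ} (hp : -1 < p) :
    hankelIntegral w 0 p
      = Real.Gamma (p + 1) * Complex.exp (((π * (p + 1) : ℝ) : ℂ) * Complex.I) := by
  have hray : ∀ s ∈ Ioi (0 : ℝ), hankelIntegrand w 0 p s
      = w ^ ((p : ℂ) + 1) * (((s ^ ((p + 1) - 1) : ℝ) : ℂ) * Complex.exp (-(-w) * s)) := by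
    intro s hs
    have hs : (0 : ℝ) < s := hs
    rw [hankelIntegrand, hankelRay, Complex.ofReal_zero, zero_add,
      ofReal_mul_cpow hs hw.ne_zero, add_sub_cancel_right, neg_neg,
      Complex.cpow_add _ _ hw.ne_zero, Complex.cpow_one, mul_comm (s : ℂ) w]
    ring
  have hlog : Complex.log w - Complex.log (-w) = π * Complex.I := by
    rw [Complex.log, Complex.log, Complex.arg_neg_eq_arg_sub_pi_of_im_pos hw.im_pos, norm_neg]
    push_cast; ring
  rw [hankelIntegral, setIntegral_congr_fun measurableSet_Ioi hray, integral_const_mul,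
    integral_rpow_mul_cexp_neg_mul_Ioi (by linarith) (by simpa using hw.re_neg),
    Complex.cpow_def_of_ne_zero hw.ne_zero,
    Complex.cpow_def_of_ne_zero (neg_ne_zero.mpr hw.ne_zero), mul_left_comm, ← Complex.exp_add]
  congr 2
  push_cast
  linear_combination ((p : ℂ) + 1) * hlog

lemma im_hankelIntegral_of_mem_Ioo {w : ℂ} (hw : IsHankelDirection w) {γ : ℝ} (hγ : 0 < γ)
    {p : ℝ} (hp : p ∈ Ioo (-1 : ℝ) 0) :
    (hankelIntegral w γ p).im = π * (Real.Gamma (-p))⁻¹ := by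
  have horigin : (hankelIntegral w γ p).im = (hankelIntegral w 0 p).im := by
    refine tendsto_nhds_unique (tendsto_const_nhds.congr' ?_)
      ((Complex.continuous_im.tendsto _).comp
        (hw.tendsto_hankelIntegral_nhdsGT_zero ⟨hp.1, hp.2.le⟩))
    filter_upwards [self_mem_nhdsWithin] with u hu
    exact hw.im_hankelIntegral_eq_of_pos hp.2.le hγ hu
  have hrefl := Real.Gamma_mul_Gamma_one_sub (p + 1)
  have hsin : Real.sin (π * (p + 1)) ≠ 0 :=
    (Real.sin_pos_of_pos_of_lt_pi (mul_pos pi_pos (by linarith [hp.1]))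
      (by nlinarith [pi_pos, hp.2])).ne'
  have hΓ : Real.Gamma (-p) ≠ 0 := (Real.Gamma_pos_of_pos (neg_pos.mpr hp.2)).ne'
  rw [show 1 - (p + 1) = -p by ring, eq_div_iff hsin] at hrefl
  rw [horigin, hw.hankelIntegral_zero hp.1, Complex.im_ofReal_mul, Complex.exp_ofReal_mul_I_im,
    eq_mul_inv_iff_mul_eq₀ hΓ, mul_right_comm, hrefl]

lemma norm_hankelIntegrand_le {w : ℂ} (hw : IsHankelDirection w) {γ s : ℝ} (hγ : 0 < γ)
    (hs : 0 ≤ s) {p q₁ q₂ : ℝ} (hp : p ∈ Icc q₁ q₂) :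
    ‖hankelIntegrand w γ p s‖ ≤ ‖hankelRay w γ s‖ ^ q₁ * rexp (γ + s * w.re)
      + ‖hankelRay w γ s‖ ^ q₂ * rexp (γ + s * w.re) := by
  have hpos : 0 < ‖hankelRay w γ s‖ := norm_pos_iff.mpr (hw.hankelRay_ne_zero hγ hs)
  rw [hw.norm_hankelIntegrand, ← add_mul]
  gcongr
  rcases le_total 1 ‖hankelRay w γ s‖ with h | h
  · exact (Real.rpow_le_rpow_of_exponent_le h hp.2).trans
      (le_add_of_nonneg_left (Real.rpow_nonneg hpos.le _))
  · exact (Real.rpow_le_rpow_of_exponent_ge hpos h hp.1).trans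
      (le_add_of_nonneg_right (Real.rpow_nonneg hpos.le _))

lemma continuous_hankelIntegral {w : ℂ} (hw : IsHankelDirection w) {γ : ℝ} (hγ : 0 < γ) :
    Continuous (hankelIntegral w γ) := by
  refine continuous_iff_continuousAt.mpr fun p₀ => continuousAt_of_dominated
    (Eventually.of_forall fun p => hw.aestronglyMeasurable_hankelIntegrand γ p) ?_
    ((hw.integrableOn_norm_rpow_mul_exp hγ (p₀ - 1)).add
      (hw.integrableOn_norm_rpow_mul_exp hγ (p₀ + 1))) ?_
  · filter_upwards [Icc_mem_nhds (sub_one_lt p₀) (lt_add_one p₀)] with p hp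
    exact (ae_restrict_iff' measurableSet_Ioi).mpr (Eventually.of_forall fun s hs =>
      hw.norm_hankelIntegrand_le hγ (le_of_lt hs) hp)
  · refine (ae_restrict_iff' measurableSet_Ioi).mpr (Eventually.of_forall fun s hs => ?_)
    exact (continuousAt_const.mul (Complex.continuous_ofReal.continuousAt.const_cpow
      (Or.inl (hw.hankelRay_ne_zero hγ (le_of_lt hs))))).mul continuousAt_const

end IsHankelDirection

lemma inv_Gamma_eq_mul_inv_Gamma_add_one (s : ℝ) :
    (Real.Gamma s)⁻¹ = s * (Real.Gamma (s + 1))⁻¹ := by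
  have h := Complex.one_div_Gamma_eq_self_mul_one_div_Gamma_add_one s
  rw [← Complex.ofReal_one, ← Complex.ofReal_add, Complex.Gamma_ofReal, Complex.Gamma_ofReal] at h
  exact_mod_cast h

lemma continuous_inv_Gamma : Continuous fun s : ℝ => (Real.Gamma s)⁻¹ := by
  have h : Continuous fun s : ℝ => ((Complex.Gamma s)⁻¹).re :=
    Complex.continuous_re.comp
      (Complex.differentiable_one_div_Gamma.continuous.comp Complex.continuous_ofReal)
  simpa only [Complex.Gamma_ofReal, ← Complex.ofReal_inv, Complex.ofReal_re] using h

lemma eq_zero_of_eq_neg_mul_sub_one {D : ℝ → ℝ} (hcont : Continuous D)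
    (hrec : ∀ p, D p = -p * D (p - 1)) (hzero : ∀ p ∈ Ioo (-1 : ℝ) 0, D p = 0) (p : ℝ) :
    D p = 0 := by
  have hIcc : ∀ p ∈ Icc (-1 : ℝ) 0, D p = 0 := fun p hp => by
    have hclosed : IsClosed {p | D p = 0} := isClosed_eq hcont continuous_const
    rw [← closure_Ioo (by norm_num : (-1 : ℝ) ≠ 0)] at hp
    exact hclosed.closure_subset_iff.mpr hzero hp
  have hup : ∀ (n : ℕ) (p : ℝ), -1 ≤ p → p ≤ n → D p = 0 := by
    intro n
    induction n with
    | zero => exact fun p h1 h2 => hIcc p ⟨h1, by simpa using h2⟩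
    | succ n ih =>
      intro p h1 h2
      rcases le_total p 0 with h | h
      · exact hIcc p ⟨h1, h⟩
      · rw [hrec, ih (p - 1) (by linarith) (by push_cast at h2; linarith), mul_zero]
  have hdown : ∀ (n : ℕ) (p : ℝ), -(n : ℝ) - 1 ≤ p → p ≤ 0 → D p = 0 := by
    intro n
    induction n with
    | zero => exact fun p h1 h2 => hIcc p ⟨by simpa using h1, h2⟩
    | succ n ih =>
      intro p h1 h2
      rcases le_total (-1) p with h | h
      · exact hIcc p ⟨h, h2⟩
      · have := hrec (p + 1)
        rw [ih (p + 1) (by push_cast at h1; linarith) (by linarith), add_sub_cancel_right] at this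
        rcases mul_eq_zero.mp this.symm with h0 | h0
        · exact hIcc p ⟨by linarith, h2⟩
        · exact h0
  obtain ⟨n, hn⟩ := exists_nat_ge |p|
  rcases le_total p 0 with h | h
  · exact hdown n p (by linarith [neg_abs_le p]) h
  · exact hup n p (by linarith) ((le_abs_self p).trans hn)

lemma IsHankelDirection.im_hankelIntegral_eq {w : ℂ} (hw : IsHankelDirection w) {γ : ℝ}
    (hγ : 0 < γ) (p : ℝ) : (hankelIntegral w γ p).im = π * (Real.Gamma (-p))⁻¹ := by
  refine sub_eq_zero.mp (eq_zero_of_eq_neg_mul_sub_one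
    (D := fun p => (hankelIntegral w γ p).im - π * (Real.Gamma (-p))⁻¹) ?_ (fun p => ?_)
    (fun p hp => sub_eq_zero.mpr (hw.im_hankelIntegral_of_mem_Ioo hγ hp)) p)
  · exact (Complex.continuous_im.comp (hw.continuous_hankelIntegral hγ)).sub
      (continuous_const.mul (continuous_inv_Gamma.comp continuous_neg))
  · rw [hw.im_hankelIntegral hγ p, inv_Gamma_eq_mul_inv_Gamma_add_one (-p),
      show -p + 1 = -(p - 1) by ring]
    ring

end HankelContour

section WrightFunction
open Set Filter Topology

/-- The integrand, on a ray of a Hankel contour, of the representation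
`M_α(x) = (2πi)⁻¹ ∫ exp (z - x z ^ α) z ^ (α - 1) dz` of the Wright function. -/
noncomputable def wrightIntegrand (α : ℝ) (w : ℂ) (γ x s : ℝ) : ℂ :=
  hankelIntegrand w γ (α - 1) s * Complex.exp (-hankelRay w γ s ^ (α : ℂ) * x)

/-- The contribution of the upper half of a Hankel contour to the contour integral of the
Wright function. -/
noncomputable def wrightIntegral (α : ℝ) (w : ℂ) (γ x : ℝ) : ℂ :=
  ∫ s in Ioi (0 : ℝ), wrightIntegrand α w γ x s

/-- A lower bound for the real part of `z ^ α` on the ray, and so an exponential decay rate of the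
Wright function. -/
noncomputable def wrightRate (α : ℝ) (w : ℂ) (γ : ℝ) : ℝ := (γ * w.im) ^ α * Real.cos (α * w.arg)

lemma exists_isHankelDirection_mul_arg_lt {α : ℝ} (hα : α ∈ Ioo (0 : ℝ) 1) :
    ∃ w, IsHankelDirection w ∧ α * w.arg < π / 2 := by
  obtain ⟨h0, h1⟩ := hα
  set φ := π / (1 + α) with hφ
  have hφα : φ * (1 + α) = π := by rw [hφ]; field_simp
  have hφpos : 0 < φ := by positivity
  have hφπ : φ < π := by nlinarith
  have hπφ : π / 2 < φ := by nlinarith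
  refine ⟨Complex.exp (φ * Complex.I), ⟨Complex.norm_exp_ofReal_mul_I φ, ?_, ?_⟩, ?_⟩
  · rw [Complex.exp_ofReal_mul_I_re]
    exact Real.cos_neg_of_pi_div_two_lt_of_lt hπφ (by linarith)
  · rw [Complex.exp_ofReal_mul_I_im]
    exact Real.sin_pos_of_pos_of_lt_pi hφpos hφπ
  · rw [Complex.arg_exp_mul_I, (toIocMod_eq_self _).mpr ⟨by linarith, by linarith⟩]
    linarith

lemma cpow_mul_cpow_pow {z : ℂ} (hz : z ≠ 0) (p q : ℝ) (r : ℕ) :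
    z ^ (p : ℂ) * (z ^ (q : ℂ)) ^ r = z ^ ((p + q * r : ℝ) : ℂ) := by
  rw [← Complex.cpow_mul_nat, ← Complex.cpow_add _ _ hz]
  push_cast; rfl

lemma cpow_rpow_natCast_neg (z : ℂ) (q : ℝ) (n : ℕ) :
    (z ^ (q : ℂ)) ^ (-((n : ℝ) : ℂ)) = z ^ ((-(q * n) : ℝ) : ℂ) := by
  rw [show (-((n : ℝ) : ℂ)) = ((-(n : ℤ) : ℤ) : ℂ) by push_cast; rfl, Complex.cpow_intCast,
    ← Complex.cpow_mul_int]
  push_cast; ring_nf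

namespace IsHankelDirection

lemma arg_nonneg {w : ℂ} (hw : IsHankelDirection w) : 0 ≤ w.arg :=
  Complex.arg_nonneg_iff.mpr hw.im_pos.le

lemma arg_hankelRay_nonneg {w : ℂ} (hw : IsHankelDirection w) (γ : ℝ) {s : ℝ} (hs : 0 ≤ s) :
    0 ≤ (hankelRay w γ s).arg :=
  Complex.arg_nonneg_iff.mpr (by rw [hankelRay_im]; exact mul_nonneg hs hw.im_pos.le)

lemma arg_hankelRay_le {w : ℂ} (hw : IsHankelDirection w) {γ s : ℝ} (hγ : 0 < γ) (hs : 0 ≤ s) :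
    (hankelRay w γ s).arg ≤ w.arg := by
  have hne := hw.hankelRay_ne_zero hγ hs
  have hnorm : s - γ ≤ ‖hankelRay w γ s‖ := by
    have := norm_sub_le (hankelRay w γ s) (γ : ℂ)
    rw [hankelRay, add_sub_cancel_left, norm_mul, hw.norm_eq_one, mul_one,
      Complex.norm_of_nonneg hs, Complex.norm_of_nonneg hγ.le] at this
    rw [hankelRay]
    linarith
  have hre : -1 ≤ w.re := by
    have := Complex.abs_re_le_norm w
    rw [hw.norm_eq_one] at this
    exact (abs_le.mp this).1
  refine (Real.strictAntiOn_cos.le_iff_ge ⟨hw.arg_nonneg, Complex.arg_le_pi _⟩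
    ⟨hw.arg_hankelRay_nonneg γ hs, Complex.arg_le_pi _⟩).mp ?_
  rw [Complex.cos_arg hw.ne_zero, Complex.cos_arg hne, hw.norm_eq_one, div_one, hankelRay_re,
    le_div_iff₀ (norm_pos_iff.mpr hne)]
  nlinarith [hw.re_neg]

lemma cos_mul_arg_pos {w : ℂ} (hw : IsHankelDirection w) {α : ℝ} (hα : 0 ≤ α)
    (hαw : α * w.arg < π / 2) : 0 < Real.cos (α * w.arg) :=
  Real.cos_pos_of_mem_Ioo
    ⟨by linarith [pi_pos, mul_nonneg hα hw.arg_nonneg], hαw⟩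

lemma wrightRate_pos {w : ℂ} (hw : IsHankelDirection w) {α γ : ℝ} (hα : 0 ≤ α)
    (hαw : α * w.arg < π / 2) (hγ : 0 < γ) : 0 < wrightRate α w γ :=
  mul_pos (Real.rpow_pos_of_pos (mul_pos hγ hw.im_pos) _) (hw.cos_mul_arg_pos hα hαw)

lemma wrightRate_le_re {w : ℂ} (hw : IsHankelDirection w) {α γ s : ℝ} (hα : 0 ≤ α)
    (hαw : α * w.arg < π / 2) (hγ : 0 < γ) (hs : 0 ≤ s) :
    wrightRate α w γ ≤ (hankelRay w γ s ^ (α : ℂ)).re := by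
  have hcos : Real.cos (α * w.arg) ≤ Real.cos ((hankelRay w γ s).arg * α) := by
    rw [mul_comm _ α]
    exact Real.cos_le_cos_of_nonneg_of_le_pi (mul_nonneg hα (hw.arg_hankelRay_nonneg γ hs))
      (by linarith [pi_pos]) (mul_le_mul_of_nonneg_left (hw.arg_hankelRay_le hγ hs) hα)
  rw [Complex.cpow_ofReal_re]
  exact mul_le_mul (Real.rpow_le_rpow (mul_pos hγ hw.im_pos).le
    (hw.origin_mul_im_le_norm hγ.le s) hα) hcos (hw.cos_mul_arg_pos hα hαw).le (by positivity)

lemma exists_wrightRate_eq {w : ℂ} (hw : IsHankelDirection w) {α : ℝ} (hα : 0 < α)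
    (hαw : α * w.arg < π / 2) {K : ℝ} (hK : 0 < K) : ∃ γ, 0 < γ ∧ wrightRate α w γ = K := by
  have hcos := hw.cos_mul_arg_pos hα.le hαw
  have him := hw.im_pos
  refine ⟨(K / Real.cos (α * w.arg)) ^ α⁻¹ / w.im, by positivity, ?_⟩
  rw [wrightRate, div_mul_cancel₀ _ him.ne', Real.rpow_inv_rpow (by positivity) hα.ne',
    div_mul_cancel₀ _ hcos.ne']

lemma hasSum_wrightIntegrand {w : ℂ} (hw : IsHankelDirection w) (α : ℝ) {γ s : ℝ} (hγ : 0 < γ)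
    (hs : 0 ≤ s) (x : ℝ) :
    HasSum (fun r : ℕ => (((-x) ^ r / r.factorial : ℝ) : ℂ)
      * hankelIntegrand w γ (α - 1 + α * r) s) (wrightIntegrand α w γ x s) := by
  have hexp := NormedSpace.expSeries_div_hasSum_exp (-hankelRay w γ s ^ (α : ℂ) * x)
  rw [← Complex.exp_eq_exp_ℂ] at hexp
  refine (hexp.mul_left (hankelIntegrand w γ (α - 1) s)).congr_fun fun r => ?_
  rw [hankelIntegrand, ← cpow_mul_cpow_pow (hw.hankelRay_ne_zero hγ hs) (α - 1) α r,
    hankelIntegrand, show -hankelRay w γ s ^ (α : ℂ) * x = -x * hankelRay w γ s ^ (α : ℂ) by ring,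
    mul_pow]
  push_cast
  ring

lemma norm_wrightIntegrand_term {w : ℂ} (hw : IsHankelDirection w) (α : ℝ) {γ s : ℝ} (hγ : 0 < γ)
    (hs : 0 ≤ s) (x : ℝ) (r : ℕ) :
    ‖(((-x) ^ r / r.factorial : ℝ) : ℂ) * hankelIntegrand w γ (α - 1 + α * r) s‖
      = (|x| * ‖hankelRay w γ s‖ ^ α) ^ r / r.factorial
        * (‖hankelRay w γ s‖ ^ (α - 1) * rexp (γ + s * w.re)) := by
  have hpos : 0 < ‖hankelRay w γ s‖ := norm_pos_iff.mpr (hw.hankelRay_ne_zero hγ hs)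
  rw [norm_mul, hw.norm_hankelIntegrand, Complex.norm_real, Real.rpow_add hpos,
    Real.rpow_mul hpos.le, Real.rpow_natCast, norm_div, norm_pow, norm_neg, Real.norm_eq_abs,
    Real.norm_eq_abs, Nat.abs_cast, mul_pow]
  ring

lemma hasSum_wrightIntegral {w : ℂ} (hw : IsHankelDirection w) {α γ : ℝ} (hα : α < 1) (hγ : 0 < γ)
    (x : ℝ) :
    HasSum (fun r : ℕ => (((-x) ^ r / r.factorial : ℝ) : ℂ) * hankelIntegral w γ (α - 1 + α * r))
      (wrightIntegral α w γ x) := by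
  have hbound : ∀ s : ℝ, HasSum (fun r : ℕ => (|x| * ‖hankelRay w γ s‖ ^ α) ^ r / r.factorial
      * (‖hankelRay w γ s‖ ^ (α - 1) * rexp (γ + s * w.re)))
      (rexp (|x| * ‖hankelRay w γ s‖ ^ α)
        * (‖hankelRay w γ s‖ ^ (α - 1) * rexp (γ + s * w.re))) := fun s => by
    refine HasSum.mul_right _ ?_
    rw [Real.exp_eq_exp_ℝ]
    exact NormedSpace.expSeries_div_hasSum_exp _
  simp only [hankelIntegral, ← integral_const_mul]
  refine hasSum_integral_of_dominated_convergence
    (fun r s => (|x| * ‖hankelRay w γ s‖ ^ α) ^ r / r.factorial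
      * (‖hankelRay w γ s‖ ^ (α - 1) * rexp (γ + s * w.re)))
    (fun r => ?_) (fun r => ?_) (Eventually.of_forall fun s => (hbound s).summable) ?_ ?_
  · exact (hw.aestronglyMeasurable_hankelIntegrand γ _).const_mul _
  · exact (ae_restrict_iff' measurableSet_Ioi).mpr (Eventually.of_forall fun s hs =>
      (hw.norm_wrightIntegrand_term α hγ (le_of_lt hs) x r).le)
  · simpa only [IntegrableOn, (hbound _).tsum_eq, mul_assoc] using
      hw.integrableOn_exp_rpow_mul hγ hα |x| (α - 1)
  · exact (ae_restrict_iff' measurableSet_Ioi).mpr (Eventually.of_forall fun s hs =>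
      hw.hasSum_wrightIntegrand α hγ (le_of_lt hs) x)

lemma wrightM_eq {w : ℂ} (hw : IsHankelDirection w) {α γ : ℝ} (hα : α < 1) (hγ : 0 < γ) (x : ℝ) :
    wrightM α x = (wrightIntegral α w γ x).im / π := by
  refine HasSum.tsum_eq (((Complex.imCLM.hasSum
    (hw.hasSum_wrightIntegral hα hγ x)).div_const π).congr_fun fun r => ?_)
  rw [Complex.imCLM_apply, Complex.im_ofReal_mul, hw.im_hankelIntegral_eq hγ,
    show -(α - 1 + α * r) = 1 - α * (1 + r) by ring, div_mul_eq_div_div]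
  field_simp

lemma pow_mul_wrightM_eq {w : ℂ} (hw : IsHankelDirection w) {α γ : ℝ} (hα : α < 1) (hγ : 0 < γ)
    (k : ℕ) (x : ℝ) :
    x ^ k * wrightM α x = (((x ^ k : ℝ) : ℂ) * wrightIntegral α w γ x).im / π := by
  rw [hw.wrightM_eq hα hγ, Complex.im_ofReal_mul, mul_div_assoc]

lemma norm_wrightIntegrand_le {w : ℂ} (hw : IsHankelDirection w) {α γ s x : ℝ} (hα : 0 ≤ α)
    (hαw : α * w.arg < π / 2) (hγ : 0 < γ) (hs : 0 ≤ s) (hx : 0 ≤ x) :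
    ‖wrightIntegrand α w γ x s‖
      ≤ ‖hankelRay w γ s‖ ^ (α - 1) * rexp (γ + s * w.re) * rexp (-wrightRate α w γ * x) := by
  have hrate := hw.wrightRate_le_re hα hαw hγ hs
  rw [wrightIntegrand, norm_mul, hw.norm_hankelIntegrand, Complex.norm_exp, Complex.re_mul_ofReal,
    Complex.neg_re]
  gcongr

lemma norm_wrightIntegral_le {w : ℂ} (hw : IsHankelDirection w) {α γ x : ℝ} (hα : 0 ≤ α)
    (hαw : α * w.arg < π / 2) (hγ : 0 < γ) (hx : 0 ≤ x) :
    ‖wrightIntegral α w γ x‖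
      ≤ (∫ s in Ioi (0 : ℝ), ‖hankelRay w γ s‖ ^ (α - 1) * rexp (γ + s * w.re))
        * rexp (-wrightRate α w γ * x) := by
  rw [← integral_mul_const]
  exact norm_integral_le_of_norm_le ((hw.integrableOn_norm_rpow_mul_exp hγ _).mul_const _)
    ((ae_restrict_iff' measurableSet_Ioi).mpr (Eventually.of_forall fun s hs =>
      hw.norm_wrightIntegrand_le hα hαw hγ (le_of_lt hs) hx))

lemma continuousOn_wrightIntegrand {w : ℂ} (hw : IsHankelDirection w) (α γ : ℝ) :
    ContinuousOn (fun z : ℝ × ℝ => wrightIntegrand α w γ z.1 z.2) (Ioi 0 ×ˢ Ioi 0) := by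
  have hray : Continuous fun z : ℝ × ℝ => hankelRay w γ z.2 :=
    (continuous_hankelRay w γ).comp continuous_snd
  have hpow : ∀ p : ℂ, ContinuousOn (fun z : ℝ × ℝ => hankelRay w γ z.2 ^ p)
      (Ioi 0 ×ˢ Ioi 0) := fun p z hz =>
    (hray.continuousAt.cpow continuousAt_const
      (hw.mem_slitPlane_of_pos γ hz.2)).continuousWithinAt
  have hfst : Continuous fun z : ℝ × ℝ => (z.1 : ℂ) := by fun_prop
  exact ((hray.cexp.continuousOn.mul (hpow _)).mul continuousOn_const).mul
    ((hpow _).neg.mul hfst.continuousOn).cexp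

lemma integrable_pow_mul_wrightIntegrand {w : ℂ} (hw : IsHankelDirection w) {α γ : ℝ}
    (hα : 0 ≤ α) (hαw : α * w.arg < π / 2) (hγ : 0 < γ) (k : ℕ) :
    Integrable (fun z : ℝ × ℝ => ((z.1 ^ k : ℝ) : ℂ) * wrightIntegrand α w γ z.1 z.2)
      ((volume.restrict (Ioi (0 : ℝ))).prod (volume.restrict (Ioi (0 : ℝ)))) := by
  have hfst : IntegrableOn (fun x : ℝ => x ^ k * rexp (-wrightRate α w γ * x)) (Ioi 0) := by
    simpa only [add_sub_cancel_right, Real.rpow_natCast] using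
      integrableOn_rpow_mul_exp_neg_mul (a := k + 1) (by positivity) (hw.wrightRate_pos hα hαw hγ)
  refine (Integrable.mul_prod hfst (hw.integrableOn_norm_rpow_mul_exp hγ (α - 1))).mono' ?_ ?_
  · rw [Measure.prod_restrict]
    exact ((Continuous.continuousOn (by fun_prop)).mul
      (hw.continuousOn_wrightIntegrand α γ)).aestronglyMeasurable
      (measurableSet_Ioi.prod measurableSet_Ioi)
  · rw [Measure.prod_restrict]
    refine (ae_restrict_iff' (measurableSet_Ioi.prod measurableSet_Ioi)).mpr
      (Eventually.of_forall fun z hz => ?_)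
    have hx : 0 ≤ z.1 := le_of_lt hz.1
    rw [norm_mul, Complex.norm_real, Real.norm_of_nonneg (pow_nonneg hx k), mul_assoc (z.1 ^ k),
      mul_comm (rexp _) (_ * _)]
    exact mul_le_mul_of_nonneg_left (hw.norm_wrightIntegrand_le hα hαw hγ (le_of_lt hz.2) hx)
      (pow_nonneg hx k)

lemma integrableOn_pow_mul_wrightIntegral {w : ℂ} (hw : IsHankelDirection w) {α γ : ℝ}
    (hα : 0 ≤ α) (hαw : α * w.arg < π / 2) (hγ : 0 < γ) (k : ℕ) :
    IntegrableOn (fun x : ℝ => ((x ^ k : ℝ) : ℂ) * wrightIntegral α w γ x) (Ioi 0) := by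
  simpa only [IntegrableOn, wrightIntegral, integral_const_mul] using
    (hw.integrable_pow_mul_wrightIntegrand hα hαw hγ k).integral_prod_left

lemma integral_pow_mul_wrightIntegrand {w : ℂ} (hw : IsHankelDirection w) {α γ s : ℝ} (hα : 0 ≤ α)
    (hαw : α * w.arg < π / 2) (hγ : 0 < γ) (hs : 0 ≤ s) (k : ℕ) :
    ∫ x in Ioi (0 : ℝ), ((x ^ k : ℝ) : ℂ) * wrightIntegrand α w γ x s
      = k.factorial * hankelIntegrand w γ (-1 - α * k) s := by
  have hre := (hw.wrightRate_pos hα hαw hγ).trans_le (hw.wrightRate_le_re hα hαw hγ hs)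
  have hΓ := integral_rpow_mul_cexp_neg_mul_Ioi (a := k + 1) (by positivity) hre
  simp only [add_sub_cancel_right, Real.rpow_natCast] at hΓ
  rw [Real.Gamma_nat_eq_factorial, show ((k : ℝ) + 1) = ((k + 1 : ℕ) : ℝ) by push_cast; rfl,
    cpow_rpow_natCast_neg] at hΓ
  simp only [wrightIntegrand, mul_left_comm _ (hankelIntegrand w γ (α - 1) s)]
  rw [integral_const_mul, hΓ, hankelIntegrand, hankelIntegrand,
    show (-1 - α * k : ℝ) = (α - 1) + -(α * (k + 1 : ℕ)) by push_cast; ring, Complex.ofReal_add,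
    Complex.cpow_add _ _ (hw.hankelRay_ne_zero hγ hs)]
  push_cast
  ring

lemma integral_pow_mul_wrightIntegral {w : ℂ} (hw : IsHankelDirection w) {α γ : ℝ} (hα : 0 ≤ α)
    (hαw : α * w.arg < π / 2) (hγ : 0 < γ) (k : ℕ) :
    ∫ x in Ioi (0 : ℝ), ((x ^ k : ℝ) : ℂ) * wrightIntegral α w γ x
      = k.factorial * hankelIntegral w γ (-1 - α * k) := by
  have hswap := integral_integral_swap
    (f := fun x s : ℝ => ((x ^ k : ℝ) : ℂ) * wrightIntegrand α w γ x s)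
    (hw.integrable_pow_mul_wrightIntegrand hα hαw hγ k)
  simp only [integral_const_mul] at hswap
  rw [hankelIntegral, ← integral_const_mul]
  exact hswap.trans (setIntegral_congr_fun measurableSet_Ioi fun s hs =>
    hw.integral_pow_mul_wrightIntegrand hα hαw hγ (le_of_lt hs) k)

end IsHankelDirection

lemma exists_abs_wrightM_le {α : ℝ} (hα : α ∈ Ioo (0 : ℝ) 1) (K : ℝ) :
    ∃ C, ∀ x, 0 ≤ x → |wrightM α x| ≤ C * rexp (-K * x) := by
  obtain ⟨w, hw, hαw⟩ := exists_isHankelDirection_mul_arg_lt hα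
  obtain ⟨γ, hγ, hrate⟩ :=
    hw.exists_wrightRate_eq hα.1 hαw (show 0 < max K 1 from lt_max_of_lt_right one_pos)
  refine ⟨(∫ s in Ioi (0 : ℝ), ‖hankelRay w γ s‖ ^ (α - 1) * rexp (γ + s * w.re)) / π,
    fun x hx => ?_⟩
  have hnonneg : 0 ≤ ∫ s in Ioi (0 : ℝ), ‖hankelRay w γ s‖ ^ (α - 1) * rexp (γ + s * w.re) :=
    integral_nonneg fun s => by positivity
  rw [hw.wrightM_eq hα.2 hγ, abs_div, abs_of_pos pi_pos, div_mul_eq_mul_div]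
  gcongr
  calc |(wrightIntegral α w γ x).im| ≤ ‖wrightIntegral α w γ x‖ := Complex.abs_im_le_norm _
    _ ≤ _ := hw.norm_wrightIntegral_le hα.1.le hαw hγ hx
    _ ≤ _ := by rw [hrate]; gcongr; exact le_max_left _ _

lemma integrableOn_pow_mul_wrightM {α : ℝ} (hα : α ∈ Ioo (0 : ℝ) 1) (k : ℕ) :
    IntegrableOn (fun x => x ^ k * wrightM α x) (Ioi 0) := by
  obtain ⟨w, hw, hαw⟩ := exists_isHankelDirection_mul_arg_lt hα
  simpa only [IntegrableOn, hw.pow_mul_wrightM_eq hα.2 one_pos, RCLike.im_to_complex] using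
    (hw.integrableOn_pow_mul_wrightIntegral hα.1.le hαw one_pos k).im.div_const π

lemma integral_pow_mul_wrightM {α : ℝ} (hα : α ∈ Ioo (0 : ℝ) 1) (k : ℕ) :
    ∫ x in Ioi (0 : ℝ), x ^ k * wrightM α x = k.factorial / Real.Gamma (α * k + 1) := by
  obtain ⟨w, hw, hαw⟩ := exists_isHankelDirection_mul_arg_lt hα
  have him := integral_im (hw.integrableOn_pow_mul_wrightIntegral hα.1.le hαw one_pos k)
  simp only [RCLike.im_to_complex] at him
  simp only [hw.pow_mul_wrightM_eq hα.2 one_pos]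
  rw [integral_div, him, hw.integral_pow_mul_wrightIntegral hα.1.le hαw one_pos,
    ← Complex.ofReal_natCast, Complex.im_ofReal_mul, hw.im_hankelIntegral_eq one_pos,
    show -(-1 - α * k) = α * k + 1 by ring]
  field_simp

end WrightFunction

section GeometricallyBounded
open Finset

/-- Growth at most geometric: the condition under which the exponential generating function and the
Mittag-Leffler series of a coefficient sequence converge absolutely everywhere. -/
def GeometricallyBounded (b : ℕ → ℝ) : Prop :=
  ∃ C K : ℝ, 0 ≤ C ∧ 0 ≤ K ∧ ∀ k, |b k| ≤ C * K ^ k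

/-- The sequence delayed by one step; on exponential generating functions this is integration
from `0`. -/
def delay (b : ℕ → ℝ) : ℕ → ℝ
  | 0 => 0
  | k + 1 => b k

/-- The binomial transform which multiplies an exponential generating function by
`exp (-c * y)`. -/
noncomputable def twist (c : ℝ) (b : ℕ → ℝ) (k : ℕ) : ℝ :=
  ∑ p ∈ antidiagonal k, (k.choose p.1 : ℝ) * ((-c) ^ p.1 * b p.2)

lemma twist_zero (c : ℝ) (b : ℕ → ℝ) : twist c b 0 = b 0 := by simp [twist]

lemma twist_succ (c : ℝ) (b : ℕ → ℝ) (k : ℕ) :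
    twist c b (k + 1) = twist c (fun k => b (k + 1)) k - c * twist c b k := by
  simp only [twist]
  rw [sum_antidiagonal_choose_succ_mul (fun i j => (-c) ^ i * b j) k, sub_eq_add_neg, mul_sum,
    ← sum_neg_distrib]
  congr 1
  refine sum_congr rfl fun p hp => ?_
  rw [Nat.choose_symm_of_eq_add (by rw [← mem_antidiagonal.mp hp, add_comm]), pow_succ]
  ring

lemma twist_add_mul (c p q : ℝ) (a b : ℕ → ℝ) (k : ℕ) :
    twist c (fun k => p * a k + q * b k) k = p * twist c a k + q * twist c b k := by
  simp only [twist, mul_sum, ← sum_add_distrib]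
  exact sum_congr rfl fun _ _ => by ring

namespace GeometricallyBounded

lemma const (c : ℝ) : GeometricallyBounded fun _ => c :=
  ⟨|c|, 1, abs_nonneg c, zero_le_one, fun k => by rw [one_pow, mul_one]⟩

lemma ite_zero (c : ℝ) : GeometricallyBounded fun k => if k = 0 then c else 0 :=
  ⟨|c|, 1, abs_nonneg c, zero_le_one, fun k => by
    dsimp only; split_ifs <;> simp⟩

lemma natCast : GeometricallyBounded fun k => (k : ℝ) :=
  ⟨1, 2, zero_le_one, zero_le_two, fun k => by
    rw [Nat.abs_cast, one_mul]; exact_mod_cast Nat.lt_two_pow_self.le⟩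

lemma add {a b : ℕ → ℝ} (ha : GeometricallyBounded a) (hb : GeometricallyBounded b) :
    GeometricallyBounded fun k => a k + b k := by
  obtain ⟨C, K, hC, hK, ha⟩ := ha
  obtain ⟨C', K', hC', hK', hb⟩ := hb
  refine ⟨C + C', K + K', by positivity, by positivity, fun k => (abs_add_le _ _).trans ?_⟩
  rw [add_mul]
  exact add_le_add
    ((ha k).trans (by gcongr; exact le_add_of_nonneg_right hK'))
    ((hb k).trans (by gcongr; exact le_add_of_nonneg_left hK))

lemma mul {a b : ℕ → ℝ} (ha : GeometricallyBounded a) (hb : GeometricallyBounded b) :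
    GeometricallyBounded fun k => a k * b k := by
  obtain ⟨C, K, hC, hK, ha⟩ := ha
  obtain ⟨C', K', hC', hK', hb⟩ := hb
  refine ⟨C * C', K * K', by positivity, by positivity, fun k => ?_⟩
  rw [abs_mul, mul_pow, mul_mul_mul_comm]
  exact mul_le_mul (ha k) (hb k) (abs_nonneg _) (by positivity)

lemma const_mul {b : ℕ → ℝ} (hb : GeometricallyBounded b) (c : ℝ) :
    GeometricallyBounded fun k => c * b k := (const c).mul hb

lemma sub {a b : ℕ → ℝ} (ha : GeometricallyBounded a) (hb : GeometricallyBounded b) :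
    GeometricallyBounded fun k => a k - b k := by
  simpa only [neg_one_mul, ← sub_eq_add_neg] using ha.add (hb.const_mul (-1))

lemma comp_succ {b : ℕ → ℝ} (hb : GeometricallyBounded b) :
    GeometricallyBounded fun k => b (k + 1) := by
  obtain ⟨C, K, hC, hK, hb⟩ := hb
  exact ⟨C * K, K, by positivity, hK, fun k => (hb (k + 1)).trans_eq (by rw [pow_succ']; ring)⟩

lemma delay {b : ℕ → ℝ} (hb : GeometricallyBounded b) : GeometricallyBounded (delay b) := by
  obtain ⟨C, K, hC, hK, hb⟩ := hb
  refine ⟨C, K + 1, hC, by positivity, fun k => ?_⟩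
  cases k with
  | zero => simpa [_root_.delay] using hC
  | succ k =>
    calc |b k| ≤ C * K ^ k := hb k
      _ ≤ C * (K + 1) ^ k := by gcongr; linarith
      _ ≤ C * (K + 1) ^ (k + 1) := by gcongr <;> linarith

lemma twist {b : ℕ → ℝ} (hb : GeometricallyBounded b) (c : ℝ) :
    GeometricallyBounded (twist c b) := by
  obtain ⟨C, K, hC, hK, hb⟩ := hb
  refine ⟨C, |c| + K, hC, by positivity, fun k => ?_⟩
  rw [(Commute.all _ _).add_pow', mul_sum]
  refine (abs_sum_le_sum_abs _ _).trans (sum_le_sum fun p _ => ?_)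
  rw [abs_mul, abs_mul, abs_pow, abs_neg, Nat.abs_cast, nsmul_eq_mul]
  calc (k.choose p.1 : ℝ) * (|c| ^ p.1 * |b p.2|)
      ≤ (k.choose p.1 : ℝ) * (|c| ^ p.1 * (C * K ^ p.2)) := by gcongr; exact hb _
    _ = _ := by ring

end GeometricallyBounded

end GeometricallyBounded

section ExponentialGeneratingFunction
open Finset

/-- The exponential generating function of the coefficient sequence `b`. -/
noncomputable def egf (b : ℕ → ℝ) (y : ℝ) : ℝ := ∑' k : ℕ, b k * y ^ k / k.factorial

lemma hasSum_pow_div_factorial (x : ℝ) : HasSum (fun k : ℕ => x ^ k / k.factorial) (rexp x) := by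
  rw [Real.exp_eq_exp_ℝ]
  exact NormedSpace.expSeries_div_hasSum_exp x

namespace GeometricallyBounded

lemma summable_egf {b : ℕ → ℝ} (hb : GeometricallyBounded b) (y : ℝ) :
    Summable fun k : ℕ => b k * y ^ k / k.factorial := by
  obtain ⟨C, K, hC, hK, hb⟩ := hb
  refine Summable.of_norm_bounded ((hasSum_pow_div_factorial (K * |y|)).summable.mul_left C)
    fun k => ?_
  rw [norm_div, norm_mul, norm_pow, Real.norm_eq_abs, Real.norm_eq_abs, Real.norm_eq_abs,
    Nat.abs_cast, mul_pow, mul_div_assoc, mul_div_assoc, ← mul_assoc]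
  gcongr
  exact hb k

lemma hasSum_egf {b : ℕ → ℝ} (hb : GeometricallyBounded b) (y : ℝ) :
    HasSum (fun k : ℕ => b k * y ^ k / k.factorial) (egf b y) := (hb.summable_egf y).hasSum

lemma exp_mul_egf {b : ℕ → ℝ} (hb : GeometricallyBounded b) (c y : ℝ) :
    rexp (-c * y) * egf b y = egf (_root_.twist c b) y := by
  rw [← (hasSum_pow_div_factorial (-c * y)).tsum_eq, egf,
    tsum_mul_tsum_eq_tsum_sum_antidiagonal_of_summable_norm
      (hasSum_pow_div_factorial (-c * y)).summable.norm (hb.summable_egf y).norm]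
  refine tsum_congr fun k => ?_
  rw [_root_.twist, sum_mul, sum_div]
  refine sum_congr rfl fun p hp => ?_
  obtain rfl := mem_antidiagonal.mp hp
  have hchoose : ((p.1 + p.2).choose p.2 : ℝ) ≠ 0 :=
    Nat.cast_ne_zero.mpr (Nat.choose_pos (Nat.le_add_left _ _)).ne'
  rw [← Nat.add_choose_mul_factorial_mul_factorial p.1 p.2, Nat.choose_symm_add]
  push_cast
  rw [mul_pow, pow_add]
  field_simp

lemma integral_egf {b : ℕ → ℝ} (hb : GeometricallyBounded b) {y : ℝ} (hy : 0 ≤ y) :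
    ∫ u in (0 : ℝ)..y, egf b u = egf (_root_.delay b) y := by
  have hbound := (hb.summable_egf y).norm
  have hsum := intervalIntegral.hasSum_integral_of_dominated_convergence (μ := volume) (a := 0)
    (b := y) (F := fun (k : ℕ) u => b k * u ^ k / k.factorial)
    (fun k _ => ‖b k * y ^ k / k.factorial‖)
    (fun k => (Continuous.aestronglyMeasurable (by fun_prop)))
    (fun k => Filter.Eventually.of_forall fun u hu => ?_)
    (Filter.Eventually.of_forall fun _ _ => hbound) intervalIntegrable_const
    (Filter.Eventually.of_forall fun u _ => hb.hasSum_egf u)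
  · rw [← hsum.tsum_eq, egf, (hb.delay.summable_egf y).tsum_eq_zero_add]
    simp only [_root_.delay, zero_mul, zero_div, zero_add]
    refine tsum_congr fun k => ?_
    rw [intervalIntegral.integral_div, intervalIntegral.integral_const_mul, integral_pow,
      Nat.factorial_succ]
    push_cast
    field_simp
    simp
  · rw [Set.uIoc_of_le hy] at hu
    rw [norm_div, norm_div, norm_mul, norm_mul, norm_pow, norm_pow, Real.norm_of_nonneg hu.1.le,
      Real.norm_of_nonneg hy]
    gcongr
    exacts [hu.1.le, hu.2]

lemma egf_sub {a b : ℕ → ℝ} (ha : GeometricallyBounded a) (hb : GeometricallyBounded b) (y : ℝ) :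
    egf (fun k => a k - b k) y = egf a y - egf b y := by
  rw [← ((ha.hasSum_egf y).sub (hb.hasSum_egf y)).tsum_eq]
  exact tsum_congr fun k => by ring

end GeometricallyBounded

lemma egf_const_mul (c : ℝ) (b : ℕ → ℝ) (y : ℝ) : egf (fun k => c * b k) y = c * egf b y := by
  simp only [egf, mul_assoc, mul_div_assoc, tsum_mul_left]

end ExponentialGeneratingFunction

section MittagLefflerSeries
open Set Filter Topology

/-- The series `∑ b k * t ^ (α k) / Γ(α k + 1)`: the fractional analogue of the exponential
generating function of `b`, on which the Caputo derivative of order `α` shifts coefficients. -/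
noncomputable def mittagLefflerSeries (α : ℝ) (b : ℕ → ℝ) (t : ℝ) : ℝ :=
  ∑' k : ℕ, b k * t ^ (α * k) / Real.Gamma (α * k + 1)

lemma Gamma_mul_natCast_add_one_pos {α : ℝ} (hα : 0 ≤ α) (k : ℕ) :
    0 < Real.Gamma (α * k + 1) :=
  Real.Gamma_pos_of_pos (by positivity)

lemma mittagLefflerSeries_const_mul (α c : ℝ) (b : ℕ → ℝ) (t : ℝ) :
    mittagLefflerSeries α (fun k => c * b k) t = c * mittagLefflerSeries α b t := by
  simp only [mittagLefflerSeries, mul_assoc, mul_div_assoc, tsum_mul_left]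

lemma mittagLefflerSeries_ite_zero (α c t : ℝ) :
    mittagLefflerSeries α (fun k => if k = 0 then c else 0) t = c := by
  rw [mittagLefflerSeries, tsum_eq_single 0 fun k hk => by simp [hk]]
  simp

lemma norm_mul_pow_div_factorial_mul_wrightM_le {b : ℕ → ℝ} {C K T x : ℝ}
    (hb : ∀ k, |b k| ≤ C * K ^ k) (hT : 0 ≤ T) (hx : 0 ≤ x) (α : ℝ) (k : ℕ) :
    ‖b k * T ^ k / k.factorial * (x ^ k * wrightM α x)‖
      ≤ C * ((K * T * x) ^ k / k.factorial) * |wrightM α x| := by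
  rw [norm_mul, norm_div, norm_mul, norm_mul, Real.norm_of_nonneg (pow_nonneg hT k),
    Real.norm_of_nonneg (pow_nonneg hx k), Real.norm_eq_abs, Real.norm_eq_abs, Real.norm_eq_abs,
    Nat.abs_cast]
  calc |b k| * T ^ k / k.factorial * (x ^ k * |wrightM α x|)
      ≤ C * K ^ k * T ^ k / k.factorial * (x ^ k * |wrightM α x|) := by gcongr; exact hb k
    _ = _ := by rw [mul_pow, mul_pow]; ring

lemma integrableOn_exp_mul_abs_wrightM {α : ℝ} (hα : α ∈ Ioo (0 : ℝ) 1) (A : ℝ) :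
    IntegrableOn (fun x => rexp (A * x) * |wrightM α x|) (Ioi 0) := by
  obtain ⟨D, hD⟩ := exists_abs_wrightM_le hα (A + 1)
  have hmeas : AEStronglyMeasurable (wrightM α) (volume.restrict (Ioi 0)) := by
    simpa only [pow_zero, one_mul] using
      (integrableOn_pow_mul_wrightM hα 0).aestronglyMeasurable
  refine ((integrableOn_exp_neg_Ioi 0).const_mul D).mono'
    ((Continuous.aestronglyMeasurable (by fun_prop)).mul hmeas.norm)
    ((ae_restrict_iff' measurableSet_Ioi).mpr (Eventually.of_forall fun x hx => ?_))
  rw [Real.norm_of_nonneg (by positivity)]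
  calc rexp (A * x) * |wrightM α x| ≤ rexp (A * x) * (D * rexp (-(A + 1) * x)) := by
        gcongr; exact hD x (le_of_lt hx)
    _ = D * rexp (-x) := by rw [mul_left_comm, ← Real.exp_add]; ring_nf

namespace GeometricallyBounded

lemma hasSum_integral_wrightM_mul_egf {α : ℝ} (hα : α ∈ Ioo (0 : ℝ) 1) {b : ℕ → ℝ}
    (hb : GeometricallyBounded b) {T : ℝ} (hT : 0 ≤ T) :
    HasSum (fun k : ℕ => b k * T ^ k / Real.Gamma (α * k + 1))
      (∫ x in Ioi (0 : ℝ), wrightM α x * egf b (x * T)) := by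
  obtain ⟨C, K, hC, hK, hbound⟩ := id hb
  have hmajorant : ∀ x, HasSum (fun k : ℕ => C * ((K * T * x) ^ k / k.factorial) * |wrightM α x|)
      (C * rexp (K * T * x) * |wrightM α x|) := fun x =>
    ((hasSum_pow_div_factorial _).mul_left C).mul_right _
  refine (hasSum_integral_of_dominated_convergence (μ := volume.restrict (Ioi (0 : ℝ)))
    (F := fun (k : ℕ) x => b k * T ^ k / k.factorial * (x ^ k * wrightM α x))
    (fun (k : ℕ) x => C * ((K * T * x) ^ k / k.factorial) * |wrightM α x|)
    (fun k => (integrableOn_pow_mul_wrightM hα k).aestronglyMeasurable.const_mul _)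
    (fun k => ?_) (Eventually.of_forall fun x => (hmajorant x).summable) ?_
    (Eventually.of_forall fun x => ?_)).congr_fun fun k => ?_
  · exact (ae_restrict_iff' measurableSet_Ioi).mpr (Eventually.of_forall fun x hx =>
      norm_mul_pow_div_factorial_mul_wrightM_le hbound hT (le_of_lt hx) α k)
  · simp only [(hmajorant _).tsum_eq]
    simpa only [IntegrableOn, mul_assoc] using
      (integrableOn_exp_mul_abs_wrightM hα (K * T)).const_mul C
  · refine ((hb.hasSum_egf (x * T)).mul_left (wrightM α x)).congr_fun fun k => ?_
    rw [mul_pow]; ring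
  · rw [integral_const_mul, integral_pow_mul_wrightM hα k]
    field_simp

lemma summable_mittagLefflerSeries {α : ℝ} (hα : α ∈ Ioo (0 : ℝ) 1) {b : ℕ → ℝ}
    (hb : GeometricallyBounded b) {t : ℝ} (ht : 0 ≤ t) :
    Summable fun k : ℕ => b k * t ^ (α * k) / Real.Gamma (α * k + 1) := by
  simp only [Real.rpow_mul_natCast ht]
  exact (hb.hasSum_integral_wrightM_mul_egf hα (Real.rpow_nonneg ht α)).summable

lemma mittagLefflerSeries_add {α : ℝ} (hα : α ∈ Ioo (0 : ℝ) 1) {a b : ℕ → ℝ}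
    (ha : GeometricallyBounded a) (hb : GeometricallyBounded b) {t : ℝ} (ht : 0 ≤ t) :
    mittagLefflerSeries α (fun k => a k + b k) t
      = mittagLefflerSeries α a t + mittagLefflerSeries α b t := by
  simp only [mittagLefflerSeries, ← (ha.summable_mittagLefflerSeries hα ht).tsum_add
    (hb.summable_mittagLefflerSeries hα ht), add_mul, add_div]

lemma integral_subDensity_mul_egf {α : ℝ} (hα : α ∈ Ioo (0 : ℝ) 1) {b : ℕ → ℝ}
    (hb : GeometricallyBounded b) {t : ℝ} (ht : 0 < t) :
    ∫ y in Ioi (0 : ℝ), subDensity α y t * egf b y = mittagLefflerSeries α b t := by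
  have hT := Real.rpow_pos_of_pos ht α
  have hscale := integral_comp_mul_right_Ioi (fun x => wrightM α x * egf b (x * t ^ α)) 0
    (inv_pos.mpr hT)
  simp only [inv_mul_cancel_right₀ hT.ne', zero_mul, inv_inv, smul_eq_mul] at hscale
  simp only [mittagLefflerSeries, Real.rpow_mul_natCast ht.le]
  rw [(hb.hasSum_integral_wrightM_mul_egf hα hT.le).tsum_eq]
  simp only [subDensity, Real.rpow_neg ht.le, mul_assoc]
  rw [integral_const_mul, hscale, inv_mul_cancel_left₀ hT.ne']

lemma hasDerivAt_mittagLefflerSeries {α : ℝ} (hα : α ∈ Ioo (0 : ℝ) 1) {b : ℕ → ℝ}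
    (hb : GeometricallyBounded b) {u : ℝ} (hu : 0 < u) :
    HasDerivAt (mittagLefflerSeries α b)
      (u⁻¹ * mittagLefflerSeries α (fun k => α * (k * b k)) u) u := by
  have hα0 := hα.1
  have hmem : u ∈ Ioo (u / 2) (2 * u) := ⟨by linarith, by linarith⟩
  have hmajorant := (((natCast.mul hb).const_mul α).summable_mittagLefflerSeries hα
    (show 0 ≤ 2 * u by linarith)).norm.mul_left (u / 2)⁻¹
  refine (hasDerivAt_tsum_of_isPreconnected hmajorant (t := Ioo (u / 2) (2 * u)) isOpen_Ioo
    isPreconnected_Ioo (g := fun k v => b k * v ^ (α * k) / Real.Gamma (α * k + 1))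
    (g' := fun k v => v⁻¹ * (α * (k * b k) * v ^ (α * k) / Real.Gamma (α * k + 1)))
    (fun k v hv => ?_) (fun k v hv => ?_) hmem (hb.summable_mittagLefflerSeries hα hu.le)
    hmem).congr_deriv tsum_mul_left
  · have hv : 0 < v := (half_pos hu).trans hv.1
    refine (((Real.hasDerivAt_rpow_const (p := α * k) (Or.inl hv.ne')).const_mul (b k)).div_const
      (Real.Gamma (α * k + 1))).congr_deriv ?_
    rw [Real.rpow_sub_one hv.ne']
    ring
  · have hv0 : 0 < v := (half_pos hu).trans hv.1
    have hle : v ^ (α * k) ≤ (2 * u) ^ (α * k) := by gcongr; exact hv.2.le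
    rw [norm_mul, norm_inv, Real.norm_of_nonneg hv0.le, norm_div, norm_div,
      norm_mul (α * (k * b k)) (v ^ _), norm_mul (α * (k * b k)) ((2 * u) ^ _),
      Real.norm_of_nonneg (Real.rpow_nonneg hv0.le _),
      Real.norm_of_nonneg (Real.rpow_nonneg (by linarith : 0 ≤ 2 * u) _)]
    gcongr
    exact hv.1.le

lemma hasSum_deriv_mittagLefflerSeries {α : ℝ} (hα : α ∈ Ioo (0 : ℝ) 1) {b : ℕ → ℝ}
    (hb : GeometricallyBounded b) {u : ℝ} (hu : 0 < u) :
    HasSum (fun k : ℕ => b (k + 1) / Real.Gamma (α * (k + 1)) * u ^ (α * (k + 1) - 1))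
      (deriv (mittagLefflerSeries α b) u) := by
  have hα0 := hα.1
  have hsum := (((natCast.mul hb).const_mul α).summable_mittagLefflerSeries hα
    hu.le).hasSum.mul_left u⁻¹
  rw [← hasSum_nat_add_iff' 1, Finset.sum_range_one] at hsum
  simp only [Nat.cast_zero, zero_mul, mul_zero, zero_div, sub_zero] at hsum
  rw [(hb.hasDerivAt_mittagLefflerSeries hα hu).deriv]
  refine hsum.congr_fun fun k => ?_
  have hpos : 0 < α * (k + 1) := by positivity
  have hΓ := Real.Gamma_pos_of_pos hpos
  push_cast
  rw [Real.Gamma_add_one hpos.ne', Real.rpow_sub_one hu.ne']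
  field_simp

end GeometricallyBounded

end MittagLefflerSeries

section CaputoDerivative
open Set Filter Topology

lemma integral_sub_rpow_mul_rpow {a b t : ℝ} (ha : 0 < a) (hb : 0 < b) (ht : 0 < t) :
    ∫ u in (0 : ℝ)..t, (t - u) ^ (b - 1) * u ^ (a - 1)
      = t ^ (a + b - 1) * (Real.Gamma a * Real.Gamma b / Real.Gamma (a + b)) := by
  have hscaled := Complex.betaIntegral_scaled a b ht
  rw [Complex.betaIntegral_eq_Gamma_mul_div _ _ (by simpa) (by simpa)] at hscaled
  have hcomplex : ∫ u in (0 : ℝ)..t, (((t - u) ^ (b - 1) * u ^ (a - 1) : ℝ) : ℂ)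
      = ((t ^ (a + b - 1) * (Real.Gamma a * Real.Gamma b / Real.Gamma (a + b)) : ℝ) : ℂ) := by
    push_cast
    rw [Complex.ofReal_cpow ht.le, ← Complex.Gamma_ofReal, ← Complex.Gamma_ofReal,
      ← Complex.Gamma_ofReal]
    push_cast
    rw [← hscaled]
    refine intervalIntegral.integral_congr fun u hu => ?_
    rw [uIcc_of_le ht.le] at hu
    rw [Complex.ofReal_cpow (by linarith [hu.2]), Complex.ofReal_cpow hu.1]
    push_cast
    ring
  rw [intervalIntegral.integral_ofReal] at hcomplex
  exact_mod_cast hcomplex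

lemma intervalIntegrable_sub_rpow_mul_rpow {a b t : ℝ} (ha : 0 < a) (hb : 0 < b) (ht : 0 < t) :
    IntervalIntegrable (fun u => (t - u) ^ (b - 1) * u ^ (a - 1)) volume 0 t := by
  refine intervalIntegral.intervalIntegrable_of_integral_ne_zero ?_
  rw [integral_sub_rpow_mul_rpow ha hb ht]
  have hΓa := Real.Gamma_pos_of_pos ha
  have hΓb := Real.Gamma_pos_of_pos hb
  have hΓ := Real.Gamma_pos_of_pos (add_pos ha hb)
  positivity

lemma integral_sub_rpow_neg_mul_rpow {α t : ℝ} (hα : α ∈ Ioo (0 : ℝ) 1) (ht : 0 < t) (c : ℝ)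
    (k : ℕ) :
    ∫ u in (0 : ℝ)..t, (t - u) ^ (-α) * (c / Real.Gamma (α * (k + 1)) * u ^ (α * (k + 1) - 1))
      = Real.Gamma (1 - α) * (c * t ^ (α * k) / Real.Gamma (α * k + 1)) := by
  have hα0 := hα.1
  have hpos : 0 < α * (k + 1) := by positivity
  have hΓ := Real.Gamma_pos_of_pos hpos
  have hbeta := integral_sub_rpow_mul_rpow hpos (sub_pos.mpr hα.2) ht
  rw [show 1 - α - 1 = -α by ring, show α * (k + 1) + (1 - α) = α * k + 1 by ring,
    add_sub_cancel_right] at hbeta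
  simp only [mul_left_comm _ (c / _)]
  rw [intervalIntegral.integral_const_mul, hbeta]
  field_simp

lemma integrableOn_sub_rpow_neg_mul_rpow {α t : ℝ} (hα : α ∈ Ioo (0 : ℝ) 1) (ht : 0 < t) (c : ℝ)
    (k : ℕ) :
    IntegrableOn (fun u => (t - u) ^ (-α) * (c * u ^ (α * (k + 1) - 1))) (Ioc 0 t) := by
  have hα0 := hα.1
  have hint := intervalIntegrable_sub_rpow_mul_rpow (show 0 < α * (k + 1) by positivity)
    (sub_pos.mpr hα.2) ht
  rw [show 1 - α - 1 = -α by ring, intervalIntegrable_iff_integrableOn_Ioc_of_le ht.le] at hint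
  simpa only [IntegrableOn, mul_left_comm] using hint.const_mul c

lemma integral_norm_sub_rpow_neg_mul_rpow {α t : ℝ} (hα : α ∈ Ioo (0 : ℝ) 1) (ht : 0 < t) (c : ℝ)
    (k : ℕ) :
    ∫ u in Ioc 0 t, ‖(t - u) ^ (-α) * (c / Real.Gamma (α * (k + 1)) * u ^ (α * (k + 1) - 1))‖
      = Real.Gamma (1 - α) * ‖c * t ^ (α * k) / Real.Gamma (α * k + 1)‖ := by
  have hα0 := hα.1
  have hΓ := Real.Gamma_pos_of_pos (show 0 < α * (k + 1) by positivity)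
  rw [norm_div, norm_mul, Real.norm_of_nonneg (Real.rpow_nonneg ht.le _),
    Real.norm_of_nonneg (Gamma_mul_natCast_add_one_pos hα0.le k).le,
    ← integral_sub_rpow_neg_mul_rpow hα ht, intervalIntegral.integral_of_le ht.le]
  refine setIntegral_congr_fun measurableSet_Ioc fun u hu => ?_
  rw [norm_mul, norm_mul, norm_div, Real.norm_of_nonneg hΓ.le,
    Real.norm_of_nonneg (Real.rpow_nonneg (sub_nonneg.mpr hu.2) _),
    Real.norm_of_nonneg (Real.rpow_nonneg hu.1.le _)]

lemma caputoD_eq_mittagLefflerSeries_succ {α : ℝ} (hα : α ∈ Ioo (0 : ℝ) 1) {b : ℕ → ℝ}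
    (hb : GeometricallyBounded b) {f : ℝ → ℝ}
    (hf : ∀ u, 0 < u → f u = mittagLefflerSeries α b u) {t : ℝ} (ht : 0 < t) :
    caputoD α f t = mittagLefflerSeries α (fun k => b (k + 1)) t := by
  have hΓα := Real.Gamma_pos_of_pos (sub_pos.mpr hα.2)
  have hderiv : ∀ u ∈ Ioc 0 t, HasSum (fun k : ℕ =>
      (t - u) ^ (-α) * (b (k + 1) / Real.Gamma (α * (k + 1)) * u ^ (α * (k + 1) - 1)))
      ((t - u) ^ (-α) * deriv f u) := fun u hu => by
    rw [EventuallyEq.deriv_eq (mem_of_superset (Ioi_mem_nhds hu.1) hf)]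
    exact (hb.hasSum_deriv_mittagLefflerSeries hα hu.1).mul_left _
  have hsum := hasSum_integral_of_summable_integral_norm
    (fun k => integrableOn_sub_rpow_neg_mul_rpow hα ht (b (k + 1) / Real.Gamma (α * (k + 1))) k)
    (by simpa only [integral_norm_sub_rpow_neg_mul_rpow hα ht] using
      (hb.comp_succ.summable_mittagLefflerSeries hα ht.le).norm.mul_left _)
  simp only [← intervalIntegral.integral_of_le ht.le, integral_sub_rpow_neg_mul_rpow hα ht] at hsum
  rw [caputoD, intervalIntegral.integral_of_le ht.le,
    setIntegral_congr_fun measurableSet_Ioc fun u hu => (hderiv u hu).tsum_eq.symm,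
    ← intervalIntegral.integral_of_le ht.le, ← hsum.tsum_eq, tsum_mul_left, mittagLefflerSeries]
  field_simp

end CaputoDerivative

section WalkWeight
open Finset Filter Topology

/-- The coefficient of `s ^ n` in `(lam * s + mu / s) ^ k`: the total weight of the `k`-step
nearest-neighbour walks on `ℤ` from `0` to `n`, up-steps weighted `lam` and down-steps `mu`. -/
def walkWeight (lam mu : ℝ) : ℕ → ℤ → ℝ
  | 0, n => if n = 0 then 1 else 0
  | k + 1, n => lam * walkWeight lam mu k (n - 1) + mu * walkWeight lam mu k (n + 1)

/-- The total weight of the `k`-step walks ending at or below `-l`, that is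
`∑ j ≥ l, walkWeight lam mu k (-j)`. -/
def walkTail (lam mu : ℝ) : ℕ → ℤ → ℝ
  | 0, l => if l ≤ 0 then 1 else 0
  | k + 1, l => lam * walkTail lam mu k (l + 1) + mu * walkTail lam mu k (l - 1)

variable {lam mu : ℝ}

lemma walkWeight_succ (lam mu : ℝ) (k : ℕ) (n : ℤ) : walkWeight lam mu (k + 1) n
    = lam * walkWeight lam mu k (n - 1) + mu * walkWeight lam mu k (n + 1) := rfl

lemma walkTail_succ (lam mu : ℝ) (k : ℕ) (l : ℤ) : walkTail lam mu (k + 1) l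
    = lam * walkTail lam mu k (l + 1) + mu * walkTail lam mu k (l - 1) := rfl

lemma walkTail_sub_walkTail_add_one (lam mu : ℝ) (k : ℕ) (l : ℤ) :
    walkTail lam mu k l - walkTail lam mu k (l + 1) = walkWeight lam mu k (-l) := by
  induction k generalizing l with
  | zero => simp only [walkTail, walkWeight]; split_ifs <;> first | omega | norm_num
  | succ k ih =>
    rw [walkTail_succ, walkTail_succ, walkWeight_succ, show -l - 1 = -(l + 1) by ring,
      show -l + 1 = -(l - 1) by ring, ← ih, ← ih]
    ring_nf

lemma walkWeight_reflect (hlam : lam ≠ 0) (hmu : mu ≠ 0) (k : ℕ) (n : ℤ) :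
    walkWeight lam mu k n = (lam / mu) ^ n * walkWeight lam mu k (-n) := by
  induction k generalizing n with
  | zero => by_cases hn : n = 0 <;> simp [walkWeight, hn]
  | succ k ih =>
    rw [walkWeight_succ, walkWeight_succ, ih (n - 1), ih (n + 1),
      zpow_sub_one₀ (div_ne_zero hlam hmu), zpow_add_one₀ (div_ne_zero hlam hmu), neg_sub',
      neg_add, sub_neg_eq_add, ← sub_eq_add_neg]
    field_simp
    ring

lemma intCast_mul_walkWeight_succ (lam mu : ℝ) (k : ℕ) (n : ℤ) :
    n * walkWeight lam mu (k + 1) n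
      = (k + 1) * (lam * walkWeight lam mu k (n - 1) - mu * walkWeight lam mu k (n + 1)) := by
  induction k generalizing n with
  | zero =>
    simp only [walkWeight]
    obtain rfl | rfl | ⟨h₁, h₂⟩ : n = 1 ∨ n = -1 ∨ n - 1 ≠ 0 ∧ n + 1 ≠ 0 := by omega
    · norm_num
    · norm_num
    · simp [h₁, h₂]
  | succ k ih =>
    have ihDown := ih (n - 1)
    have ihUp := ih (n + 1)
    have hDown := walkWeight_succ lam mu k (n - 1)
    have hUp := walkWeight_succ lam mu k (n + 1)
    rw [sub_add_cancel] at ihDown hDown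
    rw [add_sub_cancel_right] at ihUp hUp
    rw [walkWeight_succ lam mu (k + 1) n]
    push_cast at ihDown ihUp ⊢
    linear_combination lam * ihDown + mu * ihUp - (k + 1) * lam * hDown + (k + 1) * mu * hUp

lemma walkWeight_eq_sum_antidiagonal (lam mu : ℝ) (k : ℕ) (n : ℤ) :
    walkWeight lam mu k n = ∑ p ∈ antidiagonal k,
      (k.choose p.1 : ℝ) * if (p.1 : ℤ) - p.2 = n then lam ^ p.1 * mu ^ p.2 else 0 := by
  induction k generalizing n with
  | zero => simp [walkWeight, eq_comm]
  | succ k ih =>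
    rw [sum_antidiagonal_choose_succ_mul
      (fun u d => if (u : ℤ) - d = n then lam ^ u * mu ^ d else 0), walkWeight_succ, ih, ih,
      mul_sum, mul_sum, add_comm]
    congr 1 <;> refine sum_congr rfl fun p hp => ?_
    · split_ifs <;> first | omega | ring
    · rw [Nat.choose_symm_of_eq_add (HasAntidiagonal.mem_antidiagonal.mp hp).symm]
      split_ifs <;> first | omega | ring

lemma walkWeight_add_sub (lam mu : ℝ) (u d : ℕ) :
    walkWeight lam mu (u + d) (u - d) = (u + d).choose u * (lam ^ u * mu ^ d) := by
  rw [walkWeight_eq_sum_antidiagonal, sum_eq_single (u, d)]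
  · simp
  · rintro ⟨u', d'⟩ hp hne
    rw [HasAntidiagonal.mem_antidiagonal] at hp
    rw [if_neg, mul_zero]
    intro h
    exact hne (Prod.ext (by dsimp only at *; omega) (by dsimp only at *; omega))
  · simp

lemma exists_eq_add_and_eq_sub_of_walkWeight_ne_zero {k : ℕ} {n : ℤ}
    (h : walkWeight lam mu k n ≠ 0) : ∃ u d : ℕ, k = u + d ∧ n = u - d := by
  rw [walkWeight_eq_sum_antidiagonal] at h
  obtain ⟨p, hp, hne⟩ := exists_ne_zero_of_sum_ne_zero h
  refine ⟨p.1, p.2, (HasAntidiagonal.mem_antidiagonal.mp hp).symm, ?_⟩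
  by_contra hn
  exact hne (by rw [if_neg (Ne.symm hn), mul_zero])

lemma walkWeight_nonneg (hlam : 0 ≤ lam) (hmu : 0 ≤ mu) (k : ℕ) (n : ℤ) :
    0 ≤ walkWeight lam mu k n := by
  rw [walkWeight_eq_sum_antidiagonal]
  positivity

lemma walkTail_nonneg (hlam : 0 ≤ lam) (hmu : 0 ≤ mu) (k : ℕ) (l : ℤ) :
    0 ≤ walkTail lam mu k l := by
  induction k generalizing l with
  | zero => rw [walkTail]; split_ifs <;> norm_num
  | succ k ih =>
    exact add_nonneg (mul_nonneg hlam (ih _)) (mul_nonneg hmu (ih _))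

lemma walkTail_le (hlam : 0 ≤ lam) (hmu : 0 ≤ mu) (k : ℕ) (l : ℤ) :
    walkTail lam mu k l ≤ (lam + mu) ^ k := by
  induction k generalizing l with
  | zero => rw [walkTail]; split_ifs <;> norm_num
  | succ k ih =>
    rw [walkTail_succ, pow_succ', add_mul]
    gcongr <;> exact ih _

lemma walkTail_eq_zero_of_lt (lam mu : ℝ) {k : ℕ} {l : ℤ} (h : k < l) :
    walkTail lam mu k l = 0 := by
  induction k generalizing l with
  | zero => rw [walkTail, if_neg (by omega)]
  | succ k ih => rw [walkTail_succ, ih (by omega), ih (by omega), mul_zero, mul_zero, add_zero]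

lemma geometricallyBounded_walkTail (hlam : 0 ≤ lam) (hmu : 0 ≤ mu) (l : ℤ) :
    GeometricallyBounded fun k => walkTail lam mu k l :=
  ⟨1, lam + mu, zero_le_one, add_nonneg hlam hmu, fun k => by
    rw [abs_of_nonneg (walkTail_nonneg hlam hmu k l), one_mul]; exact walkTail_le hlam hmu k l⟩

lemma geometricallyBounded_walkWeight (hlam : 0 ≤ lam) (hmu : 0 ≤ mu) (n : ℤ) :
    GeometricallyBounded fun k => walkWeight lam mu k n := by
  rw [← neg_neg n]
  simp only [← walkTail_sub_walkTail_add_one]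
  exact (geometricallyBounded_walkTail hlam hmu _).sub (geometricallyBounded_walkTail hlam hmu _)

lemma intCast_mul_egf_walkWeight (hlam : 0 ≤ lam) (hmu : 0 ≤ mu) (n : ℤ) (y : ℝ) :
    n * egf (fun k => walkWeight lam mu k n) y
      = y * (lam * egf (fun k => walkWeight lam mu k (n - 1)) y
        - mu * egf (fun k => walkWeight lam mu k (n + 1)) y) := by
  have hright := ((((geometricallyBounded_walkWeight hlam hmu (n - 1)).hasSum_egf y).mul_left
    lam).sub (((geometricallyBounded_walkWeight hlam hmu (n + 1)).hasSum_egf y).mul_left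
    mu)).mul_left y
  have hleft := ((geometricallyBounded_walkWeight hlam hmu n).hasSum_egf y).mul_left (n : ℝ)
  have hzero : (n : ℝ) * walkWeight lam mu 0 n = 0 := by
    by_cases hn : n = 0 <;> simp [walkWeight, hn]
  rw [← hright.tsum_eq, ← hleft.tsum_eq, hleft.summable.tsum_eq_zero_add, mul_div_assoc,
    ← mul_assoc, hzero, zero_mul, zero_add]
  refine tsum_congr fun k => ?_
  rw [mul_div_assoc, ← mul_assoc, intCast_mul_walkWeight_succ, Nat.factorial_succ, pow_succ']
  push_cast
  field_simp

lemma tendsto_egf_walkTail (hlam : 0 ≤ lam) (hmu : 0 ≤ mu) (l : ℤ) {y : ℝ} (hy : 0 ≤ y) :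
    Tendsto (fun N : ℕ => egf (fun k => walkTail lam mu k (l + N)) y) atTop (𝓝 0) := by
  rw [← tsum_zero (α := ℝ) (β := ℕ)]
  refine tendsto_tsum_of_dominated_convergence
    (hasSum_pow_div_factorial ((lam + mu) * y)).summable (fun k => ?_)
    (Eventually.of_forall fun N k => ?_)
  · refine tendsto_const_nhds.congr' ?_
    filter_upwards [eventually_gt_atTop (k - l).toNat] with N hN
    rw [walkTail_eq_zero_of_lt lam mu (by omega), zero_mul, zero_div]
  · have htail := walkTail_nonneg hlam hmu k (l + N)
    rw [Real.norm_of_nonneg (by positivity), mul_pow]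
    gcongr
    exact walkTail_le hlam hmu k _

lemma hasSum_egf_walkWeight_neg (hlam : 0 ≤ lam) (hmu : 0 ≤ mu) (l : ℤ) {y : ℝ} (hy : 0 ≤ y) :
    HasSum (fun j : ℕ => egf (fun k => walkWeight lam mu k (-(l + j))) y)
      (egf (fun k => walkTail lam mu k l) y) := by
  have hnonneg : ∀ j : ℕ, 0 ≤ egf (fun k => walkWeight lam mu k (-(l + j))) y := fun j =>
    tsum_nonneg fun k => by
      have := walkWeight_nonneg hlam hmu k (-(l + j))
      positivity
  rw [hasSum_iff_tendsto_nat_of_nonneg hnonneg]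
  have htelescope : ∀ N : ℕ, ∑ j ∈ range N, egf (fun k => walkWeight lam mu k (-(l + j))) y
      = egf (fun k => walkTail lam mu k l) y - egf (fun k => walkTail lam mu k (l + N)) y := by
    intro N
    simp only [← walkTail_sub_walkTail_add_one, add_assoc l,
      (geometricallyBounded_walkTail hlam hmu _).egf_sub
      (geometricallyBounded_walkTail hlam hmu _)]
    simpa using sum_range_sub' (fun j : ℕ => egf (fun k => walkTail lam mu k (l + j)) y) N
  simp only [htelescope]
  simpa using (tendsto_egf_walkTail hlam hmu l hy).const_sub _

end WalkWeight

section Bessel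

lemma besselI_natCast (n : ℕ) (x : ℝ) :
    besselI n (2 * x) = ∑' m : ℕ, x ^ (2 * m + n) / (m.factorial * (m + n).factorial) := by
  refine tsum_congr fun m => ?_
  rw [Int.cast_natCast, ← Nat.cast_add, Real.Gamma_nat_eq_factorial,
    mul_div_cancel_left₀ _ (two_ne_zero)]
  norm_cast
  ring

lemma besselI_neg_natCast (n : ℕ) (x : ℝ) : besselI (-n) x = besselI n x := by
  have hinj : Function.Injective fun m : ℕ => m + n := add_left_injective n
  rw [besselI, besselI, ← hinj.tsum_eq]
  · refine tsum_congr fun m => ?_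
    rw [show ((m + n : ℕ) : ℝ) + ((-n : ℤ) : ℝ) + 1 = m + 1 by push_cast; ring,
      show (m : ℝ) + ((n : ℤ) : ℝ) + 1 = (m + n : ℕ) + 1 by push_cast; ring,
      Real.Gamma_nat_eq_factorial, Real.Gamma_nat_eq_factorial,
      show 2 * ((m + n : ℕ) : ℤ) + -n = 2 * m + n by push_cast; ring]
    ring
  · -- for `m < n` the coefficient vanishes because `m - n + 1` is a pole of `Γ`
    intro m hm
    by_contra hrange
    have hlt : m < n := by
      by_contra! hle
      exact hrange ⟨m - n, Nat.sub_add_cancel hle⟩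
    have hΓ : Real.Gamma ((m : ℝ) + ((-n : ℤ) : ℝ) + 1) = 0 := by
      refine (Real.Gamma_eq_zero_iff _).mpr ⟨n - 1 - m, ?_⟩
      rw [Nat.sub_sub, Nat.cast_sub (by omega)]
      push_cast
      ring
    exact hm (by simp only [hΓ, mul_zero, div_zero, zero_mul])

lemma besselI_neg (ν : ℤ) (x : ℝ) : besselI (-ν) x = besselI ν x := by
  obtain ⟨n, rfl | rfl⟩ := ν.eq_nat_or_neg
  · exact besselI_neg_natCast n x
  · rw [neg_neg, besselI_neg_natCast]

variable {lam mu : ℝ}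

lemma sqrt_div_ne_zero (hlam : 0 < lam) (hmu : 0 < mu) : √(lam / mu) ≠ 0 :=
  (Real.sqrt_pos.mpr (div_pos hlam hmu)).ne'

lemma sqrt_mul_eq_sqrt_div_mul (lam : ℝ) (hmu : 0 ≤ mu) : √(lam * mu) = √(lam / mu) * mu := by
  rcases hmu.eq_or_lt with rfl | hmu
  · simp
  · rw [show lam * mu = lam / mu * mu ^ 2 by field_simp, Real.sqrt_mul' _ (sq_nonneg _),
      Real.sqrt_sq hmu.le]

lemma zpow_div_eq_sqrt_zpow (hlam : 0 < lam) (hmu : 0 < mu) (n : ℤ) :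
    (lam / mu) ^ n = √(lam / mu) ^ (2 * n) := by
  rw [zpow_mul, zpow_ofNat, Real.sq_sqrt (div_pos hlam hmu).le]

lemma egf_walkWeight_natCast (hlam : 0 < lam) (hmu : 0 < mu) (n : ℕ) (y : ℝ) :
    egf (fun k => walkWeight lam mu k n) y
      = √(lam / mu) ^ n * besselI n (2 * √(lam * mu) * y) := by
  have hinj : Function.Injective fun m : ℕ => m + n + m := fun a b h => by
    dsimp only at h; omega
  rw [mul_assoc 2, besselI_natCast, ← tsum_mul_left, egf, ← hinj.tsum_eq]
  · refine tsum_congr fun m => ?_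
    have hweight := walkWeight_add_sub lam mu (m + n) m
    rw [show ((m + n : ℕ) : ℤ) - m = n by push_cast; ring, Nat.choose_symm_add] at hweight
    have hchoose : ((m + n + m).choose m : ℝ) ≠ 0 :=
      Nat.cast_ne_zero.mpr (Nat.choose_pos (Nat.le_add_left _ _)).ne'
    have hpow : √(lam / mu) ^ n * √(lam * mu) ^ (2 * m + n) = lam ^ (m + n) * mu ^ m := by
      calc √(lam / mu) ^ n * √(lam * mu) ^ (2 * m + n)
          = (√(lam / mu) ^ 2 * mu) ^ (m + n) * mu ^ m := by
            rw [sqrt_mul_eq_sqrt_div_mul lam hmu.le]; ring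
        _ = lam ^ (m + n) * mu ^ m := by
            rw [Real.sq_sqrt (div_pos hlam hmu).le, div_mul_cancel₀ _ hmu.ne']
    rw [hweight, ← hpow, ← Nat.add_choose_mul_factorial_mul_factorial (m + n) m]
    push_cast
    rw [mul_pow]
    field_simp
    ring
  · intro k hk
    obtain ⟨u, d, rfl, hud⟩ := exists_eq_add_and_eq_sub_of_walkWeight_ne_zero
      (left_ne_zero_of_mul (left_ne_zero_of_mul hk))
    exact ⟨d, by dsimp only; omega⟩

lemma egf_walkWeight (hlam : 0 < lam) (hmu : 0 < mu) (ν : ℤ) (y : ℝ) :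
    egf (fun k => walkWeight lam mu k ν) y
      = √(lam / mu) ^ ν * besselI ν (2 * √(lam * mu) * y) := by
  obtain ⟨n, rfl | rfl⟩ := ν.eq_nat_or_neg
  · rw [egf_walkWeight_natCast hlam hmu, zpow_natCast]
  · simp only [walkWeight_reflect hlam.ne' hmu.ne' _ (-(n : ℤ)), neg_neg]
    rw [egf_const_mul, egf_walkWeight_natCast hlam hmu, besselI_neg,
      zpow_div_eq_sqrt_zpow hlam hmu, ← mul_assoc, ← zpow_natCast,
      ← zpow_add₀ (sqrt_div_ne_zero hlam hmu)]
    ring_nf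

lemma besselI_div_sqrt_zpow (hlam : 0 < lam) (hmu : 0 < mu) (ν : ℤ) (y : ℝ) :
    besselI ν (2 * √(lam * mu) * y) / √(lam / mu) ^ ν
      = egf (fun k => walkWeight lam mu k (-ν)) y := by
  rw [egf_walkWeight hlam hmu, besselI_neg, zpow_neg, div_eq_inv_mul]

end Bessel

section QueueWeight

variable {lam mu : ℝ}

/-- The walks counted by the image terms which correct the free walk from `i` to `n` for the
boundary at `0` of the M/M/1 queue. -/
noncomputable def imageWeight (lam mu : ℝ) (i n k : ℕ) : ℝ :=
  (lam / mu) ^ n *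
    (walkTail lam mu k (n + i + 1) - lam / mu * walkTail lam mu k (n + i + 2))

/-- The Taylor coefficients in `y` of `exp ((lam + mu) * y)` times the probability that the M/M/1
queue without catastrophes, started from `i`, is in state `n` at time `y`. -/
noncomputable def queueWeight (lam mu : ℝ) (i n k : ℕ) : ℝ :=
  walkWeight lam mu k (n - i) + imageWeight lam mu i n k

lemma queueWeight_empty (lam mu : ℝ) (i k : ℕ) :
    queueWeight lam mu i 0 k = walkTail lam mu k i - lam / mu * walkTail lam mu k (i + 2) := by
  have htail := walkTail_sub_walkTail_add_one lam mu k i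
  simp only [queueWeight, imageWeight, Nat.cast_zero, zero_sub, zero_add, pow_zero, one_mul]
  linear_combination -htail

lemma queueWeight_initial (lam mu : ℝ) (n : ℕ) :
    queueWeight lam mu 0 n 0 = if n = 0 then 1 else 0 := by
  have h₁ : ¬(n : ℤ) + 1 ≤ 0 := by omega
  have h₂ : ¬(n : ℤ) + 2 ≤ 0 := by omega
  simp [queueWeight, imageWeight, walkWeight, walkTail, h₁, h₂]

lemma queueWeight_succ_succ (hmu : mu ≠ 0) (i n k : ℕ) :
    queueWeight lam mu i (n + 1) (k + 1)
      = lam * queueWeight lam mu i n k + mu * queueWeight lam mu i (n + 2) k := by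
  simp only [queueWeight, imageWeight, walkTail_succ, walkWeight_succ]
  push_cast
  rw [show (n : ℤ) + 1 - i - 1 = n - i by ring, show (n : ℤ) + 1 - i + 1 = n + 2 - i by ring,
    show (n : ℤ) + 1 + i + 1 + 1 = n + i + 3 by ring,
    show (n : ℤ) + 1 + i + 1 - 1 = n + i + 1 by ring,
    show (n : ℤ) + 1 + i + 2 + 1 = n + i + 4 by ring,
    show (n : ℤ) + 1 + i + 2 - 1 = n + i + 2 by ring,
    show (n : ℤ) + 2 + i + 1 = n + i + 3 by ring, show (n : ℤ) + 2 + i + 2 = n + i + 4 by ring]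
  obtain ⟨r, rfl⟩ : ∃ r, lam = r * mu := ⟨lam / mu, by field_simp⟩
  rw [mul_div_cancel_right₀ _ hmu]
  ring

lemma queueWeight_zero_succ (hmu : mu ≠ 0) (i k : ℕ) :
    queueWeight lam mu i 0 (k + 1)
      = mu * queueWeight lam mu i 0 k + mu * queueWeight lam mu i 1 k := by
  rw [queueWeight_empty, queueWeight_empty, queueWeight, imageWeight, walkTail_succ, walkTail_succ,
    ← neg_neg ((1 : ℕ) - (i : ℤ)), ← walkTail_sub_walkTail_add_one]
  push_cast
  rw [show -(1 - (i : ℤ)) = i - 1 by ring, show (i : ℤ) - 1 + 1 = i by ring,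
    show (i : ℤ) + 2 + 1 = i + 3 by ring, show (i : ℤ) + 2 - 1 = i + 1 by ring,
    show 1 + (i : ℤ) + 1 = i + 2 by ring, show 1 + (i : ℤ) + 2 = i + 3 by ring]
  field_simp
  ring

lemma queueWeight_detailed_balance (hlam : lam ≠ 0) (hmu : mu ≠ 0) (n k : ℕ) :
    queueWeight lam mu 0 n k = (lam / mu) ^ n * queueWeight lam mu n 0 k := by
  have htail := walkTail_sub_walkTail_add_one lam mu k n
  rw [queueWeight_empty, queueWeight, imageWeight, walkWeight_reflect hlam hmu]
  push_cast
  rw [sub_zero, ← htail, zpow_natCast, add_zero]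
  ring

lemma geometricallyBounded_imageWeight (hlam : 0 ≤ lam) (hmu : 0 ≤ mu) (i n : ℕ) :
    GeometricallyBounded (imageWeight lam mu i n) :=
  ((geometricallyBounded_walkTail hlam hmu _).sub
    ((geometricallyBounded_walkTail hlam hmu _).const_mul _)).const_mul _

lemma geometricallyBounded_queueWeight (hlam : 0 ≤ lam) (hmu : 0 ≤ mu) (i n : ℕ) :
    GeometricallyBounded (queueWeight lam mu i n) :=
  (geometricallyBounded_walkWeight hlam hmu _).add (geometricallyBounded_imageWeight hlam hmu i n)

lemma tsum_mul_besselI_div_sqrt_pow (hlam : 0 < lam) (hmu : 0 < mu) (n : ℕ) {y : ℝ}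
    (hy : 0 ≤ y) :
    ∑' k : ℕ, ((n : ℝ) + k + 1) * besselI ((n : ℤ) + k + 1) (2 * √(lam * mu) * y)
        / √(lam / mu) ^ (n + k + 1)
      = y * (mu * egf (queueWeight lam mu n 0) y) := by
  have hsum := (((hasSum_egf_walkWeight_neg hlam.le hmu.le n hy).mul_left mu).sub
    ((hasSum_egf_walkWeight_neg hlam.le hmu.le (n + 2) hy).mul_left lam)).mul_left y
  have hempty : mu * egf (queueWeight lam mu n 0) y
      = mu * egf (fun k => walkTail lam mu k n) y
        - lam * egf (fun k => walkTail lam mu k (n + 2)) y := by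
    simp only [funext (queueWeight_empty lam mu n)]
    rw [(geometricallyBounded_walkTail hlam.le hmu.le _).egf_sub
      ((geometricallyBounded_walkTail hlam.le hmu.le _).const_mul _), egf_const_mul]
    field_simp
  rw [hempty, ← hsum.tsum_eq]
  refine tsum_congr fun k => ?_
  have hbessel := besselI_div_sqrt_zpow hlam hmu (n + k + 1) y
  have hmul := intCast_mul_egf_walkWeight hlam.le hmu.le (-(n + k + 1)) y
  rw [show -((n : ℤ) + k + 1) - 1 = -(n + 2 + k) by ring,
    show -((n : ℤ) + k + 1) + 1 = -(n + k) by ring] at hmul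
  push_cast at hmul
  rw [mul_div_assoc, ← zpow_natCast]
  push_cast
  rw [hbessel]
  linear_combination -hmul

lemma tsum_besselI_sub_besselI (hlam : 0 < lam) (hmu : 0 < mu) (i n : ℕ) {y : ℝ} (hy : 0 ≤ y) :
    ∑' m : ℕ, (besselI ((m : ℤ) + n + i + 1) (2 * √(lam * mu) * y)
          / √(lam / mu) ^ ((m : ℤ) - n + i + 1)
        - besselI ((m : ℤ) + n + i + 2) (2 * √(lam * mu) * y)
          / √(lam / mu) ^ ((m : ℤ) - n + i))
      = egf (imageWeight lam mu i n) y := by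
  have hρ := sqrt_div_ne_zero hlam hmu
  have hsum := ((hasSum_egf_walkWeight_neg hlam.le hmu.le (n + i + 1) hy).sub
    ((hasSum_egf_walkWeight_neg hlam.le hmu.le (n + i + 2) hy).mul_left (lam / mu))).mul_left
    ((lam / mu) ^ n)
  have hegf : egf (imageWeight lam mu i n) y = (lam / mu) ^ n *
      (egf (fun k => walkTail lam mu k (n + i + 1)) y
        - lam / mu * egf (fun k => walkTail lam mu k (n + i + 2)) y) := by
    rw [← egf_const_mul (lam / mu), ← (geometricallyBounded_walkTail hlam.le hmu.le _).egf_sub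
      ((geometricallyBounded_walkTail hlam.le hmu.le _).const_mul _), ← egf_const_mul]
    rfl
  have hratio : lam / mu = √(lam / mu) ^ 2 := (Real.sq_sqrt (div_pos hlam hmu).le).symm
  rw [hegf, ← hsum.tsum_eq]
  refine tsum_congr fun m => ?_
  rw [show -((n : ℤ) + i + 1 + m) = -((m : ℤ) + n + i + 1) by ring,
    show -((n : ℤ) + i + 2 + m) = -((m : ℤ) + n + i + 2) by ring,
    ← besselI_div_sqrt_zpow hlam hmu, ← besselI_div_sqrt_zpow hlam hmu]
  generalize √(lam / mu) = ρ at hρ hratio ⊢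
  rw [hratio, ← pow_mul, ← zpow_natCast _ (2 * n),
    show (m : ℤ) - n + i + 1 = (m + n + i + 1) - (2 * n : ℕ) by push_cast; ring,
    show (m : ℤ) - n + i = (m + n + i + 2) - (2 * n : ℕ) - 2 by push_cast; ring,
    zpow_sub₀ hρ, zpow_sub₀ hρ, zpow_sub₀ hρ, zpow_ofNat]
  field_simp

end QueueWeight

section CatastropheQueue

variable {α lam mu xi : ℝ}

lemma twist_succ_of_recurrence {p q : ℝ} {a a₁ a₂ : ℕ → ℝ}
    (h : ∀ k, a (k + 1) = p * a₁ k + q * a₂ k) (c : ℝ) (k : ℕ) :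
    twist c a (k + 1) = -c * twist c a k + p * twist c a₁ k + q * twist c a₂ k := by
  rw [twist_succ, funext h, twist_add_mul]
  ring

lemma delay_twist_succ_of_recurrence {p q : ℝ} {a a₁ a₂ : ℕ → ℝ}
    (h : ∀ k, a (k + 1) = p * a₁ k + q * a₂ k) (c : ℝ) (k : ℕ) :
    delay (twist c a) (k + 1) = -c * delay (twist c a) k + p * delay (twist c a₁) k
      + q * delay (twist c a₂) k + if k = 0 then a 0 else 0 := by
  cases k with
  | zero => simp [delay, twist_zero]
  | succ k => simp [delay, twist_succ_of_recurrence h]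

/-- The fractional Taylor coefficients in `t` of the probability that the fractional M/M/1 queue
with catastrophes, started from `i`, is in state `n` at time `t`. -/
noncomputable def catastropheQueueCoeff (lam mu xi : ℝ) (i n k : ℕ) : ℝ :=
  twist (lam + mu + xi) (queueWeight lam mu i n) k
    + xi * delay (twist (lam + mu + xi) (queueWeight lam mu 0 n)) k

lemma catastropheQueueCoeff_succ_succ (hmu : mu ≠ 0) (xi : ℝ) (i n k : ℕ) :
    catastropheQueueCoeff lam mu xi i (n + 1) (k + 1)
      = -(lam + mu + xi) * catastropheQueueCoeff lam mu xi i (n + 1) k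
        + lam * catastropheQueueCoeff lam mu xi i n k
        + mu * catastropheQueueCoeff lam mu xi i (n + 2) k := by
  simp only [catastropheQueueCoeff,
    twist_succ_of_recurrence (queueWeight_succ_succ hmu i n),
    delay_twist_succ_of_recurrence (queueWeight_succ_succ hmu 0 n), queueWeight_initial,
    n.succ_ne_zero, if_false, ite_self]
  ring

lemma catastropheQueueCoeff_zero_succ (hmu : mu ≠ 0) (i k : ℕ) :
    catastropheQueueCoeff lam mu xi i 0 (k + 1)
      = -(lam + xi) * catastropheQueueCoeff lam mu xi i 0 k
        + mu * catastropheQueueCoeff lam mu xi i 1 k + if k = 0 then xi else 0 := by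
  simp only [catastropheQueueCoeff, twist_succ_of_recurrence (queueWeight_zero_succ hmu i),
    delay_twist_succ_of_recurrence (queueWeight_zero_succ hmu 0), queueWeight_initial, if_true]
  split_ifs <;> ring

lemma geometricallyBounded_catastropheQueueCoeff (hlam : 0 ≤ lam) (hmu : 0 ≤ mu) (xi : ℝ)
    (i n : ℕ) : GeometricallyBounded (catastropheQueueCoeff lam mu xi i n) :=
  ((geometricallyBounded_queueWeight hlam hmu i n).twist _).add
    (((geometricallyBounded_queueWeight hlam hmu 0 n).twist _).delay.const_mul xi)

lemma mittagLefflerSeries_catastropheQueueCoeff (hα : α ∈ Set.Ioo (0 : ℝ) 1) (hlam : 0 ≤ lam)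
    (hmu : 0 ≤ mu) (xi : ℝ) (i n : ℕ) {t : ℝ} (ht : 0 ≤ t) :
    mittagLefflerSeries α (catastropheQueueCoeff lam mu xi i n) t
      = mittagLefflerSeries α (twist (lam + mu + xi) (queueWeight lam mu i n)) t
        + xi * mittagLefflerSeries α
            (delay (twist (lam + mu + xi) (queueWeight lam mu 0 n))) t := by
  rw [← mittagLefflerSeries_const_mul, ← ((geometricallyBounded_queueWeight hlam hmu i n).twist
    _).mittagLefflerSeries_add hα
    (((geometricallyBounded_queueWeight hlam hmu 0 n).twist _).delay.const_mul xi) ht]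
  rfl

lemma caputoD_succ_of_eq_mittagLefflerSeries (hα : α ∈ Set.Ioo (0 : ℝ) 1) (hlam : 0 ≤ lam)
    (hmu : 0 < mu) {i : ℕ} {P : ℕ → ℝ → ℝ}
    (hP : ∀ n t, 0 < t → P n t = mittagLefflerSeries α (catastropheQueueCoeff lam mu xi i n) t)
    (n : ℕ) {t : ℝ} (ht : 0 < t) :
    caputoD α (P (n + 1)) t = -(lam + mu + xi) * P (n + 1) t + lam * P n t + mu * P (n + 2) t := by
  have hbound := geometricallyBounded_catastropheQueueCoeff hlam hmu.le xi i
  rw [caputoD_eq_mittagLefflerSeries_succ hα (hbound _) (hP _) ht, hP _ t ht, hP _ t ht, hP _ t ht]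
  simp only [catastropheQueueCoeff_succ_succ hmu.ne']
  rw [(((hbound _).const_mul _).add ((hbound _).const_mul _)).mittagLefflerSeries_add hα
      ((hbound _).const_mul _) ht.le,
    ((hbound _).const_mul _).mittagLefflerSeries_add hα ((hbound _).const_mul _) ht.le]
  simp only [mittagLefflerSeries_const_mul]

lemma caputoD_zero_of_eq_mittagLefflerSeries (hα : α ∈ Set.Ioo (0 : ℝ) 1) (hlam : 0 ≤ lam)
    (hmu : 0 < mu) {i : ℕ} {P : ℕ → ℝ → ℝ}
    (hP : ∀ n t, 0 < t → P n t = mittagLefflerSeries α (catastropheQueueCoeff lam mu xi i n) t)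
    {t : ℝ} (ht : 0 < t) :
    caputoD α (P 0) t = -(lam + xi) * P 0 t + mu * P 1 t + xi := by
  have hbound := geometricallyBounded_catastropheQueueCoeff hlam hmu.le xi i
  rw [caputoD_eq_mittagLefflerSeries_succ hα (hbound _) (hP _) ht, hP _ t ht, hP _ t ht]
  simp only [catastropheQueueCoeff_zero_succ hmu.ne']
  rw [(((hbound _).const_mul _).add ((hbound _).const_mul _)).mittagLefflerSeries_add hα
      (GeometricallyBounded.ite_zero xi) ht.le,
    ((hbound _).const_mul _).mittagLefflerSeries_add hα ((hbound _).const_mul _) ht.le]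
  simp only [mittagLefflerSeries_const_mul, mittagLefflerSeries_ite_zero]

end CatastropheQueue

section SubordinatedIntegrals
open Set

variable {α lam mu : ℝ}

lemma GeometricallyBounded.integral_subDensity_mul_exp_mul_egf (hα : α ∈ Ioo (0 : ℝ) 1)
    {b : ℕ → ℝ} (hb : GeometricallyBounded b) (c : ℝ) {t : ℝ} (ht : 0 < t) :
    ∫ y in Ioi (0 : ℝ), subDensity α y t * (rexp (-c * y) * egf b y)
      = mittagLefflerSeries α (_root_.twist c b) t := by
  simp only [hb.exp_mul_egf]
  exact (hb.twist c).integral_subDensity_mul_egf hα ht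

lemma integral_subDensity_mul_emptyState (hα : α ∈ Ioo (0 : ℝ) 1) (hlam : 0 < lam) (hmu : 0 < mu)
    (c : ℝ) (i : ℕ) {t : ℝ} (ht : 0 < t) :
    ∫ y in Ioi (0 : ℝ), subDensity α y t * (y⁻¹ * rexp (-c * y)) *
        ∑' k : ℕ, ((i : ℝ) + k + 1) * besselI ((i : ℤ) + k + 1) (2 * √(lam * mu) * y)
          / √(lam / mu) ^ (i + k + 1)
      = mu * mittagLefflerSeries α (twist c (queueWeight lam mu i 0)) t := by
  rw [← (geometricallyBounded_queueWeight hlam.le hmu.le i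
    0).integral_subDensity_mul_exp_mul_egf hα c ht, ← integral_const_mul]
  refine setIntegral_congr_fun measurableSet_Ioi fun y hy => ?_
  have hy0 : y ≠ 0 := ne_of_gt hy
  rw [tsum_mul_besselI_div_sqrt_pow hlam hmu i (le_of_lt hy)]
  field_simp

lemma integral_catastropheState (hlam : 0 < lam) (hmu : 0 < mu) (c : ℝ) (n : ℕ) {y : ℝ}
    (hy : 0 ≤ y) :
    ∫ u in (0 : ℝ)..y, (u⁻¹ * rexp (-c * u)) *
        ∑' k : ℕ, ((n : ℝ) + k + 1) * besselI ((n : ℤ) + k + 1) (2 * √(lam * mu) * u)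
          / √(lam / mu) ^ (k + 1)
      = mu / √(lam / mu) ^ n * egf (delay (twist c (queueWeight lam mu 0 n))) y := by
  have hρ := sqrt_div_ne_zero hlam hmu
  have hbound := geometricallyBounded_queueWeight hlam.le hmu.le 0 n
  have hbalance : queueWeight lam mu 0 n = fun k => (lam / mu) ^ n * queueWeight lam mu n 0 k :=
    funext (queueWeight_detailed_balance hlam.ne' hmu.ne' n)
  rw [← (hbound.twist c).integral_egf hy, ← intervalIntegral.integral_const_mul]
  refine intervalIntegral.integral_congr_Ioo_of_le hy fun u hu => ?_
  have hu0 : u ≠ 0 := hu.1.ne'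
  have hratio : (lam / mu) ^ n = √(lam / mu) ^ n * √(lam / mu) ^ n := by
    rw [← mul_pow, Real.mul_self_sqrt (div_pos hlam hmu).le]
  have htsum := tsum_mul_besselI_div_sqrt_pow hlam hmu n hu.1.le
  simp only [pow_add _ n, add_assoc, ← div_div, div_right_comm _ (√(lam / mu) ^ n)] at htsum
  rw [tsum_div_const, div_eq_iff (pow_ne_zero n hρ)] at htsum
  rw [← hbound.exp_mul_egf, hbalance, egf_const_mul, hratio]
  simp only [add_assoc, htsum]
  field_simp

lemma integral_subDensity_mul_catastropheState (hα : α ∈ Ioo (0 : ℝ) 1) (hlam : 0 < lam)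
    (hmu : 0 < mu) (c : ℝ) (n : ℕ) {t : ℝ} (ht : 0 < t) :
    ∫ y in Ioi (0 : ℝ), subDensity α y t * ∫ u in (0 : ℝ)..y, (u⁻¹ * rexp (-c * u)) *
        ∑' k : ℕ, ((n : ℝ) + k + 1) * besselI ((n : ℤ) + k + 1) (2 * √(lam * mu) * u)
          / √(lam / mu) ^ (k + 1)
      = mu / √(lam / mu) ^ n
        * mittagLefflerSeries α (delay (twist c (queueWeight lam mu 0 n))) t := by
  have hbound := geometricallyBounded_queueWeight hlam.le hmu.le 0 n
  rw [← (hbound.twist c).delay.integral_subDensity_mul_egf hα ht, ← integral_const_mul]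
  refine setIntegral_congr_fun measurableSet_Ioi fun y hy => ?_
  rw [integral_catastropheState hlam hmu c n (le_of_lt hy), mul_left_comm]

lemma integral_subDensity_mul_imageState (hα : α ∈ Ioo (0 : ℝ) 1) (hlam : 0 < lam) (hmu : 0 < mu)
    (c : ℝ) (i n : ℕ) {t : ℝ} (ht : 0 < t) :
    ∫ y in Ioi (0 : ℝ), rexp (-c * y) * subDensity α y t *
        ∑' m : ℕ, (besselI ((m : ℤ) + n + i + 1) (2 * √(lam * mu) * y)
              / √(lam / mu) ^ ((m : ℤ) - n + i + 1)
            - besselI ((m : ℤ) + n + i + 2) (2 * √(lam * mu) * y)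
              / √(lam / mu) ^ ((m : ℤ) - n + i))
      = mittagLefflerSeries α (twist c (imageWeight lam mu i n)) t := by
  rw [← (geometricallyBounded_imageWeight hlam.le hmu.le i
    n).integral_subDensity_mul_exp_mul_egf hα c ht]
  refine setIntegral_congr_fun measurableSet_Ioi fun y hy => ?_
  rw [tsum_besselI_sub_besselI hlam hmu i n (le_of_lt hy)]
  ring

lemma integral_subDensity_mul_freeState (hα : α ∈ Ioo (0 : ℝ) 1) (hlam : 0 < lam) (hmu : 0 < mu)
    (c : ℝ) (ν : ℤ) {t : ℝ} (ht : 0 < t) :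
    ∫ y in Ioi (0 : ℝ), √(lam / mu) ^ ν * besselI ν (2 * √(lam * mu) * y)
        * rexp (-c * y) * subDensity α y t
      = mittagLefflerSeries α (twist c fun k => walkWeight lam mu k ν) t := by
  rw [← (geometricallyBounded_walkWeight hlam.le hmu.le
    ν).integral_subDensity_mul_exp_mul_egf hα c ht]
  simp only [egf_walkWeight hlam hmu]
  exact integral_congr_ae (Filter.Eventually.of_forall fun y => by ring)

lemma mittagLefflerSeries_twist_queueWeight (hα : α ∈ Ioo (0 : ℝ) 1) (hlam : 0 ≤ lam)
    (hmu : 0 ≤ mu) (c : ℝ) (i n : ℕ) {t : ℝ} (ht : 0 ≤ t) :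
    mittagLefflerSeries α (twist c (queueWeight lam mu i n)) t
      = mittagLefflerSeries α (twist c (imageWeight lam mu i n)) t
        + mittagLefflerSeries α (twist c fun k => walkWeight lam mu k (n - i)) t := by
  rw [← ((geometricallyBounded_imageWeight hlam hmu i n).twist c).mittagLefflerSeries_add hα
    ((geometricallyBounded_walkWeight hlam hmu (n - i)).twist c) ht]
  have hsplit : queueWeight lam mu i n
      = fun k => 1 * imageWeight lam mu i n k + 1 * walkWeight lam mu k (n - i) := by
    funext k
    rw [queueWeight, one_mul, one_mul, add_comm]
  congr 1
  funext k
  rw [hsplit, twist_add_mul, one_mul, one_mul]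

end SubordinatedIntegrals

theorem stmt3_general (α lam mu xi : ℝ) (hα : α ∈ Set.Ioo (0 : ℝ) 1) (hlam : 0 < lam)
    (hmu : 0 < mu) (i : ℕ)
    (betaf : ℝ → ℝ) (hbeta : ∀ x : ℝ, betaf x = x⁻¹ * Real.exp (-(lam + mu + xi) * x))
    (Pa : ℕ → ℝ → ℝ)
    (hPa0 : ∀ t > (0 : ℝ),
      Pa 0 t
        = (1 / mu) * (∫ y in Set.Ioi (0 : ℝ), subDensity α y t * betaf y *
              ∑' k : ℕ, ((i : ℝ) + k + 1)
                  * besselI ((i : ℤ) + k + 1) (2 * Real.sqrt (lam * mu) * y)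
                  / Real.sqrt (lam / mu) ^ (i + k + 1))
          + (xi / mu) * (∫ y in Set.Ioi (0 : ℝ), subDensity α y t *
              ∫ u in (0 : ℝ)..y, betaf u *
                ∑' k : ℕ, ((k : ℝ) + 1)
                    * besselI ((k : ℤ) + 1) (2 * Real.sqrt (lam * mu) * u)
                    / Real.sqrt (lam / mu) ^ (k + 1)))
    (hPan : ∀ n : ℕ, 1 ≤ n → ∀ t > (0 : ℝ),
      Pa n t
        = xi * Real.sqrt (lam / mu) ^ (n + 1) / Real.sqrt (lam * mu)
              * (∫ y in Set.Ioi (0 : ℝ), subDensity α y t *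
                  ∫ u in (0 : ℝ)..y, betaf u *
                    ∑' k : ℕ, ((n : ℝ) + k + 1)
                        * besselI ((n : ℤ) + k + 1) (2 * Real.sqrt (lam * mu) * u)
                        / Real.sqrt (lam / mu) ^ (k + 1))
          + (∫ y in Set.Ioi (0 : ℝ), Real.exp (-(lam + mu + xi) * y) * subDensity α y t *
              ∑' m : ℕ,
                (besselI ((m : ℤ) + n + i + 1) (2 * Real.sqrt (lam * mu) * y)
                    / Real.sqrt (lam / mu) ^ ((m : ℤ) - n + i + 1)
                  - besselI ((m : ℤ) + n + i + 2) (2 * Real.sqrt (lam * mu) * y)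
                    / Real.sqrt (lam / mu) ^ ((m : ℤ) - n + i)))
          + ∫ y in Set.Ioi (0 : ℝ),
              Real.sqrt (lam / mu) ^ ((n : ℤ) - i)
                * besselI ((n : ℤ) - i) (2 * Real.sqrt (lam * mu) * y)
                * Real.exp (-(lam + mu + xi) * y) * subDensity α y t) :
    (∀ t > (0 : ℝ), caputoD α (Pa 0) t = -(lam + xi) * Pa 0 t + mu * Pa 1 t + xi) ∧
    (∀ n : ℕ, 1 ≤ n → ∀ t > (0 : ℝ),
      caputoD α (Pa n) t
        = -(lam + mu + xi) * Pa n t + lam * Pa (n - 1) t + mu * Pa (n + 1) t) := by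
  simp only [hbeta] at hPa0 hPan
  have hP (n : ℕ) (t : ℝ) (ht : 0 < t) :
      Pa n t = mittagLefflerSeries α (catastropheQueueCoeff lam mu xi i n) t := by
    rw [mittagLefflerSeries_catastropheQueueCoeff hα hlam.le hmu.le xi i n ht.le]
    have hcatastrophe := integral_subDensity_mul_catastropheState hα hlam hmu (lam + mu + xi) n ht
    rcases n.eq_zero_or_pos with rfl | hn
    · simp only [Nat.cast_zero, zero_add, pow_zero, div_one] at hcatastrophe
      rw [hPa0 t ht, integral_subDensity_mul_emptyState hα hlam hmu _ i ht, hcatastrophe]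
      field_simp
    · have hρ := sqrt_div_ne_zero hlam hmu
      rw [hPan n hn t ht, hcatastrophe, integral_subDensity_mul_imageState hα hlam hmu _ i n ht,
        integral_subDensity_mul_freeState hα hlam hmu _ _ ht,
        mittagLefflerSeries_twist_queueWeight hα hlam.le hmu.le _ i n ht.le,
        sqrt_mul_eq_sqrt_div_mul lam hmu.le]
      field_simp
      ring
  refine ⟨fun t ht => caputoD_zero_of_eq_mittagLefflerSeries hα hlam.le hmu hP ht, ?_⟩
  rintro (_ | n) hn t ht
  · omega
  · exact caputoD_succ_of_eq_mittagLefflerSeries hα hlam.le hmu hP n ht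

theorem stmt3 (α lam mu xi : ℝ) (hα : α ∈ Set.Ioo (0:ℝ) 1) (hlam : 0 < lam)
    (hmu : 0 < mu) (hxi : 0 ≤ xi) (i : ℕ)
    (betaf : ℝ → ℝ) (hbeta : ∀ x : ℝ, betaf x = x⁻¹ * Real.exp (-(lam + mu + xi) * x))
    (Pa : ℕ → ℝ → ℝ)
    (hPa0 : ∀ t > (0:ℝ),
      Pa 0 t
        = (1 / mu) * (∫ y in Set.Ioi (0:ℝ), subDensity α y t * betaf y *
              ∑' k : ℕ, ((i : ℝ) + k + 1)
                  * besselI ((i : ℤ) + k + 1) (2 * Real.sqrt (lam * mu) * y)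
                  / Real.sqrt (lam / mu) ^ (i + k + 1))
          + (xi / mu) * (∫ y in Set.Ioi (0:ℝ), subDensity α y t *
              ∫ u in (0:ℝ)..y, betaf u *
                ∑' k : ℕ, ((k : ℝ) + 1)
                    * besselI ((k : ℤ) + 1) (2 * Real.sqrt (lam * mu) * u)
                    / Real.sqrt (lam / mu) ^ (k + 1)))
    (hPan : ∀ n : ℕ, 1 ≤ n → ∀ t > (0:ℝ),
      Pa n t
        = xi * Real.sqrt (lam / mu) ^ (n + 1) / Real.sqrt (lam * mu)
              * (∫ y in Set.Ioi (0:ℝ), subDensity α y t *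
                  ∫ u in (0:ℝ)..y, betaf u *
                    ∑' k : ℕ, ((n : ℝ) + k + 1)
                        * besselI ((n : ℤ) + k + 1) (2 * Real.sqrt (lam * mu) * u)
                        / Real.sqrt (lam / mu) ^ (k + 1))
          + (∫ y in Set.Ioi (0:ℝ), Real.exp (-(lam + mu + xi) * y) * subDensity α y t *
              ∑' m : ℕ,
                (besselI ((m : ℤ) + n + i + 1) (2 * Real.sqrt (lam * mu) * y)
                    / Real.sqrt (lam / mu) ^ ((m : ℤ) - n + i + 1)
                  - besselI ((m : ℤ) + n + i + 2) (2 * Real.sqrt (lam * mu) * y)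
                    / Real.sqrt (lam / mu) ^ ((m : ℤ) - n + i)))
          + ∫ y in Set.Ioi (0:ℝ),
              Real.sqrt (lam / mu) ^ ((n : ℤ) - i)
                * besselI ((n : ℤ) - i) (2 * Real.sqrt (lam * mu) * y)
                * Real.exp (-(lam + mu + xi) * y) * subDensity α y t)
    (hPainit : ∀ n : ℕ, Pa n 0 = if i = n then 1 else 0) :
    (∀ t > (0:ℝ), caputoD α (Pa 0) t = -(lam + xi) * Pa 0 t + mu * Pa 1 t + xi) ∧
    (∀ n : ℕ, 1 ≤ n → ∀ t > (0:ℝ),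
      caputoD α (Pa n) t
        = -(lam + mu + xi) * Pa n t + lam * Pa (n - 1) t + mu * Pa (n + 1) t) := by
  exact stmt3_general α lam mu xi hα hlam hmu i betaf hbeta Pa hPa0 hPan
end

section
/- For every α∈(0,1), every y ≥ 0 and every s > 0, the Laplace transform in t of the inverse α-stable subordinator density satisfies ∫_0^∞ e^{−st} t^{−α} M_α(y t^{−α}) dt = s^{α−1} e^{−y s^α}. -/
open MeasureTheory Real

/-!
By the reflection formula for `Γ`, applied termwise, the density is
`π⁻¹ Im ∫ z ^ (α - 1) * N z * e ^ (t z) dz`, where `N z = e ^ (-y z ^ α)` and `z` runs over a ray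
`arg z = θ` with `π / 2 < θ < π`. Fubini's theorem turns its Laplace transform into
`π⁻¹ Im ∫ z ^ (α - 1) * N z / (s - z) dz`. Split `N z = N s + (N z - N s)`. In the second part the
pole at `s` is gone, so the ray can be rotated onto the positive axis, where the integrand is real
and the imaginary part vanishes. The first part is `N s` times the case `N = 1`, which is the
Laplace transform of `t ^ (-α) / Γ(1 - α)`. The choice `θ = π / (1 + α)` gives both `π / 2 < θ` and
`α θ ≤ π / 2`, so that `|N| ≤ 1` on the sector swept by the rotation.
-/

open Set Filter Topology
open Complex (I slitPlane)

section StripIntegral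

variable {E : Type*} [NormedAddCommGroup E] [NormedSpace ℂ E]

theorem norm_integral_sub_integral_add_mul_I_le {F : ℂ → E} {ψ B₁ B₂ : ℝ} (a b : ℝ)
    (hF : DifferentiableOn ℂ F (Complex.im ⁻¹' uIcc 0 ψ))
    (hB₁ : ∀ φ ∈ uIcc 0 ψ, ‖F (a + φ * I)‖ ≤ B₁) (hB₂ : ∀ φ ∈ uIcc 0 ψ, ‖F (b + φ * I)‖ ≤ B₂) :
    ‖(∫ x in a..b, F x) - ∫ x in a..b, F (x + ψ * I)‖ ≤ (B₁ + B₂) * |ψ| := by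
  have boundary_rect : (∫ x in a..b, F x) - (∫ x in a..b, F (x + ψ * I)) =
      I • (∫ φ in (0 : ℝ)..ψ, F (a + φ * I)) - I • (∫ φ in (0 : ℝ)..ψ, F (b + φ * I)) := by
    have h := Complex.integral_boundary_rect_eq_zero_of_differentiableOn F ⟨a, 0⟩ ⟨b, ψ⟩
      (hF.mono fun z hz => (Complex.mem_reProdIm.1 hz).2)
    simp only [Complex.ofReal_zero, zero_mul, add_zero] at h
    rw [add_sub_assoc, add_eq_zero_iff_eq_neg, neg_sub] at h
    exact h
  have norm_side_le : ∀ (x B : ℝ), (∀ φ ∈ uIcc 0 ψ, ‖F (x + φ * I)‖ ≤ B) →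
      ‖I • ∫ φ in (0 : ℝ)..ψ, F (x + φ * I)‖ ≤ B * |ψ| := fun x B hB => by
    rw [norm_smul, Complex.norm_I, one_mul]
    simpa only [sub_zero] using intervalIntegral.norm_integral_le_of_norm_le_const
      fun φ hφ => hB φ (uIoc_subset_uIcc hφ)
  rw [boundary_rect, add_mul]
  exact (norm_sub_le _ _).trans (add_le_add (norm_side_le a B₁ hB₁) (norm_side_le b B₂ hB₂))

theorem integral_add_mul_I_eq_integral {F : ℂ → E} {ψ : ℝ} {B : ℝ → ℝ}
    (hF : DifferentiableOn ℂ F (Complex.im ⁻¹' uIcc 0 ψ))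
    (hFB : ∀ x : ℝ, ∀ φ ∈ uIcc 0 ψ, ‖F (x + φ * I)‖ ≤ B x) (hB : Integrable B)
    (hB_top : Tendsto B atTop (𝓝 0)) (hB_bot : Tendsto B atBot (𝓝 0)) :
    ∫ x : ℝ, F (x + ψ * I) = ∫ x : ℝ, F x := by
  have integrable_line : ∀ φ ∈ uIcc 0 ψ, Integrable fun x : ℝ => F (x + φ * I) := by
    intro φ hφ
    refine hB.mono' (Continuous.aestronglyMeasurable ?_) (.of_forall fun x => hFB x φ hφ)
    exact hF.continuousOn.comp_continuous (by fun_prop) fun x => by simpa using hφ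
  have integrable_real : Integrable fun x : ℝ => F x := by
    simpa using integrable_line 0 left_mem_uIcc
  have bound_tendsto : Tendsto (fun R => (B (-R) + B R) * |ψ|) atTop (𝓝 0) := by
    simpa using ((hB_bot.comp tendsto_neg_atTop_atBot).add hB_top).mul_const |ψ|
  have truncations_tendsto_zero := squeeze_zero_norm
    (fun R : ℝ => norm_integral_sub_integral_add_mul_I_le (-R) R hF (hFB (-R)) (hFB R))
    bound_tendsto
  have truncations_tendsto :=
    (intervalIntegral_tendsto_integral integrable_real tendsto_neg_atTop_atBot tendsto_id).sub
      (intervalIntegral_tendsto_integral (integrable_line ψ right_mem_uIcc)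
        tendsto_neg_atTop_atBot tendsto_id)
  exact (sub_eq_zero.1 (tendsto_nhds_unique truncations_tendsto truncations_tendsto_zero)).symm

end StripIntegral

section ExpSubstitution

variable {E : Type*} [NormedAddCommGroup E] [NormedSpace ℝ E]

theorem integral_Ioi_zero_eq_integral_exp_smul (g : ℝ → E) :
    ∫ r in Ioi (0 : ℝ), g r = ∫ x, Real.exp x • g (Real.exp x) := by
  have h := integral_image_eq_integral_abs_deriv_smul MeasurableSet.univ
    (fun x _ => (Real.hasDerivAt_exp x).hasDerivWithinAt) Real.exp_injective.injOn g
  simpa [image_univ, Real.range_exp] using h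

theorem integrableOn_Ioi_zero_iff_integrable_exp_smul (g : ℝ → E) :
    IntegrableOn g (Ioi 0) ↔ Integrable fun x => Real.exp x • g (Real.exp x) := by
  have h := integrableOn_image_iff_integrableOn_abs_deriv_smul MeasurableSet.univ
    (fun x _ => (Real.hasDerivAt_exp x).hasDerivWithinAt) Real.exp_injective.injOn g
  simpa [image_univ, Real.range_exp] using h

end ExpSubstitution

/-- The contour integral of `f` from `0` to `∞` along the ray `arg z = θ`. -/
noncomputable def rayIntegral (θ : ℝ) (f : ℂ → ℂ) : ℂ :=
  Complex.exp (θ * I) * ∫ r in Ioi (0 : ℝ), f (r * Complex.exp (θ * I))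

/-- Absolute integrability of `f` along the ray `arg z = θ`, under which `rayIntegral θ f` is a
convergent integral. -/
def RayIntegrable (θ : ℝ) (f : ℂ → ℂ) : Prop :=
  IntegrableOn (fun r : ℝ => f (r * Complex.exp (θ * I))) (Ioi 0)

section RayIntegral

variable {θ : ℝ} {f g : ℂ → ℂ}

theorem rayIntegral_congr (h : ∀ r : ℝ, 0 < r →
    f (r * Complex.exp (θ * I)) = g (r * Complex.exp (θ * I))) :
    rayIntegral θ f = rayIntegral θ g := by
  rw [rayIntegral, rayIntegral, setIntegral_congr_fun measurableSet_Ioi fun r hr => h r hr]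

theorem rayIntegral_const_mul (c : ℂ) (f : ℂ → ℂ) :
    rayIntegral θ (fun z => c * f z) = c * rayIntegral θ f := by
  rw [rayIntegral, rayIntegral, integral_const_mul, mul_left_comm]

theorem rayIntegral_sub (hf : RayIntegrable θ f) (hg : RayIntegrable θ g) :
    rayIntegral θ (fun z => f z - g z) = rayIntegral θ f - rayIntegral θ g := by
  rw [rayIntegral, integral_sub hf hg, mul_sub, rayIntegral, rayIntegral]

theorem RayIntegrable.const_mul (hf : RayIntegrable θ f) (c : ℂ) :
    RayIntegrable θ fun z => c * f z :=
  Integrable.const_mul hf c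

theorem norm_ofReal_mul_exp_mul_I {r : ℝ} (hr : 0 ≤ r) (φ : ℝ) :
    ‖(r : ℂ) * Complex.exp (φ * I)‖ = r := by
  rw [norm_mul, Complex.norm_exp_ofReal_mul_I, mul_one, Complex.norm_of_nonneg hr]

theorem exp_ofReal_add_ofReal_mul_I (x φ : ℝ) :
    Complex.exp (x + φ * I) = (Real.exp x : ℝ) * Complex.exp (φ * I) := by
  rw [Complex.exp_add, Complex.ofReal_exp]

theorem rayIntegral_eq_integral_exp (θ : ℝ) (f : ℂ → ℂ) :
    rayIntegral θ f = ∫ x : ℝ, Complex.exp (x + θ * I) * f (Complex.exp (x + θ * I)) := by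
  rw [rayIntegral, integral_Ioi_zero_eq_integral_exp_smul, ← integral_const_mul]
  refine integral_congr_ae (.of_forall fun x => ?_)
  simp only [exp_ofReal_add_ofReal_mul_I, Complex.real_smul]
  ring

theorem rayIntegral_eq_rayIntegral_zero {B : ℝ → ℝ}
    (hf : ∀ r : ℝ, 0 < r → ∀ φ ∈ uIcc 0 θ, DifferentiableAt ℂ f (r * Complex.exp (φ * I)))
    (hfB : ∀ r : ℝ, 0 < r → ∀ φ ∈ uIcc 0 θ, ‖f (r * Complex.exp (φ * I))‖ ≤ B r)
    (hB : IntegrableOn B (Ioi 0)) (hB_zero : Tendsto (fun r => r * B r) (𝓝[>] 0) (𝓝 0))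
    (hB_top : Tendsto (fun r => r * B r) atTop (𝓝 0)) :
    rayIntegral θ f = rayIntegral 0 f := by
  rw [rayIntegral_eq_integral_exp, rayIntegral_eq_integral_exp]
  simp only [Complex.ofReal_zero, zero_mul, add_zero]
  refine integral_add_mul_I_eq_integral (F := fun w => Complex.exp w * f (Complex.exp w))
    (B := fun x => Real.exp x * B (Real.exp x)) (fun w hw => ?_) (fun x φ hφ => ?_)
    ((integrableOn_Ioi_zero_iff_integrable_exp_smul B).1 hB)
    (hB_top.comp Real.tendsto_exp_atTop) (hB_zero.comp Real.tendsto_exp_atBot_nhdsGT)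
  · have hfw : DifferentiableAt ℂ f (Complex.exp w) := by
      rw [← Complex.re_add_im w, exp_ofReal_add_ofReal_mul_I]
      exact hf _ (Real.exp_pos _) _ hw
    exact (Complex.differentiableAt_exp.mul
      (hfw.comp w Complex.differentiableAt_exp)).differentiableWithinAt
  · rw [exp_ofReal_add_ofReal_mul_I, norm_mul, norm_ofReal_mul_exp_mul_I (Real.exp_pos x).le]
    gcongr
    exact hfB _ (Real.exp_pos x) φ hφ

end RayIntegral

section PolarForm

variable {r φ : ℝ}

theorem ofReal_mul_exp_mul_I_mem_slitPlane (hr : 0 < r) (hφ : φ ∈ Ioo (-π) π) :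
    (r : ℂ) * Complex.exp (φ * I) ∈ slitPlane := by
  have harg : Complex.arg (r * Complex.exp (φ * I)) = φ := by
    rw [Complex.exp_mul_I, Complex.arg_mul_cos_add_sin_mul_I hr ⟨hφ.1, hφ.2.le⟩]
  refine Complex.mem_slitPlane_iff_arg.2 ⟨by rw [harg]; exact hφ.2.ne, ?_⟩
  exact mul_ne_zero (Complex.ofReal_ne_zero.2 hr.ne') (Complex.exp_ne_zero _)

theorem ofReal_mul_exp_mul_I_cpow (hr : 0 < r) (hφ : φ ∈ Ioc (-π) π) (a : ℝ) :
    ((r : ℂ) * Complex.exp (φ * I)) ^ (a : ℂ) = (r ^ a : ℝ) * Complex.exp ((a * φ : ℝ) * I) := by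
  rw [Complex.cpow_ofReal, norm_ofReal_mul_exp_mul_I hr.le, Complex.exp_mul_I φ,
    Complex.arg_mul_cos_add_sin_mul_I hr hφ, mul_comm φ, Complex.exp_mul_I, Complex.ofReal_cos,
    Complex.ofReal_sin]

theorem norm_cpow_ofReal_sub_one (z : ℂ) (a : ℝ) : ‖z ^ ((a : ℂ) - 1)‖ = ‖z‖ ^ (a - 1) := by
  rw [← Complex.norm_cpow_real, Complex.ofReal_sub, Complex.ofReal_one]

theorem norm_exp_mul_ofReal_mul_exp_mul_I (c r φ : ℝ) :
    ‖Complex.exp (c * (r * Complex.exp (φ * I)))‖ = Real.exp (c * (r * Real.cos φ)) := by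
  rw [Complex.norm_exp, Complex.re_ofReal_mul, Complex.re_ofReal_mul,
    Complex.exp_ofReal_mul_I_re]

theorem cos_neg_of_mem_Ioo (hφ : φ ∈ Ioo (π / 2) π) : Real.cos φ < 0 :=
  Real.cos_neg_of_pi_div_two_lt_of_lt hφ.1 (by linarith [hφ.2, Real.pi_pos])

end PolarForm

section Gamma

theorem integrableOn_rpow_sub_one_mul_exp_neg_mul {a b : ℝ} (ha : 0 < a) (hb : 0 < b) :
    IntegrableOn (fun r : ℝ => r ^ (a - 1) * Real.exp (-b * r)) (Ioi 0) := by
  simpa using integrableOn_rpow_mul_exp_neg_mul_rpow (by linarith : -1 < a - 1) one_pos hb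

theorem rayIntegral_zero_cpow_sub_one_mul_exp_neg {a t : ℝ} (ha : 0 < a) (ht : 0 < t) :
    rayIntegral 0 (fun z => z ^ ((a : ℂ) - 1) * Complex.exp (-t * z)) =
      (Real.Gamma a * t ^ (-a) : ℝ) := by
  have gamma_integral := Real.integral_rpow_mul_exp_neg_mul_Ioi ha ht
  rw [one_div, Real.inv_rpow ht.le, ← Real.rpow_neg ht.le, mul_comm] at gamma_integral
  rw [← gamma_integral, ← integral_complex_ofReal, rayIntegral, Complex.ofReal_zero, zero_mul,
    Complex.exp_zero, one_mul]
  refine setIntegral_congr_fun measurableSet_Ioi fun r (hr : 0 < r) => ?_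
  simp only [mul_one]
  push_cast [Complex.ofReal_cpow hr.le]
  rw [neg_mul]

theorem rayIntegral_cpow_sub_one_mul_exp_neg {a t ψ : ℝ} (ha : 0 < a) (ht : 0 < t)
    (hψ : |ψ| < π / 2) :
    rayIntegral ψ (fun z => z ^ ((a : ℂ) - 1) * Complex.exp (-t * z)) =
      (Real.Gamma a * t ^ (-a) : ℝ) := by
  have hc : 0 < t * Real.cos ψ := mul_pos ht (Real.cos_pos_of_mem_Ioo (abs_lt.1 hψ))
  have abs_le_of_mem : ∀ φ ∈ uIcc 0 ψ, |φ| ≤ |ψ| := fun φ hφ => by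
    simpa using abs_sub_left_of_mem_uIcc hφ
  have mul_bound : ∀ r : ℝ, 0 < r → r ^ a * Real.exp (-(t * Real.cos ψ) * r) =
      r * (r ^ (a - 1) * Real.exp (-(t * Real.cos ψ) * r)) := fun r hr => by
    rw [← mul_assoc, Real.rpow_sub_one hr.ne', mul_div_cancel₀ _ hr.ne']
  rw [← rayIntegral_zero_cpow_sub_one_mul_exp_neg ha ht]
  refine rayIntegral_eq_rayIntegral_zero
    (B := fun r => r ^ (a - 1) * Real.exp (-(t * Real.cos ψ) * r)) (fun r hr φ hφ => ?_)
    (fun r hr φ hφ => ?_) (integrableOn_rpow_sub_one_mul_exp_neg_mul ha hc) ?_ ?_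
  · have hslit := ofReal_mul_exp_mul_I_mem_slitPlane hr
      (abs_lt.1 ((abs_le_of_mem φ hφ).trans_lt (by linarith [Real.pi_pos])))
    exact (differentiableAt_id.cpow_const hslit).mul (by fun_prop)
  · have cos_le : Real.cos ψ ≤ Real.cos φ := by
      rw [← Real.cos_abs ψ, ← Real.cos_abs φ]
      exact Real.cos_le_cos_of_nonneg_of_le_pi (abs_nonneg _) (by linarith [Real.pi_pos])
        (abs_le_of_mem φ hφ)
    rw [← Complex.ofReal_neg, norm_mul, norm_cpow_ofReal_sub_one,
      norm_ofReal_mul_exp_mul_I hr.le, norm_exp_mul_ofReal_mul_exp_mul_I]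
    refine mul_le_mul_of_nonneg_left (Real.exp_le_exp.2 ?_) (by positivity)
    linarith [mul_le_mul_of_nonneg_left cos_le (mul_pos ht hr).le]
  · have hcont : ContinuousAt (fun r : ℝ => r ^ a * Real.exp (-(t * Real.cos ψ) * r)) 0 :=
      (Real.continuousAt_rpow_const _ _ (.inr ha.le)).mul (by fun_prop)
    have hlim := hcont.tendsto.mono_left (nhdsWithin_le_nhds (s := Ioi 0))
    rw [Real.zero_rpow ha.ne', zero_mul] at hlim
    exact hlim.congr' (eventually_mem_nhdsWithin.mono mul_bound)
  · exact (tendsto_rpow_mul_exp_neg_mul_atTop_nhds_zero a _ hc).congr'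
      ((eventually_gt_atTop 0).mono mul_bound)

theorem ofReal_mul_exp_mul_I_cpow_eq_mul_sub_pi {r θ : ℝ} (hr : 0 < r) (hθ : θ ∈ Ioc 0 π)
    (b : ℝ) :
    ((r : ℂ) * Complex.exp (θ * I)) ^ (b : ℂ) =
      Complex.exp ((π * b : ℝ) * I) * (r * Complex.exp ((θ - π : ℝ) * I)) ^ (b : ℂ) := by
  have hπ := Real.pi_pos
  rw [ofReal_mul_exp_mul_I_cpow hr ⟨by linarith [hθ.1], hθ.2⟩,
    ofReal_mul_exp_mul_I_cpow hr ⟨by linarith [hθ.1], by linarith [hθ.2]⟩, mul_left_comm,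
    ← Complex.exp_add]
  congr 2
  push_cast
  ring

theorem rayIntegral_cpow_sub_one_mul_exp {a t θ : ℝ} (ha : 0 < a) (ht : 0 < t)
    (hθ : θ ∈ Ioo (π / 2) π) :
    rayIntegral θ (fun z => z ^ ((a : ℂ) - 1) * Complex.exp (t * z)) =
      Complex.exp ((π * a : ℝ) * I) * (Real.Gamma a * t ^ (-a) : ℝ) := by
  have hπ := Real.pi_pos
  have abs_sub_pi_lt : |θ - π| < π / 2 := abs_lt.2 ⟨by linarith [hθ.1], by linarith [hθ.2]⟩
  have exp_sub_pi : Complex.exp ((θ - π : ℝ) * I) = -Complex.exp (θ * I) := by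
    rw [Complex.ofReal_sub, sub_mul, Complex.exp_sub_pi_mul_I]
  have exp_phase : Complex.exp ((π * (a - 1) : ℝ) * I) = -Complex.exp ((π * a : ℝ) * I) := by
    rw [mul_sub_one, Complex.ofReal_sub, sub_mul, Complex.exp_sub_pi_mul_I]
  have integrand_rotate : ∀ r ∈ Ioi (0 : ℝ),
      (r * Complex.exp (θ * I)) ^ ((a : ℂ) - 1) * Complex.exp (t * (r * Complex.exp (θ * I))) =
        -Complex.exp ((π * a : ℝ) * I) * ((r * Complex.exp ((θ - π : ℝ) * I)) ^ ((a : ℂ) - 1) *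
          Complex.exp (-t * (r * Complex.exp ((θ - π : ℝ) * I)))) := by
    intro r hr
    have h := ofReal_mul_exp_mul_I_cpow_eq_mul_sub_pi hr ⟨by linarith [hθ.1], hθ.2.le⟩ (a - 1)
    rw [exp_phase, Complex.ofReal_sub, Complex.ofReal_one] at h
    rw [h, mul_assoc, exp_sub_pi, mul_neg, neg_mul_neg]
  rw [← rayIntegral_cpow_sub_one_mul_exp_neg ha ht abs_sub_pi_lt, rayIntegral, rayIntegral,
    setIntegral_congr_fun measurableSet_Ioi integrand_rotate, integral_const_mul, exp_sub_pi]
  ring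

-- Mathlib's `Γ` vanishes at its poles, so `1 / Γ` takes its true value `0` there.
theorem inv_Gamma_one_sub {a : ℝ} (ha : 0 < a) :
    (Real.Gamma (1 - a))⁻¹ = Real.Gamma a * Real.sin (π * a) / π := by
  have reflection := Real.Gamma_mul_Gamma_one_sub a
  rw [eq_div_of_mul_eq (Real.Gamma_pos_of_pos ha).ne' ((mul_comm _ _).trans reflection),
    inv_div, div_div_eq_mul_div]

theorem im_rayIntegral_cpow_sub_one_mul_exp {a t θ : ℝ} (ha : 0 < a) (ht : 0 < t)
    (hθ : θ ∈ Ioo (π / 2) π) :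
    (rayIntegral θ fun z => z ^ ((a : ℂ) - 1) * Complex.exp (t * z)).im =
      π * (t ^ (-a) * (Real.Gamma (1 - a))⁻¹) := by
  rw [rayIntegral_cpow_sub_one_mul_exp ha ht hθ, Complex.im_mul_ofReal,
    Complex.exp_ofReal_mul_I_im, inv_Gamma_one_sub ha]
  field_simp

end Gamma

section WrightRepresentation

theorem exists_mul_rpow_le_add_mul {α b ε : ℝ} (hα : α ∈ Ico 0 1) (hb : 0 ≤ b) (hε : 0 < ε) :
    ∃ C : ℝ, ∀ r : ℝ, 0 ≤ r → b * r ^ α ≤ C + ε * r := by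
  have hα' : 0 < 1 - α := sub_pos.2 hα.2
  refine ⟨(1 - α) * (b * ε⁻¹ ^ α) ^ (1 - α)⁻¹, fun r hr => ?_⟩
  calc b * r ^ α = ((b * ε⁻¹ ^ α) ^ (1 - α)⁻¹) ^ (1 - α) * (ε * r) ^ α := by
        rw [← Real.rpow_mul (by positivity), inv_mul_cancel₀ hα'.ne', Real.rpow_one, mul_assoc,
          ← Real.mul_rpow (by positivity) (by positivity), inv_mul_cancel_left₀ hε.ne']
    _ ≤ (1 - α) * (b * ε⁻¹ ^ α) ^ (1 - α)⁻¹ + α * (ε * r) :=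
        Real.geom_mean_le_arith_mean2_weighted hα'.le hα.1 (by positivity) (by positivity)
          (by ring)
    _ ≤ _ := by linarith [mul_le_of_le_one_left (mul_nonneg hε.le hr) hα.2.le]

theorem integrableOn_rpow_sub_one_mul_exp_mul_rpow_mul_exp_neg_mul {a α b c : ℝ} (ha : 0 < a)
    (hα : α ∈ Ico 0 1) (hb : 0 ≤ b) (hc : 0 < c) :
    IntegrableOn (fun r : ℝ => r ^ (a - 1) * Real.exp (b * r ^ α) * Real.exp (-c * r))
      (Ioi 0) := by
  obtain ⟨C, hC⟩ := exists_mul_rpow_le_add_mul hα hb (half_pos hc)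
  refine ((integrableOn_rpow_sub_one_mul_exp_neg_mul ha (half_pos hc)).const_mul
    (Real.exp C)).mono' (Measurable.aestronglyMeasurable (by fun_prop)) ?_
  filter_upwards [ae_restrict_mem measurableSet_Ioi] with r (hr : 0 < r)
  rw [Real.norm_of_nonneg (by positivity), mul_assoc, ← Real.exp_add, mul_left_comm,
    ← Real.exp_add]
  refine mul_le_mul_of_nonneg_left (Real.exp_le_exp.2 ?_) (by positivity)
  linarith [hC r hr.le]

theorem hasSum_rayIntegral_cpow_mul_exp {α t θ : ℝ} (hα : α ∈ Ioo 0 1) (ht : 0 < t)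
    (hθ : θ ∈ Ioo (π / 2) π) (w : ℂ) :
    HasSum (fun k : ℕ => rayIntegral θ fun z =>
        z ^ ((α : ℂ) - 1) * ((w * z ^ (α : ℂ)) ^ k / k.factorial) * Complex.exp (t * z))
      (rayIntegral θ fun z =>
        z ^ ((α : ℂ) - 1) * Complex.exp (w * z ^ (α : ℂ)) * Complex.exp (t * z)) := by
  have tsum_bound : ∀ r : ℝ, ∑' k : ℕ, r ^ (α - 1) * ((‖w‖ * r ^ α) ^ k / k.factorial) *
        Real.exp (-(t * -Real.cos θ) * r) =
      r ^ (α - 1) * Real.exp (‖w‖ * r ^ α) * Real.exp (-(t * -Real.cos θ) * r) := fun r => by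
    rw [tsum_mul_right, tsum_mul_left, Real.exp_eq_exp_ℝ,
      (NormedSpace.expSeries_div_hasSum_exp (‖w‖ * r ^ α)).tsum_eq]
  refine HasSum.mul_left _ (hasSum_integral_of_dominated_convergence
    (fun k r => r ^ (α - 1) * ((‖w‖ * r ^ α) ^ k / k.factorial) *
      Real.exp (-(t * -Real.cos θ) * r))
    (fun k => Measurable.aestronglyMeasurable (by fun_prop)) (fun k => ?_)
    (.of_forall fun r => ((Real.summable_pow_div_factorial _).mul_left _).mul_right _) ?_
    (.of_forall fun r => ?_))
  · filter_upwards [ae_restrict_mem measurableSet_Ioi] with r (hr : 0 < r)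
    rw [norm_mul, norm_mul, norm_cpow_ofReal_sub_one, norm_div, norm_pow, norm_mul w,
      Complex.norm_cpow_real, norm_ofReal_mul_exp_mul_I hr.le, Complex.norm_natCast,
      norm_exp_mul_ofReal_mul_exp_mul_I]
    exact le_of_eq (by ring_nf)
  · simp only [tsum_bound]
    exact integrableOn_rpow_sub_one_mul_exp_mul_rpow_mul_exp_neg_mul hα.1 ⟨hα.1.le, hα.2⟩
      (norm_nonneg w) (mul_pos ht (neg_pos.2 (cos_neg_of_mem_Ioo hθ)))
  · have exp_hasSum := NormedSpace.expSeries_div_hasSum_exp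
      (w * (r * Complex.exp (θ * I)) ^ (α : ℂ))
    rw [← Complex.exp_eq_exp_ℂ] at exp_hasSum
    exact (exp_hasSum.mul_left _).mul_right _

theorem im_rayIntegral_wright_term {α t θ : ℝ} (hα : 0 < α) (ht : 0 < t)
    (hθ : θ ∈ Ioo (π / 2) π) (y : ℝ) (k : ℕ) :
    (rayIntegral θ fun z =>
        z ^ ((α : ℂ) - 1) * ((-y * z ^ (α : ℂ)) ^ k / k.factorial) * Complex.exp (t * z)).im =
      π * (t ^ (-α) *
        ((-(y * t ^ (-α))) ^ k / (k.factorial * Real.Gamma (1 - α * (1 + k))))) := by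
  have cpow_eq : ∀ z : ℂ, z ≠ 0 → z ^ (((α * (1 + k) : ℝ) : ℂ) - 1) =
      z ^ ((α : ℂ) - 1) * (z ^ (α : ℂ)) ^ k := fun z hz => by
    rw [← Complex.cpow_mul_nat, ← Complex.cpow_add _ _ hz]
    congr 1
    push_cast
    ring
  have rpow_eq : t ^ (-(α * (1 + k))) = t ^ (-α) * (t ^ (-α)) ^ k := by
    rw [← Real.rpow_mul_natCast ht.le, ← Real.rpow_add ht]
    ring_nf
  have integral_eq : (rayIntegral θ fun z =>
        z ^ ((α : ℂ) - 1) * ((-y * z ^ (α : ℂ)) ^ k / k.factorial) * Complex.exp (t * z)) =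
      ((-y) ^ k / k.factorial : ℝ) * rayIntegral θ fun z =>
        z ^ (((α * (1 + k) : ℝ) : ℂ) - 1) * Complex.exp (t * z) := by
    rw [← rayIntegral_const_mul]
    refine rayIntegral_congr fun r hr => ?_
    rw [cpow_eq _ (mul_ne_zero (Complex.ofReal_ne_zero.2 hr.ne') (Complex.exp_ne_zero _))]
    push_cast
    ring
  rw [integral_eq, Complex.im_ofReal_mul,
    im_rayIntegral_cpow_sub_one_mul_exp (by positivity) ht hθ, rpow_eq]
  ring

theorem rpow_neg_mul_wrightM {α t θ : ℝ} (hα : α ∈ Ioo 0 1) (ht : 0 < t)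
    (hθ : θ ∈ Ioo (π / 2) π) (y : ℝ) :
    t ^ (-α) * wrightM α (y * t ^ (-α)) =
      π⁻¹ * (rayIntegral θ fun z =>
        z ^ ((α : ℂ) - 1) * Complex.exp (-y * z ^ (α : ℂ)) * Complex.exp (t * z)).im := by
  have him := Complex.hasSum_im (hasSum_rayIntegral_cpow_mul_exp hα ht hθ (-y))
  simp only [im_rayIntegral_wright_term hα.1 ht hθ] at him
  rw [← him.tsum_eq, tsum_mul_left, tsum_mul_left, wrightM,
    inv_mul_cancel_left₀ Real.pi_ne_zero]

end WrightRepresentation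

section CauchyKernel

-- The difference of the squares of the two sides is `cos (θ / 2) ^ 2 * (s - r) ^ 2`.
theorem sin_half_mul_add_le_norm_sub (s r θ : ℝ) :
    Real.sin (θ / 2) * (s + r) ≤ ‖(s : ℂ) - r * Complex.exp (θ * I)‖ := by
  refine le_of_abs_le (abs_le_of_sq_le_sq ?_ (norm_nonneg _))
  have sin_half_sq : Real.sin (θ / 2) ^ 2 = (1 - Real.cos θ) / 2 := by
    rw [Real.sin_sq_eq_half_sub, mul_div_cancel₀ θ two_ne_zero]
    ring
  have norm_sq : ‖(s : ℂ) - r * Complex.exp (θ * I)‖ ^ 2 =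
      s ^ 2 - 2 * s * r * Real.cos θ + r ^ 2 := by
    rw [Complex.sq_norm, Complex.normSq_apply, Complex.sub_re, Complex.sub_im,
      Complex.ofReal_re, Complex.ofReal_im, Complex.re_ofReal_mul, Complex.im_ofReal_mul,
      Complex.exp_ofReal_mul_I_re, Complex.exp_ofReal_mul_I_im]
    linear_combination r ^ 2 * Real.sin_sq_add_cos_sq θ
  rw [mul_pow, sin_half_sq, norm_sq]
  linarith [mul_nonneg (sq_nonneg (s - r)) (neg_le_iff_add_nonneg'.1 (Real.neg_one_le_cos θ))]

theorem integrableOn_rpow_sub_one_div_add {α s : ℝ} (hα : α ∈ Ioo 0 1) (hs : 0 < s) :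
    IntegrableOn (fun r : ℝ => r ^ (α - 1) / (s + r)) (Ioi 0) := by
  have hmeas : Measurable fun r : ℝ => r ^ (α - 1) / (s + r) := by fun_prop
  rw [← Ioc_union_Ioi_eq_Ioi (zero_le_one : (0 : ℝ) ≤ 1)]
  refine IntegrableOn.union ?_ ?_
  · have h : IntegrableOn (fun r : ℝ => r ^ (α - 1)) (Ioc 0 1) :=
      (intervalIntegrable_iff_integrableOn_Ioc_of_le zero_le_one).1
        (intervalIntegral.intervalIntegrable_rpow' (by linarith [hα.1]))
    refine Integrable.mono' (h.div_const s) hmeas.aestronglyMeasurable ?_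
    filter_upwards [ae_restrict_mem measurableSet_Ioc] with r hr
    have hr_pos : 0 < r := hr.1
    rw [Real.norm_of_nonneg (by positivity)]
    gcongr
    linarith
  · have h : IntegrableOn (fun r : ℝ => r ^ (α - 2)) (Ioi 1) :=
      integrableOn_Ioi_rpow_of_lt (by linarith [hα.2]) one_pos
    refine Integrable.mono' h hmeas.aestronglyMeasurable ?_
    filter_upwards [ae_restrict_mem measurableSet_Ioi] with r (hr : 1 < r)
    have hr_pos : 0 < r := one_pos.trans hr
    rw [Real.norm_of_nonneg (by positivity), show α - 2 = α - 1 - 1 by ring,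
      Real.rpow_sub_one hr_pos.ne' (α - 1)]
    gcongr
    linarith

theorem rayIntegrable_cpow_sub_one_mul_div_sub {α s θ C : ℝ} {N : ℂ → ℂ} (hα : α ∈ Ioo 0 1)
    (hs : 0 < s) (hθ : θ ∈ Ioo 0 π) (hN : ContinuousOn N slitPlane)
    (hC : ∀ r : ℝ, 0 < r → ‖N (r * Complex.exp (θ * I))‖ ≤ C) :
    RayIntegrable θ fun z => z ^ ((α : ℂ) - 1) * N z / (s - z) := by
  have hsin : 0 < Real.sin (θ / 2) :=
    Real.sin_pos_of_pos_of_lt_pi (by linarith [hθ.1]) (by linarith [hθ.1, hθ.2])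
  have hslit : ∀ r ∈ Ioi (0 : ℝ), (r : ℂ) * Complex.exp (θ * I) ∈ slitPlane := fun r hr =>
    ofReal_mul_exp_mul_I_mem_slitPlane hr ⟨by linarith [hθ.1, hθ.2], hθ.2⟩
  have hN_ray : ContinuousOn (fun r : ℝ => N (r * Complex.exp (θ * I))) (Ioi 0) :=
    hN.comp (by fun_prop) hslit
  have hmeas : AEStronglyMeasurable (fun r : ℝ => (r * Complex.exp (θ * I)) ^ ((α : ℂ) - 1) *
      N (r * Complex.exp (θ * I)) / (s - r * Complex.exp (θ * I)))
      (volume.restrict (Ioi 0)) := by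
    refine ((Measurable.aestronglyMeasurable (by fun_prop)).mul
      (hN_ray.aestronglyMeasurable measurableSet_Ioi)).div₀
      (Measurable.aestronglyMeasurable (by fun_prop))
  refine ((integrableOn_rpow_sub_one_div_add hα hs).const_mul
    (C / Real.sin (θ / 2))).mono' hmeas ?_
  filter_upwards [ae_restrict_mem measurableSet_Ioi] with r (hr : 0 < r)
  have hC_nonneg : 0 ≤ C := (norm_nonneg _).trans (hC r hr)
  rw [norm_div, norm_mul, norm_cpow_ofReal_sub_one, norm_ofReal_mul_exp_mul_I hr.le]
  calc r ^ (α - 1) * ‖N (r * Complex.exp (θ * I))‖ / ‖(s : ℂ) - r * Complex.exp (θ * I)‖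
      ≤ r ^ (α - 1) * C / (Real.sin (θ / 2) * (s + r)) := by
        gcongr
        exacts [hC r hr, sin_half_mul_add_le_norm_sub s r θ]
    _ = C / Real.sin (θ / 2) * (r ^ (α - 1) / (s + r)) := by
        rw [div_mul_div_comm, mul_comm C]

theorem rayIntegrable_cpow_sub_one_div_sub {α s θ : ℝ} (hα : α ∈ Ioo 0 1) (hs : 0 < s)
    (hθ : θ ∈ Ioo 0 π) : RayIntegrable θ fun z => z ^ ((α : ℂ) - 1) / (s - z) := by
  simpa only [mul_one] using rayIntegrable_cpow_sub_one_mul_div_sub (N := fun _ => 1) hα hs hθ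
    continuousOn_const fun _ _ => norm_one.le

end CauchyKernel

section LaplaceTransform

variable {s θ : ℝ} {g : ℂ → ℂ}

theorem re_ofReal_mul_exp_mul_I_sub (r θ s : ℝ) :
    ((r : ℂ) * Complex.exp (θ * I) - s).re = r * Real.cos θ - s := by
  rw [Complex.sub_re, Complex.re_ofReal_mul, Complex.exp_ofReal_mul_I_re, Complex.ofReal_re]

theorem integral_Ioi_zero_exp_mul {w : ℂ} (hw : w.re < 0) :
    ∫ t in Ioi (0 : ℝ), Complex.exp (w * t) = (-w)⁻¹ := by
  rw [integral_exp_mul_complex_Ioi hw, Complex.ofReal_zero, mul_zero, Complex.exp_zero, neg_div,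
    one_div, inv_neg]

theorem integral_Ioi_zero_norm_exp_mul {w : ℂ} (hw : w.re < 0) :
    ∫ t in Ioi (0 : ℝ), ‖Complex.exp (w * t)‖ = (-w.re)⁻¹ := by
  simp only [Complex.norm_exp, Complex.re_mul_ofReal]
  rw [integral_exp_mul_Ioi hw, mul_zero, Real.exp_zero, neg_div, one_div, inv_neg]

theorem re_ofReal_mul_exp_mul_I_sub_neg {r : ℝ} (hr : 0 < r) (hs : 0 < s)
    (hθ : Real.cos θ < 0) : ((r : ℂ) * Complex.exp (θ * I) - s).re < 0 := by
  linarith [re_ofReal_mul_exp_mul_I_sub r θ s, mul_neg_of_pos_of_neg hr hθ]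

theorem ofReal_sub_ofReal_mul_exp_mul_I_ne_zero {r : ℝ} (hr : 0 < r) (hs : 0 < s)
    (hθ : Real.cos θ < 0) : (s : ℂ) - r * Complex.exp (θ * I) ≠ 0 := fun h => by
  have hre := re_ofReal_mul_exp_mul_I_sub_neg hr hs hθ
  rw [← neg_sub, h, neg_zero, Complex.zero_re] at hre
  exact hre.false

theorem inv_sub_mul_cos_le {r : ℝ} (hr : 0 < r) (hs : 0 < s) (hθ : Real.cos θ < 0) :
    (s - r * Real.cos θ)⁻¹ ≤ (-Real.cos θ)⁻¹ * ‖(s : ℂ) - r * Complex.exp (θ * I)‖⁻¹ := by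
  have hdist := norm_pos_iff.2 (ofReal_sub_ofReal_mul_exp_mul_I_ne_zero hr hs hθ)
  have hle : ‖(s : ℂ) - r * Complex.exp (θ * I)‖ ≤ s + r := by
    simpa only [Complex.norm_of_nonneg hs.le, norm_ofReal_mul_exp_mul_I hr.le] using
      norm_sub_le (s : ℂ) (r * Complex.exp (θ * I))
  rw [← mul_inv]
  refine inv_anti₀ (mul_pos (neg_pos.2 hθ) hdist) ?_
  calc -Real.cos θ * ‖(s : ℂ) - r * Complex.exp (θ * I)‖ ≤ -Real.cos θ * (s + r) :=
        mul_le_mul_of_nonneg_left hle (neg_nonneg.2 hθ.le)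
    _ ≤ s - r * Real.cos θ := by
        linarith [mul_nonneg hs.le (neg_le_iff_add_nonneg'.1 (Real.neg_one_le_cos θ))]

theorem aestronglyMeasurable_ray_of_rayIntegrable_div_sub (hs : 0 < s) (hθ : Real.cos θ < 0)
    (hg : RayIntegrable θ fun z => g z / (s - z)) :
    AEStronglyMeasurable (fun r : ℝ => g (r * Complex.exp (θ * I)))
      (volume.restrict (Ioi 0)) := by
  refine (hg.aestronglyMeasurable.mul (g := fun r : ℝ => (s : ℂ) - r * Complex.exp (θ * I))
    (Measurable.aestronglyMeasurable (by fun_prop))).congr ?_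
  filter_upwards [ae_restrict_mem measurableSet_Ioi] with r hr
  exact div_mul_cancel₀ _ (ofReal_sub_ofReal_mul_exp_mul_I_ne_zero hr hs hθ)

theorem integrable_prod_mul_exp_sub_mul (hs : 0 < s) (hθ : Real.cos θ < 0)
    (hg : RayIntegrable θ fun z => g z / (s - z)) :
    Integrable (fun p : ℝ × ℝ => g (p.1 * Complex.exp (θ * I)) *
        Complex.exp ((p.1 * Complex.exp (θ * I) - s) * p.2))
      ((volume.restrict (Ioi 0)).prod (volume.restrict (Ioi 0))) := by
  have hmeas : AEStronglyMeasurable (fun p : ℝ × ℝ => g (p.1 * Complex.exp (θ * I)) *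
      Complex.exp ((p.1 * Complex.exp (θ * I) - s) * p.2))
      ((volume.restrict (Ioi 0)).prod (volume.restrict (Ioi 0))) :=
    (aestronglyMeasurable_ray_of_rayIntegrable_div_sub hs hθ hg).comp_fst.mul
      (Measurable.aestronglyMeasurable (by fun_prop))
  refine (integrable_prod_iff hmeas).2 ⟨?_, ?_⟩
  · filter_upwards [ae_restrict_mem measurableSet_Ioi] with r hr
    exact (integrableOn_exp_mul_complex_Ioi
      (re_ofReal_mul_exp_mul_I_sub_neg hr hs hθ) 0).const_mul _
  · refine (hg.norm.const_mul (-Real.cos θ)⁻¹).mono' hmeas.norm.integral_prod_right' ?_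
    filter_upwards [ae_restrict_mem measurableSet_Ioi] with r hr
    rw [Real.norm_of_nonneg (integral_nonneg fun t => norm_nonneg _)]
    simp only [norm_mul (g _)]
    rw [integral_const_mul,
      integral_Ioi_zero_norm_exp_mul (re_ofReal_mul_exp_mul_I_sub_neg hr hs hθ),
      re_ofReal_mul_exp_mul_I_sub, neg_sub, norm_div, div_eq_mul_inv, mul_left_comm]
    exact mul_le_mul_of_nonneg_left (inv_sub_mul_cos_le hr hs hθ) (norm_nonneg _)

theorem integral_exp_neg_mul_im_rayIntegral (hs : 0 < s) (hθ : Real.cos θ < 0)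
    (hg : RayIntegrable θ fun z => g z / (s - z)) :
    ∫ t in Ioi (0 : ℝ), Real.exp (-s * t) *
        (rayIntegral θ fun z => g z * Complex.exp (t * z)).im =
      (rayIntegral θ fun z => g z / (s - z)).im := by
  have hK := integrable_prod_mul_exp_sub_mul hs hθ hg
  have exp_mul_rayIntegral : ∀ t : ℝ,
      Real.exp (-s * t) * (rayIntegral θ fun z => g z * Complex.exp (t * z)).im =
        RCLike.im (Complex.exp (θ * I) * ∫ r in Ioi (0 : ℝ), g (r * Complex.exp (θ * I)) *
          Complex.exp ((r * Complex.exp (θ * I) - s) * t)) := fun t => by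
    rw [← Complex.im_ofReal_mul, rayIntegral, mul_left_comm, ← integral_const_mul,
      RCLike.im_to_complex]
    congr 3
    ext r
    rw [mul_left_comm, Complex.ofReal_exp, ← Complex.exp_add]
    push_cast
    ring_nf
  simp only [exp_mul_rayIntegral]
  rw [integral_im (hK.integral_prod_right.const_mul _), integral_const_mul,
    ← integral_integral_swap hK, RCLike.im_to_complex, rayIntegral]
  congr 2
  refine setIntegral_congr_fun measurableSet_Ioi fun r hr => ?_
  dsimp only
  rw [integral_const_mul,
    integral_Ioi_zero_exp_mul (re_ofReal_mul_exp_mul_I_sub_neg hr hs hθ), neg_sub, div_eq_mul_inv]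

theorem im_rayIntegral_cpow_sub_one_div_sub {α : ℝ} (hα : α ∈ Ioo 0 1) (hs : 0 < s)
    (hθ : θ ∈ Ioo (π / 2) π) :
    (rayIntegral θ fun z => z ^ ((α : ℂ) - 1) / (s - z)).im = π * s ^ (α - 1) := by
  have hint : RayIntegrable θ fun z => z ^ ((α : ℂ) - 1) / (s - z) :=
    rayIntegrable_cpow_sub_one_div_sub hα hs ⟨Real.pi_div_two_pos.trans hθ.1, hθ.2⟩
  have laplace_integrand : ∀ t ∈ Ioi (0 : ℝ), Real.exp (-s * t) *
      (rayIntegral θ fun z => z ^ ((α : ℂ) - 1) * Complex.exp (t * z)).im =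
        π * (Real.Gamma (1 - α))⁻¹ * (t ^ (1 - α - 1) * Real.exp (-(s * t))) := fun t ht => by
    rw [im_rayIntegral_cpow_sub_one_mul_exp hα.1 ht hθ, sub_sub_cancel_left, neg_mul]
    ring
  rw [← integral_exp_neg_mul_im_rayIntegral hs (cos_neg_of_mem_Ioo hθ) hint,
    setIntegral_congr_fun measurableSet_Ioi laplace_integrand, integral_const_mul,
    Real.integral_rpow_mul_exp_neg_mul_Ioi (sub_pos.2 hα.2) hs, one_div, Real.inv_rpow hs.le,
    ← Real.rpow_neg hs.le, neg_sub, mul_assoc, mul_comm (s ^ _),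
    inv_mul_cancel_left₀ (Real.Gamma_pos_of_pos (sub_pos.2 hα.2)).ne']

end LaplaceTransform

section CauchyFormula

variable {α s θ C : ℝ} {N : ℂ → ℂ}

theorem exists_norm_le_on_annular_sector {f : ℂ → ℂ} {a b : ℝ} (hf : ContinuousOn f slitPlane)
    (ha : 0 < a) (hθ : θ < π) :
    ∃ K : ℝ, ∀ r ∈ Icc a b, ∀ φ ∈ Icc 0 θ, ‖f (r * Complex.exp (φ * I))‖ ≤ K := by
  have hcont : ContinuousOn (fun p : ℝ × ℝ => f (p.1 * Complex.exp (p.2 * I)))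
      (Icc a b ×ˢ Icc 0 θ) :=
    hf.comp (by fun_prop) fun p hp => ofReal_mul_exp_mul_I_mem_slitPlane (ha.trans_le hp.1.1)
      ⟨by linarith [hp.2.1, Real.pi_pos], hp.2.2.trans_lt hθ⟩
  obtain ⟨K, hK⟩ := (isCompact_Icc.prod isCompact_Icc).exists_bound_of_continuousOn hcont
  exact ⟨K, fun r hr φ hφ => hK (r, φ) ⟨hr, hφ⟩⟩

theorem differentiableOn_dslope_slitPlane (hs : 0 < s) (hN : DifferentiableOn ℂ N slitPlane) :
    DifferentiableOn ℂ (dslope N s) slitPlane :=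
  (Complex.differentiableOn_dslope (Complex.isOpen_slitPlane.mem_nhds
    (Complex.ofReal_mem_slitPlane.2 hs))).2 hN

theorem norm_dslope_mul_add_le {r φ : ℝ} (hs : 0 < s) (hr : 0 < r)
    (hrs : r ∉ Icc (s / 2) (2 * s)) (hCs : ‖N s‖ ≤ C)
    (hCr : ‖N (r * Complex.exp (φ * I))‖ ≤ C) :
    ‖dslope N s (r * Complex.exp (φ * I))‖ * (s + r) ≤ 6 * C := by
  have add_le_dist : s + r ≤ 3 * ‖r * Complex.exp (φ * I) - s‖ := by
    have hdist := abs_norm_sub_norm_le (r * Complex.exp (φ * I)) (s : ℂ)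
    rw [norm_ofReal_mul_exp_mul_I hr.le, Complex.norm_of_nonneg hs.le] at hdist
    rcases not_and_or.1 hrs with h | h
    · linarith [neg_le_abs (r - s)]
    · linarith [le_abs_self (r - s)]
  have dist_pos : 0 < ‖r * Complex.exp (φ * I) - s‖ := by linarith
  rw [dslope_of_ne _ (sub_ne_zero.1 (norm_pos_iff.1 dist_pos)), slope_def_field, norm_div,
    div_mul_eq_mul_div, div_le_iff₀ dist_pos]
  calc ‖N (r * Complex.exp (φ * I)) - N s‖ * (s + r)
      ≤ (C + C) * (3 * ‖r * Complex.exp (φ * I) - s‖) :=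
        mul_le_mul ((norm_sub_le _ _).trans (add_le_add hCr hCs)) add_le_dist
          (by positivity) (by linarith [norm_nonneg (N s)])
    _ = 6 * C * ‖r * Complex.exp (φ * I) - s‖ := by ring

theorem exists_norm_dslope_le_div_add (hs : 0 < s) (hθ : θ ∈ Ico 0 π)
    (hN : DifferentiableOn ℂ N slitPlane)
    (hC : ∀ r : ℝ, 0 < r → ∀ φ ∈ Icc 0 θ, ‖N (r * Complex.exp (φ * I))‖ ≤ C) :
    ∃ M : ℝ, ∀ r : ℝ, 0 < r → ∀ φ ∈ Icc 0 θ,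
      ‖dslope N s (r * Complex.exp (φ * I))‖ ≤ M / (s + r) := by
  obtain ⟨K, hK⟩ := exists_norm_le_on_annular_sector (b := 2 * s)
    (differentiableOn_dslope_slitPlane hs hN).continuousOn (half_pos hs) hθ.2
  have hCs : ‖N s‖ ≤ C := by simpa using hC s hs 0 ⟨le_rfl, hθ.1⟩
  refine ⟨max (K * (3 * s)) (6 * C), fun r hr φ hφ => ?_⟩
  rw [le_div_iff₀ (by positivity), le_max_iff]
  by_cases hrs : r ∈ Icc (s / 2) (2 * s)
  · refine .inl (mul_le_mul (hK r hrs φ hφ) (by linarith [hrs.2]) (by positivity) ?_)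
    exact (norm_nonneg _).trans (hK r hrs φ hφ)
  · exact .inr (norm_dslope_mul_add_le hs hr hrs hCs (hC r hr φ hφ))

theorem mul_rpow_sub_one_div_add {r : ℝ} (hr : 0 < r) (α s : ℝ) :
    r * (r ^ (α - 1) / (s + r)) = r ^ α / (s + r) := by
  rw [← mul_div_assoc, Real.rpow_sub_one hr.ne', mul_div_cancel₀ _ hr.ne']

theorem tendsto_mul_rpow_sub_one_div_add_nhdsGT_zero (hα : 0 < α) (hs : 0 < s) :
    Tendsto (fun r : ℝ => r * (r ^ (α - 1) / (s + r))) (𝓝[>] 0) (𝓝 0) := by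
  have hcont : ContinuousAt (fun r : ℝ => r ^ α / (s + r)) 0 :=
    (Real.continuousAt_rpow_const _ _ (.inr hα.le)).div (by fun_prop) (by simpa using hs.ne')
  have hlim := hcont.tendsto.mono_left (nhdsWithin_le_nhds (s := Ioi 0))
  rw [Real.zero_rpow hα.ne', zero_div] at hlim
  exact hlim.congr' (eventually_mem_nhdsWithin.mono fun r hr =>
    (mul_rpow_sub_one_div_add hr α s).symm)

theorem tendsto_mul_rpow_sub_one_div_add_atTop (hα : α < 1) (hs : 0 ≤ s) :
    Tendsto (fun r : ℝ => r * (r ^ (α - 1) / (s + r))) atTop (𝓝 0) := by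
  refine tendsto_of_tendsto_of_tendsto_of_le_of_le' tendsto_const_nhds
    (tendsto_rpow_neg_atTop (sub_pos.2 hα)) ?_ ?_ <;>
  filter_upwards [eventually_gt_atTop 0] with r hr
  · positivity
  · rw [mul_rpow_sub_one_div_add hr, neg_sub, Real.rpow_sub_one hr.ne']
    gcongr
    linarith

theorem im_rayIntegral_zero_eq_zero {f : ℂ → ℂ}
    (hf : ∀ᵐ r : ℝ ∂volume.restrict (Ioi 0), (f r).im = 0) : (rayIntegral 0 f).im = 0 := by
  have integral_eq : ∫ r in Ioi (0 : ℝ), f r = ∫ r in Ioi (0 : ℝ), ((f r).re : ℂ) :=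
    integral_congr_ae (hf.mono fun r hr => Complex.ext rfl (by simpa using hr))
  simp only [rayIntegral, Complex.ofReal_zero, zero_mul, Complex.exp_zero, mul_one, one_mul]
  rw [integral_eq, integral_complex_ofReal, Complex.ofReal_im]

theorem im_rayIntegral_zero_cpow_sub_one_mul_dslope (hs : 0 < s)
    (hreal : ∀ r : ℝ, 0 < r → (N r).im = 0) :
    (rayIntegral 0 fun z => z ^ ((α : ℂ) - 1) * dslope N s z).im = 0 := by
  refine im_rayIntegral_zero_eq_zero ?_
  filter_upwards [ae_restrict_mem measurableSet_Ioi,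
    ae_restrict_of_ae (Measure.ae_ne volume s)] with r (hr : 0 < r) hrs
  have ofReal_re_of_pos : ∀ x : ℝ, 0 < x → ((N x).re : ℂ) = N x := fun x hx =>
    Complex.ext rfl (hreal x hx).symm
  have cpow_real : (r : ℂ) ^ ((α : ℂ) - 1) = (r ^ (α - 1) : ℝ) := by
    rw [Complex.ofReal_cpow hr.le, Complex.ofReal_sub, Complex.ofReal_one]
  rw [dslope_of_ne _ (Complex.ofReal_injective.ne hrs), slope_def_field, cpow_real,
    ← ofReal_re_of_pos r hr, ← ofReal_re_of_pos s hs, ← Complex.ofReal_sub, ← Complex.ofReal_sub,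
    ← Complex.ofReal_div, ← Complex.ofReal_mul, Complex.ofReal_im]

theorem im_rayIntegral_cpow_sub_one_mul_dslope (hα : α ∈ Ioo 0 1) (hs : 0 < s)
    (hθ : θ ∈ Ico 0 π) (hN : DifferentiableOn ℂ N slitPlane)
    (hC : ∀ r : ℝ, 0 < r → ∀ φ ∈ Icc 0 θ, ‖N (r * Complex.exp (φ * I))‖ ≤ C)
    (hreal : ∀ r : ℝ, 0 < r → (N r).im = 0) :
    (rayIntegral θ fun z => z ^ ((α : ℂ) - 1) * dslope N s z).im = 0 := by
  obtain ⟨M, hM⟩ := exists_norm_dslope_le_div_add hs hθ hN hC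
  have rotation : (rayIntegral θ fun z => z ^ ((α : ℂ) - 1) * dslope N s z) =
      rayIntegral 0 fun z => z ^ ((α : ℂ) - 1) * dslope N s z := by
    refine rayIntegral_eq_rayIntegral_zero (B := fun r => M * (r ^ (α - 1) / (s + r)))
      (fun r hr φ hφ => ?_) (fun r hr φ hφ => ?_)
      ((integrableOn_rpow_sub_one_div_add hα hs).const_mul M) ?_ ?_
    · rw [uIcc_of_le hθ.1] at hφ
      have hslit := ofReal_mul_exp_mul_I_mem_slitPlane hr
        ⟨by linarith [hφ.1, Real.pi_pos], hφ.2.trans_lt hθ.2⟩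
      exact (differentiableAt_id.cpow_const hslit).mul
        ((differentiableOn_dslope_slitPlane hs hN).differentiableAt
          (Complex.isOpen_slitPlane.mem_nhds hslit))
    · rw [uIcc_of_le hθ.1] at hφ
      rw [norm_mul, norm_cpow_ofReal_sub_one, norm_ofReal_mul_exp_mul_I hr.le,
        mul_div_left_comm]
      exact mul_le_mul_of_nonneg_left (hM r hr φ hφ) (by positivity)
    · simpa only [mul_left_comm, mul_zero] using
        (tendsto_mul_rpow_sub_one_div_add_nhdsGT_zero hα.1 hs).const_mul M
    · simpa only [mul_left_comm, mul_zero] using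
        (tendsto_mul_rpow_sub_one_div_add_atTop hα.2 hs.le).const_mul M
  rw [rotation, im_rayIntegral_zero_cpow_sub_one_mul_dslope hs hreal]

theorem im_rayIntegral_cpow_sub_one_mul_div_sub (hα : α ∈ Ioo 0 1) (hs : 0 < s)
    (hθ : θ ∈ Ioo (π / 2) π) (hN : DifferentiableOn ℂ N slitPlane)
    (hC : ∀ r : ℝ, 0 < r → ∀ φ ∈ Icc 0 θ, ‖N (r * Complex.exp (φ * I))‖ ≤ C)
    (hreal : ∀ r : ℝ, 0 < r → (N r).im = 0) :
    (rayIntegral θ fun z => z ^ ((α : ℂ) - 1) * N z / (s - z)).im =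
      π * s ^ (α - 1) * (N s).re := by
  have hθ_pos : 0 < θ := Real.pi_div_two_pos.trans hθ.1
  have integrable_N := rayIntegrable_cpow_sub_one_mul_div_sub hα hs ⟨hθ_pos, hθ.2⟩
    hN.continuousOn fun r hr => hC r hr θ ⟨hθ_pos.le, le_rfl⟩
  have integrable_one := rayIntegrable_cpow_sub_one_div_sub hα hs ⟨hθ_pos, hθ.2⟩
  have dslope_integral : (rayIntegral θ fun z => z ^ ((α : ℂ) - 1) * dslope N s z) =
      N s * (rayIntegral θ fun z => z ^ ((α : ℂ) - 1) / (s - z)) -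
        rayIntegral θ fun z => z ^ ((α : ℂ) - 1) * N z / (s - z) := by
    rw [← rayIntegral_const_mul, ← rayIntegral_sub (integrable_one.const_mul (N s)) integrable_N]
    refine rayIntegral_congr fun r hr => ?_
    have hsub := ofReal_sub_ofReal_mul_exp_mul_I_ne_zero hr hs (cos_neg_of_mem_Ioo hθ)
    rw [dslope_of_ne _ (sub_ne_zero.1 hsub).symm, slope_def_field, ← neg_sub (s : ℂ)]
    field_simp
    ring
  have him := im_rayIntegral_cpow_sub_one_mul_dslope hα hs ⟨hθ_pos.le, hθ.2⟩ hN hC hreal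
  rw [dslope_integral, Complex.sub_im, Complex.mul_im, hreal s hs, zero_mul, add_zero,
    im_rayIntegral_cpow_sub_one_div_sub hα hs hθ] at him
  linarith

end CauchyFormula

section StableExponential

variable {α y : ℝ}

theorem differentiableOn_exp_neg_mul_cpow (α y : ℝ) :
    DifferentiableOn ℂ (fun z : ℂ => Complex.exp (-y * z ^ (α : ℂ))) slitPlane := fun _ hz =>
  (((differentiableAt_id.cpow_const hz).const_mul (-y : ℂ)).cexp).differentiableWithinAt

theorem norm_exp_neg_mul_cpow_le_one {r φ : ℝ} (hα : 0 ≤ α) (hy : 0 ≤ y) (hr : 0 < r)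
    (hφ : φ ∈ Icc 0 π) (hαφ : α * φ ≤ π / 2) :
    ‖Complex.exp (-y * (r * Complex.exp (φ * I)) ^ (α : ℂ))‖ ≤ 1 := by
  have hcos : 0 ≤ Real.cos (α * φ) := Real.cos_nonneg_of_neg_pi_div_two_le_of_le
    (by linarith [mul_nonneg hα hφ.1, Real.pi_pos]) hαφ
  rw [ofReal_mul_exp_mul_I_cpow hr ⟨by linarith [hφ.1, Real.pi_pos], hφ.2⟩, ← Complex.ofReal_neg,
    norm_exp_mul_ofReal_mul_exp_mul_I, Real.exp_le_one_iff, neg_mul]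
  exact neg_nonpos.2 (by positivity)

theorem exp_neg_mul_ofReal_cpow {r : ℝ} (hr : 0 ≤ r) (α y : ℝ) :
    Complex.exp (-y * (r : ℂ) ^ (α : ℂ)) = (Real.exp (-y * r ^ α) : ℝ) := by
  push_cast [Complex.ofReal_cpow hr]
  rfl

theorem pi_div_one_add_mem_Ioo (hα : α ∈ Ioo 0 1) : π / (1 + α) ∈ Ioo (π / 2) π :=
  ⟨div_lt_div_of_pos_left Real.pi_pos (by linarith [hα.1]) (by linarith [hα.2]),
    div_lt_self Real.pi_pos (by linarith [hα.1])⟩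

theorem mul_pi_div_one_add_le (hα : α ∈ Ioo 0 1) : α * (π / (1 + α)) ≤ π / 2 := by
  rw [mul_div_assoc', div_le_div_iff₀ (by linarith [hα.1]) two_pos]
  linarith [mul_le_mul_of_nonneg_left hα.2.le Real.pi_pos.le]

end StableExponential

theorem stmt10 (α y s : ℝ) (hα : α ∈ Set.Ioo (0:ℝ) 1) (hy : 0 ≤ y) (hs : 0 < s) :
    (∫ t in Set.Ioi (0:ℝ), Real.exp (-s * t) * (t ^ (-α) * wrightM α (y * t ^ (-α))))
      = s ^ (α - 1) * Real.exp (-y * s ^ α) := by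
  have hθ := pi_div_one_add_mem_Ioo hα
  set θ := π / (1 + α)
  have hθ_pos : 0 < θ := Real.pi_div_two_pos.trans hθ.1
  set N : ℂ → ℂ := fun z => Complex.exp (-y * z ^ (α : ℂ))
  have hN : DifferentiableOn ℂ N slitPlane := differentiableOn_exp_neg_mul_cpow α y
  have hN_ofReal : ∀ r : ℝ, 0 < r → N r = (Real.exp (-y * r ^ α) : ℝ) := fun r hr =>
    exp_neg_mul_ofReal_cpow hr.le α y
  have hN_le : ∀ r : ℝ, 0 < r → ∀ φ ∈ Icc 0 θ, ‖N (r * Complex.exp (φ * I))‖ ≤ 1 :=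
    fun r hr φ hφ => norm_exp_neg_mul_cpow_le_one hα.1.le hy hr ⟨hφ.1, hφ.2.trans hθ.2.le⟩
      ((mul_le_mul_of_nonneg_left hφ.2 hα.1.le).trans (mul_pi_div_one_add_le hα))
  have hN_int := rayIntegrable_cpow_sub_one_mul_div_sub hα hs ⟨hθ_pos, hθ.2⟩ hN.continuousOn
    fun r hr => hN_le r hr θ ⟨hθ_pos.le, le_rfl⟩
  calc ∫ t in Ioi (0 : ℝ), Real.exp (-s * t) * (t ^ (-α) * wrightM α (y * t ^ (-α)))
      = ∫ t in Ioi (0 : ℝ), π⁻¹ * (Real.exp (-s * t) *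
          (rayIntegral θ fun z => z ^ ((α : ℂ) - 1) * N z * Complex.exp (t * z)).im) :=
        setIntegral_congr_fun measurableSet_Ioi fun t ht => by
          rw [rpow_neg_mul_wrightM hα ht hθ, mul_left_comm]
    _ = π⁻¹ * (rayIntegral θ fun z => z ^ ((α : ℂ) - 1) * N z / (s - z)).im := by
        rw [integral_const_mul,
          integral_exp_neg_mul_im_rayIntegral hs (cos_neg_of_mem_Ioo hθ) hN_int]
    _ = π⁻¹ * (π * s ^ (α - 1) * (N s).re) := by
        rw [im_rayIntegral_cpow_sub_one_mul_div_sub hα hs hθ hN hN_le fun r hr => by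
          rw [hN_ofReal r hr, Complex.ofReal_im]]
    _ = s ^ (α - 1) * Real.exp (-y * s ^ α) := by
        rw [hN_ofReal s hs, Complex.ofReal_re, mul_assoc, inv_mul_cancel_left₀ Real.pi_ne_zero]
end
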